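/- arXiv:1106.5480 — 4 statements merged into one kernel-verified Lean document; each statement's English description precedes it below -/
import Mathlib

section
/- Let w_n denote the number of strict partial order relations on {1, …, n} that are weakly graded and avoid 3+1, and let W(x) = Σ_{n ≥ 0} w_n x^n/n! as a formal power series over ℚ. Then (W(x) − (e^{−x} − 1)·Ψ(x))·(e^x(2e^x + 1) + (e^{2x} − 2e^x − 1)·Ψ(x)) = 2e^{3x} + e^{2x}(e^x − 2)·Ψ(x), where Ψ(x) = Σ_{m,n ≥ 0} 2^{mn} x^{m+n}/(m! n!) and e^x is the exponential power series. Equivalently, W(x) = (e^{−x} − 1)Ψ(x) + (2e^{3x} + e^{2x}(e^x − 2)Ψ(x)) / (e^x(2e^x + 1) + (e^{2x} − 2e^x − 1)Ψ(x)). -/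
/-- `r` is a strict partial order relation (irreflexive and transitive). -/
def IsStrictOrderRel {n : ℕ} (r : Fin n → Fin n → Prop) : Prop :=
  (∀ a, ¬ r a a) ∧ ∀ a b c, r a b → r b c → r a c

/-- the poset `(Fin n, r)` avoids `3+1`: there is no chain `x < y < z` together with
an element `w` incomparable to each of `x`, `y`, `z`. -/
def RelAvoids31 {n : ℕ} (r : Fin n → Fin n → Prop) : Prop :=
  ¬ ∃ w x y z : Fin n, r x y ∧ r y z ∧
      (¬ r w x ∧ ¬ r x w) ∧ (¬ r w y ∧ ¬ r y w) ∧ (¬ r w z ∧ ¬ r z w)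

/-- a finset that is a chain of the poset `(Fin n, r)`. -/
def RelChain {n : ℕ} (r : Fin n → Fin n → Prop) (s : Finset (Fin n)) : Prop :=
  ∀ a ∈ s, ∀ b ∈ s, a ≠ b → r a b ∨ r b a

/-- a maximal chain of the poset `(Fin n, r)`. -/
def RelMaxChain {n : ℕ} (r : Fin n → Fin n → Prop) (s : Finset (Fin n)) : Prop :=
  RelChain r s ∧ ∀ t : Finset (Fin n), RelChain r t → s ⊆ t → s = t

/-- strongly graded: all maximal chains have the same number of elements. -/
def RelStronglyGraded {n : ℕ} (r : Fin n → Fin n → Prop) : Prop :=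
  ∀ s t : Finset (Fin n), RelMaxChain r s → RelMaxChain r t → s.card = t.card

/-- weakly graded: there is a rank function increasing by one along covers such that
every connected component of the comparability graph contains an element of rank `0`. -/
def RelWeaklyGraded {n : ℕ} (r : Fin n → Fin n → Prop) : Prop :=
  ∃ rk : Fin n → ℕ,
    (∀ a b, r a b → (¬ ∃ c, r a c ∧ r c b) → rk b = rk a + 1) ∧
    ∀ v, ∃ u, Relation.ReflTransGen (fun a b => r a b ∨ r b a) v u ∧ rk u = 0

/-- the number of strongly graded `3+1`-avoiding strict partial orders on `{1, …, n}`. -/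
noncomputable def gCount (n : ℕ) : ℕ :=
  Nat.card {r : Fin n → Fin n → Prop //
    IsStrictOrderRel r ∧ RelStronglyGraded r ∧ RelAvoids31 r}

/-- the number of weakly graded `3+1`-avoiding strict partial orders on `{1, …, n}`. -/
noncomputable def wCount (n : ℕ) : ℕ :=
  Nat.card {r : Fin n → Fin n → Prop //
    IsStrictOrderRel r ∧ RelWeaklyGraded r ∧ RelAvoids31 r}

/-- `Ψ(x) = Σ_{m,n ≥ 0} 2^{mn} x^{m+n}/(m! n!)`. -/
noncomputable def Psi : PowerSeries ℚ :=
  PowerSeries.mk fun N =>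
    ∑ p ∈ Finset.HasAntidiagonal.antidiagonal N, (2 : ℚ) ^ (p.1 * p.2) / (p.1.factorial * p.2.factorial)

/-- the exponential series `e^x`. -/
noncomputable def E : PowerSeries ℚ := PowerSeries.exp ℚ
/-- `e^{-x} = Σ_{k ≥ 0} (-1)^k x^k / k!`. -/
noncomputable def ExpNeg : PowerSeries ℚ :=
  PowerSeries.mk fun k => (-1 : ℚ) ^ k / k.factorial

/-- the egf of weakly graded `3+1`-avoiding posets. -/
noncomputable def W : PowerSeries ℚ :=
  PowerSeries.mk fun n => (wCount n : ℚ) / n.factorial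


namespace WG
open Finset
open scoped Classical

/-! ### Exponential generating functions of set functions -/

/-- the set function `c` is counted by the exponential generating function `P` -/
def HasEgf {α : Type} (c : Finset α → ℚ) (P : PowerSeries ℚ) : Prop :=
  ∀ S, c S = (S.card.factorial : ℚ) * PowerSeries.coeff S.card P

lemma HasEgf.congr {α : Type} {c d : Finset α → ℚ} {P : PowerSeries ℚ} (h : HasEgf c P)
    (e : ∀ S, d S = c S) : HasEgf d P := fun S => by rw [e, h S]

lemma HasEgf.sub {α : Type} {c d : Finset α → ℚ} {P Q : PowerSeries ℚ} (h : HasEgf c P)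
    (h' : HasEgf d Q) : HasEgf (fun S => c S - d S) (P - Q) := fun S => by
  simp only [h S, h' S, map_sub]; ring

lemma hasEgf_one {α : Type} : HasEgf (fun _ : Finset α => 1) E := fun S => by
  have : (S.card.factorial : ℚ) ≠ 0 := by positivity
  simp [E, PowerSeries.coeff_exp, this]

lemma hasEgf_empty {α : Type} : HasEgf (fun S : Finset α => if S = ∅ then 1 else 0) 1 := fun S => by
  by_cases h : S = ∅
  · simp [h]
  · simp [h, PowerSeries.coeff_one]

lemma sum_powerset_antidiag {α : Type} (S : Finset α) (φ : ℕ → ℕ → ℚ) :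
    ∑ T ∈ S.powerset, φ T.card (S \ T).card =
      (S.card.factorial : ℚ) * ∑ p ∈ antidiagonal S.card,
        φ p.1 p.2 / (p.1.factorial * p.2.factorial) := by
  have h1 : ∀ T ∈ S.powerset, φ T.card (S \ T).card = φ T.card (S.card - T.card) := by
    intro T hT
    rw [card_sdiff_of_subset (mem_powerset.1 hT)]
  rw [sum_congr rfl h1, Finset.sum_powerset_apply_card (fun m => φ m (S.card - m)),
    Finset.Nat.sum_antidiagonal_eq_sum_range_succ_mk, mul_sum]
  refine sum_congr rfl fun m hm => ?_
  have hm' : m ≤ S.card := by simpa [Nat.lt_succ_iff] using hm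
  rw [nsmul_eq_mul, Nat.cast_choose ℚ hm']
  field_simp

lemma HasEgf.mul {α : Type} {c d : Finset α → ℚ} {P Q : PowerSeries ℚ} (h : HasEgf c P)
    (h' : HasEgf d Q) :
    HasEgf (fun S => ∑ T ∈ S.powerset, c T * d (S \ T)) (P * Q) := fun S => by
  have := sum_powerset_antidiag S (fun m n => (m.factorial * PowerSeries.coeff m P) *
    (n.factorial * PowerSeries.coeff n Q))
  simp only [h _, h' _]
  rw [this, PowerSeries.coeff_mul]
  congr 1
  refine sum_congr rfl fun p _ => ?_
  have h1 : (p.1.factorial : ℚ) ≠ 0 := by positivity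
  have h2 : (p.2.factorial : ℚ) ≠ 0 := by positivity
  field_simp

/-- two-variable exponential generating function on the diagonal -/
noncomputable def egf2 (φ : ℕ → ℕ → ℚ) : PowerSeries ℚ :=
  PowerSeries.mk fun N => ∑ p ∈ antidiagonal N, φ p.1 p.2 / (p.1.factorial * p.2.factorial)

lemma hasEgf_egf2 {α : Type} (φ : ℕ → ℕ → ℚ) :
    HasEgf (fun S : Finset α => ∑ T ∈ S.powerset, φ T.card (S \ T).card) (egf2 φ) := fun S => by
  simp only [sum_powerset_antidiag, egf2, PowerSeries.coeff_mk]

lemma egf2_swap (φ : ℕ → ℕ → ℚ) : egf2 (fun m n => φ n m) = egf2 φ := by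
  ext N
  simp only [egf2, PowerSeries.coeff_mk]
  rw [← Finset.Nat.sum_antidiagonal_swap]
  refine sum_congr rfl fun p _ => ?_
  simp [mul_comm]

lemma egf2_sub (φ ψ : ℕ → ℕ → ℚ) : egf2 (fun m n => φ m n - ψ m n) = egf2 φ - egf2 ψ := by
  ext N
  simp only [egf2, PowerSeries.coeff_mk, map_sub, ← sum_sub_distrib, sub_div]

lemma egf2_add (φ ψ : ℕ → ℕ → ℚ) : egf2 (fun m n => φ m n + ψ m n) = egf2 φ + egf2 ψ := by
  ext N
  simp only [egf2, PowerSeries.coeff_mk, map_add, ← sum_add_distrib, add_div]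

/-- binomial transform in the first variable -/
lemma egf2_conv (g : ℕ → ℚ) (φ ψ : ℕ → ℕ → ℚ)
    (h : ∀ m n, φ m n = ∑ p ∈ antidiagonal m, (m.choose p.1 : ℚ) * g p.1 * ψ p.2 n) :
    egf2 φ = (PowerSeries.mk fun n => g n / n.factorial) * egf2 ψ := by
  ext N
  simp only [egf2, PowerSeries.coeff_mk, PowerSeries.coeff_mul]
  have e : ∀ p ∈ antidiagonal N, φ p.1 p.2 / (p.1.factorial * p.2.factorial) =
      ∑ q ∈ antidiagonal p.1, (fun i j n => g i / i.factorial *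
        (ψ j n / (j.factorial * n.factorial))) q.1 q.2 p.2 := by
    intro p _
    rw [h, sum_div]
    refine sum_congr rfl fun q hq => ?_
    have hq' := mem_antidiagonal.1 hq
    rw [Nat.cast_choose ℚ (show q.1 ≤ p.1 by omega)]
    have : p.1 - q.1 = q.2 := by omega
    rw [this]
    have h1 : (p.1.factorial : ℚ) ≠ 0 := by positivity
    field_simp
  rw [sum_congr rfl e]
  rw [Finset.sum_sigma', Finset.sum_congr rfl (fun p _ => mul_sum _ _ _), Finset.sum_sigma']
  refine Finset.sum_bij' (fun x _ => ⟨(x.2.1, x.2.2 + x.1.2), (x.2.2, x.1.2)⟩)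
    (fun x _ => ⟨(x.1.1 + x.2.1, x.2.2), (x.1.1, x.2.1)⟩) ?_ ?_ ?_ ?_ ?_
  · rintro ⟨⟨a, b⟩, ⟨c, d⟩⟩ h; simp at h ⊢; omega
  · rintro ⟨⟨a, b⟩, ⟨c, d⟩⟩ h; simp at h ⊢; omega
  · rintro ⟨⟨a, b⟩, ⟨c, d⟩⟩ h; simp at h ⊢; omega
  · rintro ⟨⟨a, b⟩, ⟨c, d⟩⟩ h; simp at h ⊢; omega
  · rintro ⟨⟨a, b⟩, ⟨c, d⟩⟩ h; simp

lemma add_pow_antidiag (x y : ℚ) (m : ℕ) :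
    (x + y) ^ m = ∑ p ∈ antidiagonal m, (m.choose p.1 : ℚ) * x ^ p.1 * y ^ p.2 := by
  rw [(Commute.all x y).add_pow']
  refine sum_congr rfl fun p _ => ?_
  simp [mul_assoc]

lemma expNeg_mul_E : ExpNeg * E = 1 := by
  have h : ExpNeg = PowerSeries.evalNegHom (PowerSeries.exp ℚ) := by
    ext n
    simp [ExpNeg, PowerSeries.evalNegHom, PowerSeries.coeff_rescale, PowerSeries.coeff_exp, div_eq_mul_inv]
  rw [h, E, mul_comm, PowerSeries.exp_mul_exp_neg_eq_one]

/-- the numbers of relations with full domain -/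
noncomputable def aM (m n : ℕ) : ℚ := (2 ^ n - 1) ^ m

/-- the numbers of relations with full domain and full range -/
noncomputable def aN (m n : ℕ) : ℚ :=
  ∑ p ∈ antidiagonal n, (n.choose p.1 : ℚ) * (-1) ^ p.1 * aM m p.2

lemma egf2_Psi : egf2 (fun m n => 2 ^ (m * n)) = Psi := rfl

lemma egf2_shift (φ ψ : ℕ → ℕ → ℚ)
    (h : ∀ m n, φ m n = ∑ p ∈ antidiagonal m, (m.choose p.1 : ℚ) * (-1) ^ p.1 * ψ p.2 n) :
    egf2 φ = ExpNeg * egf2 ψ := egf2_conv (fun i => (-1) ^ i) φ ψ h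

lemma egf2_aM : egf2 aM = ExpNeg * Psi := by
  rw [← egf2_Psi]
  apply egf2_shift
  intro m n
  rw [aM, sub_eq_neg_add, add_pow_antidiag]
  refine sum_congr rfl fun p _ => ?_
  rw [← pow_mul, mul_comm n]

lemma egf2_aN : egf2 aN = ExpNeg * (ExpNeg * Psi) := by
  rw [← egf2_aM, ← egf2_swap aN, ← egf2_swap aM]
  apply egf2_shift
  intro m n
  rfl

/-- the numbers of relations with full domain and no full row -/
lemma egf2_aM2 : egf2 (fun m n => ((2 ^ n - 2) ^ m : ℚ)) = ExpNeg * (ExpNeg * Psi) := by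
  rw [← egf2_aM]
  apply egf2_shift
  intro m n
  rw [show (2 ^ n - 2 : ℚ) = -1 + (2 ^ n - 1) by ring, add_pow_antidiag]
  rfl

lemma egf2_neg : egf2 (fun m n => if n = 0 then (-1) ^ m else 0) = ExpNeg := by
  ext N
  simp only [egf2, PowerSeries.coeff_mk, ExpNeg]
  rw [Finset.sum_eq_single (N, 0)]
  · simp
  · rintro ⟨a, b⟩ h hne
    have : b ≠ 0 := by
      rintro rfl
      simp at h
      exact hne (by rw [h])
    simp [this]
  · simp

lemma egf2_delta : egf2 (fun m n => if m = 0 ∧ n = 0 then 1 else 0) = 1 := by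
  ext N
  simp only [egf2, PowerSeries.coeff_mk, PowerSeries.coeff_one]
  by_cases hN : N = 0
  · subst hN; simp
  · rw [if_neg hN]
    apply sum_eq_zero
    rintro ⟨a, b⟩ h
    have : ¬ (a = 0 ∧ b = 0) := by
      rintro ⟨rfl, rfl⟩; simp at h; exact hN h.symm
    simp [this]

/-- no full row in a non-empty relation, negated -/
noncomputable def aF (m n : ℕ) : ℚ :=
  aM m n - (2 ^ n - 2) ^ m + if n = 0 then (-1) ^ m else 0

noncomputable def aK (m n : ℕ) : ℚ :=
  (if m = 0 ∧ n = 0 then 1 else 0) + (2 ^ (m * n) - aM m n - aM n m + aN m n)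

noncomputable def sN : PowerSeries ℚ := ExpNeg * (ExpNeg * Psi)
noncomputable def sF : PowerSeries ℚ := ExpNeg * Psi - ExpNeg * (ExpNeg * Psi) + ExpNeg
noncomputable def sK : PowerSeries ℚ :=
  1 + (Psi - ExpNeg * Psi - ExpNeg * Psi + ExpNeg * (ExpNeg * Psi))

lemma egf2_aF : egf2 aF = sF := by
  have : aF = fun m n => (fun m n => (fun m n => aM m n) m n - (fun m n => ((2 ^ n - 2) ^ m : ℚ)) m n) m n
      + (fun m n => if n = 0 then (-1) ^ m else 0) m n := by
    funext m n; rfl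
  rw [this, egf2_add, egf2_sub, egf2_aM2, egf2_neg, egf2_aM, sF]

lemma egf2_aK : egf2 aK = sK := by
  have : aK = fun m n => (fun m n => if m = 0 ∧ n = 0 then 1 else 0) m n +
      (fun m n => (fun m n => (fun m n => (fun m n => 2 ^ (m * n)) m n - (fun m n => aM m n) m n) m n
        - (fun m n => aM n m) m n) m n + aN m n) m n := by
    funext m n; rfl
  rw [this, egf2_add, egf2_add, egf2_sub, egf2_sub, egf2_delta, egf2_Psi, egf2_swap aM, egf2_aM, egf2_aN, sK]

end WG

namespace WG
open Finset
open scoped Classical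

/-! ### Counting relations between two sets -/

set_option linter.unusedSectionVars false
variable {α : Type} [Fintype α]

/-- the number of elements with property `P` -/
noncomputable def cnt {β : Type} [Fintype β] (P : β → Prop) : ℕ := (univ.filter P).card

lemma cnt_congr {β : Type} [Fintype β] {P Q : β → Prop} (h : ∀ x, P x ↔ Q x) : cnt P = cnt Q := by
  rw [show P = Q from funext fun x => propext (h x)]

lemma cnt_bij {β γ : Type} [Fintype β] [Fintype γ] {P : β → Prop} {Q : γ → Prop}
    (f : β → γ) (g : γ → β) (h1 : ∀ x, P x → Q (f x)) (h2 : ∀ y, Q y → P (g y))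
    (h3 : ∀ x, P x → g (f x) = x) (h4 : ∀ y, Q y → f (g y) = y) : cnt P = cnt Q := by
  unfold cnt
  refine card_bij' (fun x _ => f x) (fun y _ => g y) ?_ ?_ ?_ ?_
  · intro x hx; simpa using h1 x (by simpa using hx)
  · intro x hx; simpa using h2 x (by simpa using hx)
  · intro x hx; simpa using h3 x (by simpa using hx)
  · intro x hx; simpa using h4 x (by simpa using hx)

lemma cnt_split {β : Type} [Fintype β] (P R : β → Prop) :
    (cnt P : ℚ) = cnt (fun x => P x ∧ R x) + cnt (fun x => P x ∧ ¬ R x) := by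
  unfold cnt
  rw [← card_filter_add_card_filter_not (s := univ.filter P) (p := R), filter_filter, filter_filter]
  push_cast
  congr!

lemma cnt_fiber {β γ : Type} [Fintype β] (P : β → Prop) (f : β → γ) (T : Finset γ)
    (h : ∀ x, P x → f x ∈ T) : (cnt P : ℚ) = ∑ t ∈ T, (cnt (fun x => P x ∧ f x = t) : ℚ) := by
  unfold cnt
  rw [card_eq_sum_card_fiberwise (f := f) (t := T)]
  · push_cast
    refine sum_congr rfl fun t _ => ?_
    rw [filter_filter]
    congr!
  · intro x hx
    exact h x (by simpa using hx)

lemma cnt_eq_zero {β : Type} [Fintype β] {P : β → Prop} (h : ∀ x, ¬ P x) : cnt P = 0 := by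
  simp [cnt, h]

lemma cnt_eq_one {β : Type} [Fintype β] {P : β → Prop} (a : β) (h : ∀ x, P x ↔ x = a) : cnt P = 1 := by
  rw [cnt, Finset.card_eq_one]
  exact ⟨a, by ext; simp [h]⟩


noncomputable def dom (H : Finset (α × α)) : Finset α := H.image Prod.fst
noncomputable def ran (H : Finset (α × α)) : Finset α := H.image Prod.snd

lemma mem_dom {H : Finset (α × α)} {a : α} : a ∈ dom H ↔ ∃ b, (a, b) ∈ H := by
  simp [dom]
lemma mem_ran {H : Finset (α × α)} {b : α} : b ∈ ran H ↔ ∃ a, (a, b) ∈ H := by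
  simp [ran]

/-- every row of the non-empty relation `H` has a hole -/
def pH (H : Finset (α × α)) : Prop := H ≠ ∅ ∧ ∀ y ∈ dom H, ∃ z ∈ ran H, (y, z) ∉ H
/-- every column of the non-empty relation `H` has a hole -/
def qH (H : Finset (α × α)) : Prop := H ≠ ∅ ∧ ∀ z ∈ ran H, ∃ y ∈ dom H, (y, z) ∉ H

noncomputable def row (H : Finset (α × α)) (a : α) : Finset α := univ.filter fun c => (a, c) ∈ H

lemma mem_row {H : Finset (α × α)} {a c : α} : c ∈ row H a ↔ (a, c) ∈ H := by simp [row]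

lemma card_rows (B : Finset α) (Q : Finset (Finset α)) :
    cnt (fun H : Finset (α × α) =>
      (∀ b ∈ B, row H b ∈ Q) ∧ ∀ b, b ∉ B → row H b = ∅) = Q.card ^ B.card := by
  unfold cnt
  have h1 : (Fintype.piFinset fun a => if a ∈ B then Q else {∅}).card = Q.card ^ B.card := by
    rw [Fintype.card_piFinset, ← Finset.prod_const, ← Finset.prod_subset (subset_univ B)]
    · exact prod_congr rfl fun a ha => by simp [ha]
    · intro a _ ha; simp [ha]
  rw [← h1]
  refine card_bij' (fun H _ => row H) (fun f _ => univ.filter fun p => p.2 ∈ f p.1) ?_ ?_ ?_ ?_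
  · intro H hH
    simp only [mem_filter, mem_univ, true_and, Fintype.mem_piFinset] at hH ⊢
    intro a
    by_cases ha : a ∈ B
    · simp [ha, hH.1 a ha]
    · simp [ha, hH.2 a ha]
  · intro f hf
    simp only [mem_filter, mem_univ, true_and, Fintype.mem_piFinset] at hf ⊢
    have e : ∀ b, row (univ.filter fun p : α × α => p.2 ∈ f p.1) b = f b := by
      intro b; ext c; simp [row]
    refine ⟨fun b hb => ?_, fun b hb => ?_⟩
    · rw [e]; simpa [hb] using hf b
    · rw [e]; simpa [hb] using hf b
  · intro H _; ext ⟨a, c⟩; simp [row]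
  · intro f _; funext b; ext c; simp [row]

lemma row_nonempty {H : Finset (α × α)} {a : α} : row H a ≠ ∅ ↔ a ∈ dom H := by
  rw [← nonempty_iff_ne_empty, mem_dom]
  constructor
  · rintro ⟨c, hc⟩; exact ⟨c, mem_row.1 hc⟩
  · rintro ⟨c, hc⟩; exact ⟨c, mem_row.2 hc⟩

lemma card_M (B C : Finset α) :
    (cnt (fun H : Finset (α × α) => dom H = B ∧ ran H ⊆ C) : ℚ)
      = aM B.card C.card := by
  have : cnt (fun H : Finset (α × α) => dom H = B ∧ ran H ⊆ C) =
      cnt fun H : Finset (α × α) =>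
      (∀ b ∈ B, row H b ∈ C.powerset.erase ∅) ∧ ∀ b, b ∉ B → row H b = ∅ := by
    apply cnt_congr
    intro H
    simp only [mem_erase, row_nonempty, mem_powerset]
    constructor
    · rintro ⟨rfl, h⟩
      refine ⟨fun b hb => ⟨hb, fun c hc => h (mem_ran.2 ⟨b, mem_row.1 hc⟩)⟩, fun b hb => ?_⟩
      by_contra h'
      exact hb (row_nonempty.1 h')
    · rintro ⟨h1, h2⟩
      have h3 : dom H = B := by
        ext b
        refine ⟨fun hb => ?_, fun hb => (h1 b hb).1⟩
        by_contra h'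
        exact row_nonempty.2 hb (h2 b h')
      refine ⟨h3, fun c hc => ?_⟩
      obtain ⟨a, ha⟩ := mem_ran.1 hc
      exact (h1 a (h3 ▸ mem_dom.2 ⟨c, ha⟩)).2 (mem_row.2 ha)
  rw [this, card_rows, card_erase_of_mem (by simp), card_powerset, aM]
  push_cast [Nat.one_le_two_pow]
  rfl

lemma card_M2 (B C : Finset α) (hC : C ≠ ∅) :
    (cnt (fun H : Finset (α × α) => (dom H = B ∧ ran H ⊆ C) ∧
      ∀ b ∈ B, ∃ c ∈ C, (b, c) ∉ H) : ℚ)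
      = (2 ^ C.card - 2) ^ B.card := by
  have : cnt (fun H : Finset (α × α) => (dom H = B ∧ ran H ⊆ C) ∧
      ∀ b ∈ B, ∃ c ∈ C, (b, c) ∉ H) =
      cnt fun H : Finset (α × α) =>
      (∀ b ∈ B, row H b ∈ (C.powerset.erase ∅).erase C) ∧ ∀ b, b ∉ B → row H b = ∅ := by
    apply cnt_congr
    intro H
    simp only [mem_erase, row_nonempty, mem_powerset]
    constructor
    · rintro ⟨⟨rfl, h⟩, h'⟩
      refine ⟨fun b hb => ⟨?_, hb, fun c hc => h (mem_ran.2 ⟨b, mem_row.1 hc⟩)⟩, fun b hb => ?_⟩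
      · obtain ⟨c, hc, hc'⟩ := h' b hb
        intro e
        rw [← e] at hc
        exact hc' (mem_row.1 hc)
      by_contra h'
      exact hb (row_nonempty.1 h')
    · rintro ⟨h1, h2⟩
      have h3 : dom H = B := by
        ext b
        refine ⟨fun hb => ?_, fun hb => (h1 b hb).2.1⟩
        by_contra h'
        exact row_nonempty.2 hb (h2 b h')
      refine ⟨⟨h3, fun c hc => ?_⟩, fun b hb => ?_⟩
      · obtain ⟨a, ha⟩ := mem_ran.1 hc
        exact (h1 a (h3 ▸ mem_dom.2 ⟨c, ha⟩)).2.2 (mem_row.2 ha)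
      · by_contra! h
        exact (h1 b hb).1 (subset_antisymm (h1 b hb).2.2 fun c hc => mem_row.2 (h c hc))
  rw [this, card_rows, card_erase_of_mem (by simp [hC]), card_erase_of_mem (by simp), card_powerset]
  have : 1 ≤ C.card := by rw [Nat.one_le_iff_ne_zero]; simpa using hC
  have h2 : 2 ≤ 2 ^ C.card := by
    calc 2 = 2 ^ 1 := rfl
      _ ≤ _ := Nat.pow_le_pow_right (by norm_num) this
  rw [Nat.sub_sub, Nat.cast_pow, Nat.cast_sub h2]
  norm_num

lemma card_P (B C : Finset α) :
    (cnt (fun H : Finset (α × α) => H ⊆ B ×ˢ C ∧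
      ∀ b ∈ B, ∃ c ∈ C, (b, c) ∉ H) : ℚ) = aM B.card C.card := by
  have : cnt (fun H : Finset (α × α) => H ⊆ B ×ˢ C ∧
      ∀ b ∈ B, ∃ c ∈ C, (b, c) ∉ H) =
      cnt fun H : Finset (α × α) =>
      (∀ b ∈ B, row H b ∈ C.powerset.erase C) ∧ ∀ b, b ∉ B → row H b = ∅ := by
    apply cnt_congr
    intro H
    simp only [mem_erase, mem_powerset]
    constructor
    · rintro ⟨h, h'⟩
      refine ⟨fun b hb => ⟨?_, fun c hc => (mem_product.1 (h (mem_row.1 hc))).2⟩, fun b hb => ?_⟩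
      · obtain ⟨c, hc, hc'⟩ := h' b hb
        intro e
        rw [← e] at hc
        exact hc' (mem_row.1 hc)
      · rw [eq_empty_iff_forall_notMem]
        intro c hc
        exact hb (mem_product.1 (h (mem_row.1 hc))).1
    · rintro ⟨h1, h2⟩
      have h3 : ∀ a c, (a, c) ∈ H → a ∈ B := by
        intro a c h
        by_contra h'
        have := h2 a h'
        rw [eq_empty_iff_forall_notMem] at this
        exact this c (mem_row.2 h)
      refine ⟨fun ⟨a, c⟩ h => mem_product.2 ⟨h3 a c h, (h1 a (h3 a c h)).2 (mem_row.2 h)⟩, fun b hb => ?_⟩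
      by_contra! h
      exact (h1 b hb).1 (subset_antisymm (h1 b hb).2 fun c hc => mem_row.2 (h c hc))
  rw [this, card_rows, card_erase_of_mem (by simp), card_powerset, aM]
  push_cast [Nat.one_le_two_pow]
  rfl

/-- Moebius inversion on the subset lattice, uniqueness form -/
lemma powerset_inversion {f g : Finset α → ℚ}
    (h : ∀ S : Finset α, ∑ T ∈ S.powerset, f T = ∑ T ∈ S.powerset, g T) : ∀ S, f S = g S := by
  intro S
  induction S using Finset.strongInduction with
  | H S ih =>
    have h1 := h S
    rw [← Finset.insert_erase (mem_powerset_self S), sum_insert (by simp), sum_insert (by simp)] at h1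
    rw [sum_congr rfl (g := g)] at h1
    · linarith
    · intro T hT
      simp only [mem_erase, mem_powerset] at hT
      exact ih T (hT.2.ssubset_of_ne hT.1)

lemma sum_powerset_antidiag' (S : Finset α) (φ : ℕ → ℕ → ℚ) :
    ∑ T ∈ S.powerset, φ T.card (S \ T).card =
      ∑ p ∈ antidiagonal S.card, (S.card.choose p.1 : ℚ) * φ p.1 p.2 := by
  rw [sum_powerset_antidiag, mul_sum]
  refine sum_congr rfl fun p hp => ?_
  have hp' := mem_antidiagonal.1 hp
  rw [Nat.cast_choose ℚ (show p.1 ≤ S.card by omega)]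
  have : S.card - p.1 = p.2 := by omega
  rw [this]; field_simp

/-- aN is the binomial inverse of aM -/
lemma sum_aN (m : ℕ) (C : Finset α) : ∑ T ∈ C.powerset, aN m T.card = aM m C.card := by
  have key : ∀ C : Finset α, aN m C.card = ∑ T ∈ C.powerset, (-1) ^ T.card * aM m (C \ T).card := by
    intro C
    rw [sum_powerset_antidiag' C (fun i j => (-1) ^ i * aM m j), aN]
    refine sum_congr rfl fun p _ => by ring
  have hc : HasEgf (fun C : Finset α => aM m C.card) (PowerSeries.mk fun n => aM m n / n.factorial) := by
    intro S
    have : (S.card.factorial : ℚ) ≠ 0 := by positivity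
    simp; field_simp
  have hn : HasEgf (fun C : Finset α => (-1 : ℚ) ^ C.card) ExpNeg := by
    intro S
    have : (S.card.factorial : ℚ) ≠ 0 := by positivity
    simp [ExpNeg]; field_simp
  have h1 := (hn.mul hc).congr key
  have h2 := hasEgf_one.mul h1
  have h3 : E * (ExpNeg * PowerSeries.mk fun n => aM m n / n.factorial) =
      PowerSeries.mk fun n => aM m n / n.factorial := by
    rw [← mul_assoc, mul_comm E, expNeg_mul_E, one_mul]
  rw [h3] at h2
  have h4 := (hc C).trans (h2 C).symm
  simp only [one_mul] at h4
  rw [h4]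
  refine sum_bij' (fun T _ => C \ T) (fun T _ => C \ T) ?_ ?_ ?_ ?_ ?_
  · intro T _; simp
  · intro T _; simp
  · intro T hT; simpa using hT
  · intro T hT; simpa using hT
  · intro T hT; simp only [mem_powerset] at hT; simp only [Finset.sdiff_sdiff_eq_self hT]

lemma card_N (B C : Finset α) :
    (cnt (fun H : Finset (α × α) => dom H = B ∧ ran H = C) : ℚ)
      = aN B.card C.card := by
  refine powerset_inversion (f := fun C => (cnt (fun H : Finset (α × α) =>
    dom H = B ∧ ran H = C) : ℚ)) (g := fun C => aN B.card C.card) ?_ C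
  intro C
  rw [sum_aN, ← card_M, cnt_fiber _ ran C.powerset]
  · refine sum_congr rfl fun T hT => ?_
    rw [mem_powerset] at hT
    congr 1
    apply cnt_congr
    intro H
    constructor
    · rintro ⟨h1, rfl⟩; exact ⟨⟨h1, hT⟩, rfl⟩
    · rintro ⟨⟨h1, _⟩, h2⟩; exact ⟨h1, h2⟩
  · intro H hH
    simpa using hH.2

lemma dom_eq_empty {H : Finset (α × α)} : dom H = ∅ ↔ H = ∅ := by simp [dom]
lemma ran_eq_empty {H : Finset (α × α)} : ran H = ∅ ↔ H = ∅ := by simp [ran]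

lemma card_F (B C : Finset α) :
    (cnt (fun H : Finset (α × α) => (dom H = B ∧ ran H = C) ∧ ¬ pH H) : ℚ)
      = aF B.card C.card := by
  by_cases hC : C = ∅
  · subst hC
    by_cases hB : B = ∅
    · subst hB
      rw [cnt_eq_one ∅]
      · simp [aF, aM]
      · intro H
        simp only [dom_eq_empty, ran_eq_empty, pH]
        tauto
    · rw [cnt_eq_zero]
      · have : B.card ≠ 0 := by simpa using hB
        simp [aF, aM, this]
        norm_num
      · rintro H ⟨⟨h1, h2⟩, _⟩
        rw [ran_eq_empty] at h2
        exact hB (by simp [← h1, dom, h2])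
  · have hc : C.card ≠ 0 := by simpa using hC
    have e := cnt_split (fun H : Finset (α × α) => dom H = B ∧ ran H ⊆ C)
      (fun H => ∀ b ∈ B, ∃ c ∈ C, (b, c) ∉ H)
    have e2 : cnt (fun H : Finset (α × α) => (dom H = B ∧ ran H ⊆ C) ∧
        ¬ ∀ b ∈ B, ∃ c ∈ C, (b, c) ∉ H) =
        cnt (fun H : Finset (α × α) => (dom H = B ∧ ran H = C) ∧ ¬ pH H) := by
      apply cnt_congr
      intro H
      constructor
      · rintro ⟨⟨rfl, h1⟩, h2⟩
        have h3 : ran H = C := by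
          apply subset_antisymm h1
          push Not at h2
          obtain ⟨b, hb, h2⟩ := h2
          exact fun c hc => mem_ran.2 ⟨b, h2 c hc⟩
        exact ⟨⟨rfl, h3⟩, fun h => h2 (h3 ▸ h.2)⟩
      · rintro ⟨⟨rfl, rfl⟩, h⟩
        refine ⟨⟨rfl, subset_rfl⟩, fun h' => h ⟨?_, h'⟩⟩
        rintro rfl
        exact hC (by simp [ran])
    rw [card_M, card_M2 B C hC, e2] at e
    rw [aF, if_neg hc]
    linarith

/-- the transposed relation -/
noncomputable def tr (H : Finset (α × α)) : Finset (α × α) := H.map (Equiv.prodComm α α).toEmbedding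

lemma mem_tr {H : Finset (α × α)} {a b : α} : (a, b) ∈ tr H ↔ (b, a) ∈ H := by
  simp [tr]
lemma tr_tr (H : Finset (α × α)) : tr (tr H) = H := by
  ext ⟨a, b⟩; simp [mem_tr]
lemma dom_tr (H : Finset (α × α)) : dom (tr H) = ran H := by
  ext a; simp [mem_dom, mem_ran, mem_tr]
lemma ran_tr (H : Finset (α × α)) : ran (tr H) = dom H := by
  ext a; simp [mem_dom, mem_ran, mem_tr]
lemma pH_tr (H : Finset (α × α)) : pH (tr H) ↔ qH H := by
  unfold pH qH
  rw [dom_tr, ran_tr]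
  simp only [ne_eq, tr, map_eq_empty]
  simp

lemma card_swap (P : Finset (α × α) → Prop) : cnt (fun H => P (tr H)) = cnt P := by
  refine cnt_bij tr tr ?_ ?_ ?_ ?_
  · intro H hH; exact hH
  · intro H hH; rwa [tr_tr]
  · intro H _; exact tr_tr H
  · intro H _; exact tr_tr H

lemma card_G (B C : Finset α) :
    (cnt (fun H : Finset (α × α) => (dom H = B ∧ ran H = C) ∧ ¬ qH H) : ℚ)
      = aF C.card B.card := by
  rw [← card_F, ← card_swap (fun H => (dom H = C ∧ ran H = B) ∧ ¬ pH H)]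
  congr 1
  apply cnt_congr
  intro H
  simp only [dom_tr, ran_tr, pH_tr]
  tauto

lemma card_K (B C : Finset α) :
    (cnt (fun H : Finset (α × α) => (dom H = B ∧ ran H = C) ∧ ¬ pH H ∧ ¬ qH H) : ℚ)
      = aK B.card C.card := by
  by_cases h0 : B = ∅ ∧ C = ∅
  · obtain ⟨rfl, rfl⟩ := h0
    rw [cnt_eq_one ∅]
    · simp [aK, aM, aN]
    · intro H
      simp only [dom_eq_empty, ran_eq_empty, pH, qH]
      tauto
  · set R : (Finset (α × α)) → Prop := fun H => ∀ b ∈ B, ∃ c ∈ C, (b, c) ∉ H with hR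
    set Q : (Finset (α × α)) → Prop := fun H => ∀ c ∈ C, ∃ b ∈ B, (b, c) ∉ H with hQ
    have c1 : (cnt (fun H : Finset (α × α) => H ⊆ B ×ˢ C) : ℚ) = 2 ^ (B.card * C.card) := by
      have a1 : cnt (fun H : Finset (α × α) => H ⊆ B ×ˢ C) = (B ×ˢ C).powerset.card := by
        unfold cnt
        congr 1
        ext; simp
      rw [a1, card_powerset, card_product]
      push_cast; rfl
    have cR : (cnt (fun H : Finset (α × α) => H ⊆ B ×ˢ C ∧ R H) : ℚ) = _ := card_P B C
    have cQ : (cnt (fun H : Finset (α × α) => H ⊆ B ×ˢ C ∧ Q H) : ℚ)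
        = aM C.card B.card := by
      rw [← card_P, ← card_swap (fun H => H ⊆ C ×ˢ B ∧ ∀ b ∈ C, ∃ c ∈ B, (b, c) ∉ H)]
      congr 1
      apply cnt_congr
      intro H
      simp only [mem_tr, hQ]
      refine and_congr ?_ Iff.rfl
      constructor
      · rintro h ⟨a, b⟩ hab
        have := h (mem_tr.1 hab)
        simp at this ⊢; tauto
      · rintro h ⟨a, b⟩ hab
        have := h (mem_tr.2 hab)
        simp at this ⊢; tauto
    have cRQ : (cnt (fun H : Finset (α × α) => (H ⊆ B ×ˢ C ∧ Q H) ∧ R H) : ℚ)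
        = aN B.card C.card := by
      rw [← card_N]
      congr 1
      refine cnt_bij (fun H => (B ×ˢ C) \ H) (fun H => (B ×ˢ C) \ H) ?_ ?_ ?_ ?_
      · intro H hH
        constructor
        · ext a
          simp only [mem_dom, mem_sdiff, mem_product]
          constructor
          · rintro ⟨b, h, _⟩; exact h.1
          · intro ha
            obtain ⟨c, hc, h⟩ := hH.2 a ha
            exact ⟨c, ⟨ha, hc⟩, h⟩
        · ext a
          simp only [mem_ran, mem_sdiff, mem_product]
          constructor
          · rintro ⟨b, h, _⟩; exact h.2
          · intro ha
            obtain ⟨c, hc, h⟩ := hH.1.2 a ha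
            exact ⟨c, ⟨hc, ha⟩, h⟩
      · intro H hH
        obtain ⟨rfl, rfl⟩ := hH
        refine ⟨⟨sdiff_subset, ?_⟩, ?_⟩
        · intro c hc
          obtain ⟨b, hb⟩ := mem_ran.1 hc
          exact ⟨b, mem_dom.2 ⟨c, hb⟩, by simp [hb]⟩
        · intro b hb
          obtain ⟨c, hc⟩ := mem_dom.1 hb
          exact ⟨c, mem_ran.2 ⟨b, hc⟩, by simp [hc]⟩
      · intro H hH
        exact Finset.sdiff_sdiff_eq_self hH.1.1
      · intro H hH
        apply Finset.sdiff_sdiff_eq_self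
        rintro ⟨a, b⟩ hab
        rw [← hH.1, ← hH.2]
        exact mem_product.2 ⟨mem_dom.2 ⟨b, hab⟩, mem_ran.2 ⟨a, hab⟩⟩
    have e1 := cnt_split (fun H : Finset (α × α) => H ⊆ B ×ˢ C) R
    have e2 := cnt_split (fun H : Finset (α × α) => H ⊆ B ×ˢ C ∧ Q H) R
    have e3 := cnt_split (fun H : Finset (α × α) => H ⊆ B ×ˢ C ∧ ¬ R H) Q
    have a5 : cnt (fun H : Finset (α × α) => (H ⊆ B ×ˢ C ∧ Q H) ∧ ¬ R H) =
        cnt fun H : Finset (α × α) => (H ⊆ B ×ˢ C ∧ ¬ R H) ∧ Q H :=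
      cnt_congr fun H => by tauto
    have a6 : cnt (fun H : Finset (α × α) => (H ⊆ B ×ˢ C ∧ ¬ R H) ∧ ¬ Q H) =
        cnt fun H : Finset (α × α) => (dom H = B ∧ ran H = C) ∧ ¬ pH H ∧ ¬ qH H := by
      apply cnt_congr
      intro H
      constructor
      · rintro ⟨⟨h1, h2⟩, h3⟩
        simp only [hR, hQ] at h2 h3
        have h2' := h2
        have h3' := h3
        push Not at h2 h3
        obtain ⟨b, hb, h2⟩ := h2
        obtain ⟨c, hc, h3⟩ := h3
        have d1 : dom H = B := by
          ext x
          refine ⟨fun hx => ?_, fun hx => mem_dom.2 ⟨c, h3 x hx⟩⟩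
          obtain ⟨y, hy⟩ := mem_dom.1 hx
          exact (mem_product.1 (h1 hy)).1
        have d2 : ran H = C := by
          ext x
          refine ⟨fun hx => ?_, fun hx => mem_ran.2 ⟨b, h2 x hx⟩⟩
          obtain ⟨y, hy⟩ := mem_ran.1 hx
          exact (mem_product.1 (h1 hy)).2
        exact ⟨⟨d1, d2⟩, fun h => h2' (d1 ▸ d2 ▸ h.2), fun h => h3' (d1 ▸ d2 ▸ h.2)⟩
      · rintro ⟨⟨rfl, rfl⟩, h2, h3⟩
        have hne : H ≠ ∅ := by
          rintro rfl; exact h0 (by simp [dom, ran])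
        refine ⟨⟨?_, fun h => h2 ⟨hne, h⟩⟩, fun h => h3 ⟨hne, h⟩⟩
        rintro ⟨a, b⟩ hab
        exact mem_product.2 ⟨mem_dom.2 ⟨b, hab⟩, mem_ran.2 ⟨a, hab⟩⟩
    have h0' : ¬ (B.card = 0 ∧ C.card = 0) := by simpa using h0
    rw [aK, if_neg h0', ← cR, ← cQ, ← cRQ, ← c1, ← a6]
    rw [a5] at e2
    linarith

/-! ### Junctions -/

noncomputable def supp (H : Finset (α × α)) : Finset α := dom H ∪ ran H
def bip (H : Finset (α × α)) : Prop := Disjoint (dom H) (ran H)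

/-- the number of junctions on `T` with property `P` -/
noncomputable def jc (P : Finset (α × α) → Prop) (T : Finset α) : ℚ :=
  (cnt (fun H : Finset (α × α) => (bip H ∧ supp H = T) ∧ P H) : ℚ)

lemma hasEgf_junction (P : Finset (α × α) → Prop) (φ : ℕ → ℕ → ℚ)
    (h : ∀ B C : Finset α, (cnt (fun H : Finset (α × α) =>
      (dom H = B ∧ ran H = C) ∧ P H) : ℚ) = φ B.card C.card) :
    HasEgf (jc P) (egf2 φ) := by
  refine (hasEgf_egf2 φ).congr fun T => ?_
  rw [jc, cnt_fiber _ dom T.powerset]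
  · refine sum_congr rfl fun B hB => ?_
    rw [← h]
    congr 1
    apply cnt_congr
    intro H
    simp only [mem_powerset, bip, supp] at hB ⊢
    constructor
    · rintro ⟨⟨⟨h1, rfl⟩, h2⟩, rfl⟩
      refine ⟨⟨rfl, ?_⟩, h2⟩
      rw [union_sdiff_left, sdiff_eq_self_of_disjoint h1.symm]
    · rintro ⟨⟨rfl, h1⟩, h2⟩
      rw [h1]
      exact ⟨⟨⟨disjoint_sdiff, union_sdiff_of_subset hB⟩, h2⟩, rfl⟩
  · intro H hH
    rw [← hH.1.2, mem_powerset]; exact subset_union_left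

lemma hasEgf_jN : HasEgf (jc (α := α) fun _ => True) sN := by
  rw [sN, ← egf2_aN]
  refine hasEgf_junction _ _ fun B C => ?_
  simpa using card_N B C
lemma hasEgf_jF : HasEgf (jc (α := α) fun H => ¬ pH H) sF := by
  rw [← egf2_aF]; exact hasEgf_junction _ _ card_F
lemma hasEgf_jG : HasEgf (jc (α := α) fun H => ¬ qH H) sF := by
  rw [← egf2_aF, ← egf2_swap]; exact hasEgf_junction _ _ card_G
lemma hasEgf_jK : HasEgf (jc (α := α) fun H => ¬ pH H ∧ ¬ qH H) sK := by
  rw [← egf2_aK]; exact hasEgf_junction _ _ card_K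

end WG

namespace WG
open Finset
open scoped Classical

/-! ### Words of junctions -/

set_option linter.unusedSectionVars false

/-- words of length `j`: alternating sequences of junctions and sets -/
def V (α : Type) : ℕ → Type
  | 0 => Finset (α × α) × Finset α
  | j + 1 => Finset (α × α) × Finset α × V α j

noncomputable instance instFintypeV (α : Type) [Fintype α] : ∀ j, Fintype (V α j)
  | 0 => inferInstanceAs (Fintype (Finset (α × α) × Finset α))
  | j + 1 =>
    have := instFintypeV α j
    inferInstanceAs (Fintype (Finset (α × α) × Finset α × V α j))

variable {α : Type} [Fintype α]

/-- the first junction -/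
def head : ∀ {j : ℕ}, V α j → Finset (α × α)
  | 0, v => v.1
  | _ + 1, v => v.1

/-- the validity of a word on the ground set `S` -/
def vvalid : ∀ {j : ℕ}, V α j → Finset α → Prop
  | 0, v, S => (bip v.1 ∧ supp v.1 ⊆ S) ∧ v.2 = S \ supp v.1 ∧ (v.1 ≠ ∅ ∨ v.2 ≠ ∅)
  | _ + 1, v, S => (bip v.1 ∧ supp v.1 ⊆ S) ∧ (v.2.1 ⊆ S \ supp v.1 ∧
      vvalid v.2.2 ((S \ supp v.1) \ v.2.1)) ∧ (v.2.1 ≠ ∅ ∨ pH v.1 ∨ qH (head v.2.2))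

lemma cnt_prod {β γ : Type} [Fintype β] [Fintype γ] (P : β → Prop) (Q : γ → Prop) :
    cnt (fun x : β × γ => P x.1 ∧ Q x.2) = cnt P * cnt Q := by
  unfold cnt
  rw [← card_product]
  congr 1
  ext ⟨x, y⟩
  simp

lemma hasEgf_prod {β γ : Type} [Fintype β] [Fintype γ] (s : β → Finset α) (Q : β → Prop)
    (R : γ → Finset α → Prop) {p q : PowerSeries ℚ}
    (h1 : HasEgf (fun T => (cnt (fun x => Q x ∧ s x = T) : ℚ)) p)
    (h2 : HasEgf (fun T => (cnt (fun v => R v T) : ℚ)) q) :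
    HasEgf (fun S => (cnt (fun x : β × γ => (Q x.1 ∧ s x.1 ⊆ S) ∧ R x.2 (S \ s x.1)) : ℚ))
      (p * q) := by
  refine (h1.mul h2).congr fun S => ?_
  rw [cnt_fiber _ (fun x => s x.1) S.powerset]
  · refine sum_congr rfl fun T hT => ?_
    rw [← Nat.cast_mul, ← cnt_prod]
    congr 1
    apply cnt_congr
    rintro ⟨x, y⟩
    simp only [mem_powerset] at hT ⊢
    constructor
    · rintro ⟨⟨⟨h1, h2⟩, h3⟩, rfl⟩
      exact ⟨⟨h1, rfl⟩, h3⟩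
    · rintro ⟨⟨h1, rfl⟩, h3⟩
      exact ⟨⟨⟨h1, hT⟩, h3⟩, rfl⟩
  · intro x hx
    exact mem_powerset.2 hx.1.2

/-- words with a property of the first junction -/
noncomputable def vc (P : Finset (α × α) → Prop) (j : ℕ) (S : Finset α) : ℚ :=
  (cnt (fun v : V α j => vvalid v S ∧ P (head v)) : ℚ)

lemma HasEgf.jc' {P : Finset (α × α) → Prop} {p : PowerSeries ℚ} (h : HasEgf (jc P) p) :
    HasEgf (fun T => (cnt (fun H => (bip H ∧ P H) ∧ supp H = T) : ℚ)) p :=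
  h.congr fun T => by
    rw [jc]; congr 1; apply cnt_congr; intro H; tauto

lemma cnt_sub {β : Type} [Fintype β] {P Q R : β → Prop} (h : ∀ x, P x ↔ Q x ∧ ¬ R x)
    (h' : ∀ x, R x → Q x) : (cnt P : ℚ) = cnt Q - cnt R := by
  have e := cnt_split Q R
  rw [cnt_congr h, e, cnt_congr (P := fun x => Q x ∧ R x) (Q := R)]
  · ring
  · intro x; exact ⟨fun h => h.2, fun hx => ⟨h' x hx, hx⟩⟩

lemma hasEgf_sets {γ : Type} [Fintype γ] (R : γ → Finset α → Prop) {q : PowerSeries ℚ}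
    (h2 : HasEgf (fun T => (cnt (fun v => R v T) : ℚ)) q) :
    HasEgf (fun S => (cnt (fun x : Finset α × γ => x.1 ⊆ S ∧ R x.2 (S \ x.1)) : ℚ)) (E * q) := by
  have h := hasEgf_prod (fun x : Finset α => x) (fun _ => True) R (p := E) (hasEgf_one.congr fun S => by
    rw [cnt_eq_one S]; · simp
    intro x; simp) h2
  refine h.congr fun S => ?_
  congr 1; apply cnt_congr; intro x; simp

lemma hasEgf_vzero {P : Finset (α × α) → Prop} {p : PowerSeries ℚ} (h : HasEgf (jc P) p)
    (hP : P ∅) : HasEgf (vc P 0) (p * E - 1) := by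
  have h1 := hasEgf_prod supp (fun H => bip H ∧ P H) (fun (A : Finset α) (S : Finset α) => A = S) (q := E)
    h.jc' (hasEgf_one.congr fun S => by rw [cnt_eq_one S]; · simp
                                        intro x; simp)
  refine (h1.sub hasEgf_empty).congr fun S => ?_
  have h3 : (if S = ∅ then (1 : ℚ) else 0) =
      (cnt fun x : Finset (α × α) × Finset α => S = ∅ ∧ x = (∅, ∅) : ℕ) := by
    split_ifs with hS
    · rw [cnt_eq_one (∅, ∅)]; · simp
      intro x; simp [hS]
    · rw [cnt_eq_zero]; · simp
      intro x; simp [hS]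
  rw [h3]
  refine cnt_sub (β := Finset (α × α) × Finset α) ?_ ?_
  · rintro ⟨H, A⟩
    show ((bip H ∧ supp H ⊆ S) ∧ A = S \ supp H ∧ (H ≠ ∅ ∨ A ≠ ∅)) ∧ P H ↔ _
    simp only [Prod.mk.injEq]
    constructor
    · rintro ⟨⟨h1, h2, h3⟩, h4⟩
      exact ⟨⟨⟨⟨h1.1, h4⟩, h1.2⟩, h2⟩, by tauto⟩
    · rintro ⟨⟨⟨⟨h1, h4⟩, h1'⟩, h2⟩, h3⟩
      refine ⟨⟨⟨h1, h1'⟩, h2, ?_⟩, h4⟩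
      by_contra! h5
      refine h3 ⟨?_, h5⟩
      obtain ⟨rfl, rfl⟩ := h5
      rw [h2]; simp [supp, dom, ran]
  · rintro ⟨H, A⟩ ⟨h1, h2⟩
    simp only [Prod.mk.injEq] at h2
    obtain ⟨rfl, rfl⟩ := h2
    subst h1
    simp [supp, dom, ran, bip, hP]

lemma hasEgf_vsucc {P : Finset (α × α) → Prop} {p p' x g : PowerSeries ℚ} {j : ℕ}
    (h : HasEgf (jc P) p) (h' : HasEgf (jc fun H => P H ∧ ¬ pH H) p')
    (hx : HasEgf (vc (α := α) (fun _ => True) j) x) (hg : HasEgf (vc (α := α) (fun H => ¬ qH H) j) g) :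
    HasEgf (vc P (j + 1)) (p * (E * x) - p' * g) := by
  have hx' : HasEgf (fun T => (cnt fun v : V α j => vvalid v T : ℚ)) x := hx.congr fun S => by
    simp [vc]
  have h1 := hasEgf_prod supp (fun H => bip H ∧ P H) _ h.jc' (hasEgf_sets _ hx')
  have h2 := hasEgf_prod supp (fun H => bip H ∧ P H ∧ ¬ pH H) _ h'.jc' hg
  refine (h1.sub h2).congr fun S => ?_
  have h3 : cnt (fun x : Finset (α × α) × V α j => ((bip x.1 ∧ P x.1 ∧ ¬ pH x.1) ∧ supp x.1 ⊆ S) ∧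
      vvalid x.2 (S \ supp x.1) ∧ ¬ qH (head x.2)) =
      cnt (fun x : Finset (α × α) × Finset α × V α j =>
      (((bip x.1 ∧ P x.1 ∧ ¬ pH x.1) ∧ supp x.1 ⊆ S) ∧
      vvalid x.2.2 (S \ supp x.1) ∧ ¬ qH (head x.2.2)) ∧ x.2.1 = ∅) := by
    refine cnt_bij (fun x => (x.1, ∅, x.2)) (fun x => (x.1, x.2.2)) ?_ ?_ ?_ ?_
    · rintro ⟨H, v⟩ h; exact ⟨h, rfl⟩
    · rintro ⟨H, A, v⟩ h; exact h.1
    · rintro ⟨H, v⟩ h; rfl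
    · rintro ⟨H, A, v⟩ ⟨_, h⟩
      simp only at h; subst h; rfl
  rw [h3]
  refine cnt_sub (β := Finset (α × α) × Finset α × V α j) ?_ ?_
  · rintro ⟨H, A, v⟩
    show ((bip H ∧ supp H ⊆ S) ∧ (A ⊆ S \ supp H ∧ vvalid v ((S \ supp H) \ A)) ∧
      (A ≠ ∅ ∨ pH H ∨ qH (head v))) ∧ P H ↔ _
    simp only
    constructor
    · rintro ⟨⟨h1, h2, h3⟩, h4⟩
      exact ⟨⟨⟨⟨h1.1, h4⟩, h1.2⟩, h2⟩, by tauto⟩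
    · rintro ⟨⟨⟨⟨h1, h4⟩, h1'⟩, h2⟩, h3⟩
      refine ⟨⟨⟨h1, h1'⟩, h2, ?_⟩, h4⟩
      by_contra! h5
      obtain ⟨rfl, h5, h6⟩ := h5
      exact h3 ⟨⟨⟨⟨h1, h4, h5⟩, h1'⟩, by simpa using h2.2, h6⟩, rfl⟩
  · rintro ⟨H, A, v⟩ ⟨⟨⟨⟨h1, h4, h5⟩, h1'⟩, h2, h6⟩, h3⟩
    simp only at *
    subst h3
    exact ⟨⟨⟨h1, h4⟩, h1'⟩, by simp, by simpa using h2⟩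

/-- generating functions of words -/
noncomputable def XG : ℕ → PowerSeries ℚ × PowerSeries ℚ
  | 0 => (sN * E - 1, sF * E - 1)
  | j + 1 => (sN * (E * (XG j).1) - sF * (XG j).2, sF * (E * (XG j).1) - sK * (XG j).2)

lemma hasEgf_XG (j : ℕ) : HasEgf (vc (α := α) (fun _ => True) j) (XG j).1 ∧
    HasEgf (vc (α := α) (fun H => ¬ qH H) j) (XG j).2 := by
  induction j with
  | zero =>
    exact ⟨hasEgf_vzero hasEgf_jN trivial, hasEgf_vzero hasEgf_jG (fun h => h.1 rfl)⟩
  | succ j ih =>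
    refine ⟨hasEgf_vsucc hasEgf_jN ?_ ih.1 ih.2, hasEgf_vsucc hasEgf_jG ?_ ih.1 ih.2⟩
    · simpa using hasEgf_jF
    · refine hasEgf_jK.congr fun S => ?_
      congr 1; funext H; rw [and_comm]

/-- validity of a full word with top rank `j + 2` -/
def fvalid {j : ℕ} (x : Finset α × V α (j + 1)) (S : Finset α) : Prop :=
  (x.1 ⊆ S ∧ vvalid x.2 (S \ x.1)) ∧ (x.1 ≠ ∅ ∨ head x.2 ≠ ∅)

lemma hasEgf_full (j : ℕ) : HasEgf (fun S : Finset α => (cnt fun x : Finset α × V α (j + 1) => fvalid x S : ℚ))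
    (E * (XG (j + 1)).1 - (E * (XG j).1 - (XG j).2)) := by
  have hx' : HasEgf (fun T => (cnt fun v : V α (j + 1) => vvalid v T : ℚ)) (XG (j + 1)).1 :=
    (hasEgf_XG (j + 1)).1.congr fun S => by simp [vc]
  have h1 := hasEgf_sets _ hx'
  have e : HasEgf (jc (α := α) fun H => H = ∅) 1 := hasEgf_empty.congr fun S => by
    rw [jc]
    split_ifs with hS
    · rw [cnt_eq_one ∅]; · simp
      intro H
      constructor
      · intro h; exact h.2
      · rintro rfl; simp [hS, bip, supp, dom, ran]
    · rw [cnt_eq_zero]; · simp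
      rintro H ⟨⟨_, h⟩, rfl⟩
      exact hS (by simp [← h, supp, dom, ran])
  have e' : HasEgf (jc (α := α) fun H => H = ∅ ∧ ¬ pH H) 1 := e.congr fun S => by
    congr 1; funext H; simp [pH]; tauto
  have h2 := hasEgf_vsucc e e' (hasEgf_XG j).1 (hasEgf_XG j).2
  rw [one_mul, one_mul] at h2
  refine (h1.sub h2).congr fun S => ?_
  have h3 : vc (fun H => H = ∅) (j + 1) S = (cnt fun x : Finset α × V α (j + 1) =>
      (vvalid x.2 S ∧ head x.2 = ∅) ∧ x.1 = ∅ : ℕ) := by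
    rw [vc]; congr 1
    refine cnt_bij (fun v => (∅, v)) (fun x => x.2) ?_ ?_ ?_ ?_
    · rintro v h; exact ⟨h, rfl⟩
    · rintro ⟨A, v⟩ h; exact h.1
    · rintro v h; rfl
    · rintro ⟨A, v⟩ ⟨_, h⟩
      simp only at h; subst h; rfl
  rw [h3]
  refine cnt_sub ?_ ?_
  · rintro ⟨A, v⟩
    simp only [fvalid]
    constructor
    · rintro ⟨h1, h2⟩
      exact ⟨h1, by tauto⟩
    · rintro ⟨h1, h2⟩
      refine ⟨h1, ?_⟩
      by_contra! h5
      refine h2 ⟨⟨?_, h5.2⟩, h5.1⟩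
      have := h1.2
      rw [h5.1] at this; simpa using this
  · rintro ⟨A, v⟩ ⟨⟨h1, h2⟩, h3⟩
    simp only at *
    subst h3
    simpa using h1

end WG

namespace WG
open Finset
open scoped Classical

/-! ### Structure of weakly graded posets with a three-element chain -/

set_option linter.unusedSectionVars false
variable {α : Type} [Fintype α]

def SO (r : α → α → Prop) : Prop := (∀ a, ¬ r a a) ∧ ∀ a b c, r a b → r b c → r a c

def AV (r : α → α → Prop) : Prop :=
  ¬ ∃ w x y z : α, r x y ∧ r y z ∧
      (¬ r w x ∧ ¬ r x w) ∧ (¬ r w y ∧ ¬ r y w) ∧ (¬ r w z ∧ ¬ r z w)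

def RK (r : α → α → Prop) (rk : α → ℕ) : Prop :=
  (∀ a b, r a b → (¬ ∃ c, r a c ∧ r c b) → rk b = rk a + 1) ∧
    ∀ v, ∃ u, Relation.ReflTransGen (fun a b => r a b ∨ r b a) v u ∧ rk u = 0

def Ch3 (r : α → α → Prop) : Prop := ∃ x y z, r x y ∧ r y z

lemma interval_ind {r : α → α → Prop} (h : SO r) (P : α → α → Prop)
    (h1 : ∀ a b, r a b → (¬ ∃ c, r a c ∧ r c b) → P a b)
    (h2 : ∀ a c b, r a c → r c b → P a c → P c b → P a b) : ∀ a b, r a b → P a b := by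
  have key : ∀ n a b, (univ.filter fun c => r a c ∧ r c b).card = n → r a b → P a b := by
    intro n
    induction n using Nat.strong_induction_on with
    | _ n ih =>
      intro a b hn hab
      by_cases hc : ∃ c, r a c ∧ r c b
      · obtain ⟨c, hac, hcb⟩ := hc
        refine h2 a c b hac hcb (ih _ ?_ a c rfl hac) (ih _ ?_ c b rfl hcb)
        · rw [← hn]
          apply card_lt_card
          rw [ssubset_iff_of_subset]
          · exact ⟨c, by simp [hac, hcb], by simp [h.1]⟩
          · intro d; simp only [mem_filter, mem_univ, true_and]
            exact fun hd => ⟨hd.1, h.2 _ _ _ hd.2 hcb⟩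
        · rw [← hn]
          apply card_lt_card
          rw [ssubset_iff_of_subset]
          · exact ⟨c, by simp [hac, hcb], by simp [h.1]⟩
          · intro d; simp only [mem_filter, mem_univ, true_and]
            exact fun hd => ⟨h.2 _ _ _ hac hd.1, hd.2⟩
      · exact h1 a b hab hc
  exact fun a b => key _ a b rfl

lemma rk_lt {r : α → α → Prop} {rk : α → ℕ} (h : SO r) (hr : RK r rk) :
    ∀ a b, r a b → rk a < rk b := by
  refine interval_ind h _ (fun a b hab hc => ?_) (fun a c b _ _ => lt_trans)
  rw [hr.1 a b hab hc]; omega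

lemma rk_mid {r : α → α → Prop} {rk : α → ℕ} (h : SO r) (hr : RK r rk) :
    ∀ a b, r a b → ∀ m, rk a ≤ m → m ≤ rk b →
      ∃ c, (c = a ∨ r a c) ∧ (c = b ∨ r c b) ∧ rk c = m := by
  refine interval_ind h _ (fun a b hab hc m h1 h2 => ?_) (fun a c b hac hcb i1 i2 m h1 h2 => ?_)
  · rw [hr.1 a b hab hc] at h2
    rcases (by omega : m = rk a ∨ m = rk a + 1) with rfl | rfl
    · exact ⟨a, Or.inl rfl, Or.inr hab, rfl⟩
    · exact ⟨b, Or.inr hab, Or.inl rfl, hr.1 a b hab hc⟩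
  · rcases le_total m (rk c) with hm | hm
    · obtain ⟨d, d1, d2, d3⟩ := i1 m h1 hm
      refine ⟨d, d1, Or.inr ?_, d3⟩
      rcases d2 with rfl | d2
      · exact hcb
      · exact h.2 _ _ _ d2 hcb
    · obtain ⟨d, d1, d2, d3⟩ := i2 m hm h2
      refine ⟨d, Or.inr ?_, d2, d3⟩
      rcases d1 with rfl | d1
      · exact hac
      · exact h.2 _ _ _ hac d1

/-- strictly intermediate elements -/
lemma rk_mid' {r : α → α → Prop} {rk : α → ℕ} (h : SO r) (hr : RK r rk)
    {a b : α} (hab : r a b) {m : ℕ} (h1 : rk a < m) (h2 : m < rk b) :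
      ∃ c, r a c ∧ r c b ∧ rk c = m := by
  obtain ⟨c, c1, c2, c3⟩ := rk_mid h hr a b hab m h1.le h2.le
  refine ⟨c, ?_, ?_, c3⟩
  · rcases c1 with rfl | c1
    · omega
    · exact c1
  · rcases c2 with rfl | c2
    · omega
    · exact c2

lemma rk_unique_le {r : α → α → Prop} {rk rk' : α → ℕ} (h : SO r) (hr : RK r rk) (hr' : RK r rk') (v : α) :
    rk v ≤ rk' v := by
  have h1 : ∀ a b, r a b → rk a + rk' b = rk' a + rk b := by
    refine interval_ind h _ (fun a b hab hc => ?_) (fun a c b _ _ => by omega)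
    rw [hr.1 a b hab hc, hr'.1 a b hab hc]; omega
  obtain ⟨u, hu, hu0⟩ := hr.2 v
  have h2 : rk v + rk' u = rk' v + rk u := by
    induction hu with
    | refl => omega
    | tail _ hbc ih =>
      have ih' := fun h0 => ih h0
      clear hu0
      rename_i b c hvb
      have key : ∀ b, Relation.ReflTransGen (fun a b => r a b ∨ r b a) v b →
          rk v + rk' b = rk' v + rk b := by
        intro b hb
        induction hb with
        | refl => omega
        | tail _ hbc ih =>
          rcases hbc with hbc | hbc
          · have := h1 _ _ hbc; omega
          · have := h1 _ _ hbc; omega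
      exact key c (hvb.tail hbc)
  omega

lemma rk_unique {r : α → α → Prop} {rk rk' : α → ℕ} (h : SO r) (hr : RK r rk) (hr' : RK r rk') :
    rk = rk' :=
  funext fun v => le_antisymm (rk_unique_le h hr hr' v) (rk_unique_le h hr' hr v)

lemma below_top {r : α → α → Prop} {rk : α → ℕ} (h : SO r) (hr : RK r rk) (ha : AV r)
    {x y z w : α} (hxy : r x y) (hyz : r y z) (hw : rk w ≤ rk x) : r w z := by
  by_contra hwz
  have l := rk_lt h hr
  have t := h.2
  refine ha ⟨w, x, y, z, hxy, hyz, ⟨?_, ?_⟩, ⟨?_, ?_⟩, hwz, ?_⟩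
  · exact fun h' => hwz (t _ _ _ h' (t _ _ _ hxy hyz))
  · intro h'; have := l _ _ h'; omega
  · exact fun h' => hwz (t _ _ _ h' hyz)
  · intro h'; have := l _ _ h'; have := l _ _ hxy; omega
  · intro h'; have := l _ _ h'; have := l _ _ hxy; have := l _ _ hyz; omega

lemma above_bot {r : α → α → Prop} {rk : α → ℕ} (h : SO r) (hr : RK r rk) (ha : AV r)
    {x y z w : α} (hxy : r x y) (hyz : r y z) (hw : rk z ≤ rk w) : r x w := by
  by_contra hwz
  have l := rk_lt h hr
  have t := h.2
  refine ha ⟨w, x, y, z, hxy, hyz, ⟨?_, hwz⟩, ⟨?_, ?_⟩, ?_, ?_⟩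
  · intro h'; have := l _ _ h'; have := l _ _ hxy; have := l _ _ hyz; omega
  · intro h'; have := l _ _ h'; have := l _ _ hyz; omega
  · exact fun h' => hwz (t _ _ _ hxy h')
  · intro h'; have := l _ _ h'; omega
  · exact fun h' => hwz (t _ _ _ (t _ _ _ hxy hyz) h')

lemma rel_of_rk {r : α → α → Prop} {rk : α → ℕ} (h : SO r) (hr : RK r rk) (ha : AV r) (hc : Ch3 r)
    {u v : α} (huv : rk u + 2 ≤ rk v) : r u v := by
  obtain ⟨x, y, z', hxy, hyz'⟩ := hc
  have l := rk_lt h hr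
  have t := h.2
  -- a saturated chain
  have hxz' := t _ _ _ hxy hyz'
  have l1 := l _ _ hxy
  have l2 := l _ _ hyz'
  obtain ⟨z, z1, z2, z3⟩ := rk_mid h hr x z' hxz' (rk x + 2) (by omega) (by omega)
  have hxz : r x z := by
    rcases z1 with rfl | z1
    · omega
    · exact z1
  obtain ⟨y', y1, y2, y3⟩ := rk_mid' h hr hxz (m := rk x + 1) (by omega) (by omega)
  rcases le_or_gt (rk u) (rk x) with hu | hu
  · have huz := below_top h hr ha y1 y2 hu
    obtain ⟨c, c1, c2, c3⟩ := rk_mid h hr u z huz (rk u + 2) (by omega) (by omega)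
    have huc : r u c := by
      rcases c1 with rfl | c1
      · omega
      · exact c1
    obtain ⟨d, d1, d2, d3⟩ := rk_mid' h hr huc (m := rk u + 1) (by omega) (by omega)
    exact above_bot h hr ha d1 d2 (by omega)
  · have hxv : r x v := above_bot h hr ha y1 y2 (by omega)
    obtain ⟨c, c1, c2, c3⟩ := rk_mid h hr x v hxv (rk v - 2) (by omega) (by omega)
    have hcv : r c v := by
      rcases c2 with rfl | c2
      · omega
      · exact c2
    obtain ⟨d, d1, d2, d3⟩ := rk_mid' h hr hcv (m := rk v - 1) (by omega) (by omega)
    exact below_top h hr ha d1 d2 (by omega)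

/-! ### Graded data -/

/-- the part of `H` starting at level `i` -/
noncomputable def Hi (lv : α → ℕ) (H : Finset (α × α)) (i : ℕ) : Finset (α × α) :=
  H.filter fun p => lv p.1 = i

lemma mem_Hi {lv : α → ℕ} {H : Finset (α × α)} {i : ℕ} {p : α × α} :
    p ∈ Hi lv H i ↔ p ∈ H ∧ lv p.1 = i := by simp [Hi]

/-- the elements of level `i` outside the support of `H` -/
noncomputable def Ai (lv : α → ℕ) (H : Finset (α × α)) (i : ℕ) : Finset α :=
  univ.filter fun a => lv a = i ∧ a ∉ supp H

lemma mem_Ai {lv : α → ℕ} {H : Finset (α × α)} {i : ℕ} {a : α} :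
    a ∈ Ai lv H i ↔ lv a = i ∧ a ∉ supp H := by simp [Ai]

lemma mem_supp {H : Finset (α × α)} {a : α} : a ∈ supp H ↔ a ∈ dom H ∨ a ∈ ran H := by
  simp [supp]

structure GB (k : ℕ) (lv : α → ℕ) (H : Finset (α × α)) : Prop where
  le : ∀ a, lv a ≤ k
  succ : ∀ a b, (a, b) ∈ H → lv b = lv a + 1
  disj : Disjoint (dom H) (ran H)

structure GD (k : ℕ) (lv : α → ℕ) (H : Finset (α × α)) : Prop extends GB k lv H where
  zero : ∃ a, lv a = 0
  top : ∃ a, lv a = k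
  mid : ∀ i, i + 1 < k → Ai lv H (i + 1) ≠ ∅ ∨ pH (Hi lv H i) ∨ qH (Hi lv H (i + 1))

def rel (lv : α → ℕ) (H : Finset (α × α)) (a b : α) : Prop :=
  lv a + 2 ≤ lv b ∨ (lv b = lv a + 1 ∧ (a, b) ∉ H)

section
variable {k : ℕ} {lv : α → ℕ} {H : Finset (α × α)}

lemma rel_lt {a b : α} (h : rel lv H a b) : lv a < lv b := by
  rcases h with h | h <;> omega

lemma GB.nd (h : GB k lv H) {a b c : α} (h1 : (a, b) ∈ H) (h2 : (b, c) ∈ H) : False :=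
  (disjoint_left.1 h.disj) (mem_dom.2 ⟨c, h2⟩) (mem_ran.2 ⟨a, h1⟩)

lemma GD.so : SO (rel lv H) := by
  refine ⟨fun a ha => ?_, fun a b c hab hbc => Or.inl ?_⟩
  · have := rel_lt ha; omega
  · have := rel_lt hab; have := rel_lt hbc; omega

lemma GD.av (h : GD k lv H) : AV (rel lv H) := by
  rintro ⟨w, x, y, z, hxy, hyz, ⟨h1, h2⟩, -, ⟨h3, h4⟩⟩
  have := rel_lt hxy
  have := rel_lt hyz
  simp only [rel, not_or, not_and, not_not] at h1 h2 h3 h4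
  exact h.nd (h2.2 (by omega)) (h3.2 (by omega))

lemma GD.common (h : GD k lv H) {a b : α} (hab : lv b = lv a + 2) :
    ∃ c, rel lv H a c ∧ rel lv H c b ∧ lv c = lv a + 1 := by
  have hb := h.le b
  rcases h.mid (lv a) (by omega) with h1 | h1 | h1
  · obtain ⟨c, hc⟩ := nonempty_iff_ne_empty.2 h1
    rw [mem_Ai, mem_supp, not_or] at hc
    refine ⟨c, Or.inr ⟨hc.1, fun h' => hc.2.2 (mem_ran.2 ⟨_, h'⟩)⟩,
      Or.inr ⟨by omega, fun h' => hc.2.1 (mem_dom.2 ⟨_, h'⟩)⟩, hc.1⟩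
  · have : ∃ z ∈ ran (Hi lv H (lv a)), (a, z) ∉ Hi lv H (lv a) := by
      by_cases ha : a ∈ dom (Hi lv H (lv a))
      · exact h1.2 a ha
      · obtain ⟨p, hp⟩ := nonempty_iff_ne_empty.2 h1.1
        exact ⟨p.2, mem_ran.2 ⟨p.1, hp⟩, fun h' => ha (mem_dom.2 ⟨_, h'⟩)⟩
    obtain ⟨z, hz, haz⟩ := this
    obtain ⟨x, hx⟩ := mem_ran.1 hz
    rw [mem_Hi] at hx haz
    have e := h.succ _ _ hx.1
    simp only at hx
    refine ⟨z, Or.inr ⟨by omega, fun h' => haz ⟨h', rfl⟩⟩, Or.inr ⟨by omega, fun h' => h.nd hx.1 h'⟩, by omega⟩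
  · have : ∃ z ∈ dom (Hi lv H (lv a + 1)), (z, b) ∉ Hi lv H (lv a + 1) := by
      by_cases ha : b ∈ ran (Hi lv H (lv a + 1))
      · exact h1.2 b ha
      · obtain ⟨p, hp⟩ := nonempty_iff_ne_empty.2 h1.1
        exact ⟨p.1, mem_dom.2 ⟨p.2, hp⟩, fun h' => ha (mem_ran.2 ⟨_, h'⟩)⟩
    obtain ⟨z, hz, haz⟩ := this
    obtain ⟨x, hx⟩ := mem_dom.1 hz
    rw [mem_Hi] at hx haz
    have e := h.succ _ _ hx.1
    simp only at hx
    refine ⟨z, Or.inr ⟨by omega, fun h' => h.nd h' hx.1⟩, Or.inr ⟨by omega, fun h' => haz ⟨h', by simp; omega⟩⟩, by omega⟩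

lemma GD.level (h : GD k lv H) {i : ℕ} (hi : i ≤ k) : ∃ a, lv a = i := by
  rcases Nat.eq_zero_or_pos i with rfl | h0
  · exact h.zero
  rcases Nat.eq_or_lt_of_le hi with rfl | h1
  · exact h.top
  obtain ⟨j, rfl⟩ : ∃ j, i = j + 1 := ⟨i - 1, by omega⟩
  rcases h.mid j h1 with h2 | h2 | h2
  · obtain ⟨c, hc⟩ := nonempty_iff_ne_empty.2 h2
    exact ⟨c, (mem_Ai.1 hc).1⟩
  · obtain ⟨p, hp⟩ := nonempty_iff_ne_empty.2 h2.1
    rw [mem_Hi] at hp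
    exact ⟨p.2, by rw [h.succ p.1 p.2 hp.1, hp.2]⟩
  · obtain ⟨p, hp⟩ := nonempty_iff_ne_empty.2 h2.1
    rw [mem_Hi] at hp
    exact ⟨p.1, hp.2⟩

lemma GD.rk (h : GD k lv H) (hk : 2 ≤ k) : RK (rel lv H) lv := by
  refine ⟨fun a b hab hc => ?_, fun v => ?_⟩
  · by_contra hne
    have := rel_lt hab
    have h2 := h.le b
    apply hc
    by_cases e : lv b = lv a + 2
    · obtain ⟨c, c1, c2, -⟩ := h.common e
      exact ⟨c, c1, c2⟩
    · obtain ⟨b', hb'⟩ := h.level (i := lv a + 2) (by omega)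
      obtain ⟨c, c1, c2, c3⟩ := h.common hb'
      exact ⟨c, c1, Or.inl (by omega)⟩
  · obtain ⟨u, hu⟩ := h.zero
    by_cases hv : lv v = 0
    · exact ⟨v, Relation.ReflTransGen.refl, hv⟩
    refine ⟨u, ?_, hu⟩
    by_cases huv : rel lv H u v
    · exact Relation.ReflTransGen.single (Or.inr huv)
    have h1 : lv v = 1 ∧ (u, v) ∈ H := by
      simp only [rel, not_or, not_and, not_not] at huv
      exact ⟨by omega, huv.2 (by omega)⟩
    obtain ⟨z, hz⟩ := h.level hk
    refine (Relation.ReflTransGen.single (b := z) (Or.inl ?_)).tail (Or.inr ?_)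
    · exact Or.inr ⟨by omega, fun h' => h.nd h1.2 h'⟩
    · exact Or.inl (by omega)

lemma GD.ch3 (h : GD k lv H) (hk : 2 ≤ k) : Ch3 (rel lv H) := by
  obtain ⟨u, hu⟩ := h.zero
  obtain ⟨z, hz⟩ := h.level hk
  obtain ⟨c, c1, c2, -⟩ := h.common (a := u) (b := z) (by omega)
  exact ⟨u, c, z, c1, c2⟩

lemma GD.card (h : GD k lv H) : k + 1 ≤ Fintype.card α := by
  have : range (k + 1) ⊆ univ.image lv := by
    intro i hi
    obtain ⟨a, ha⟩ := h.level (i := i) (by simp at hi; omega)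
    exact mem_image.2 ⟨a, mem_univ _, ha⟩
  calc k + 1 = (range (k + 1)).card := by simp
    _ ≤ _ := card_le_card this
    _ ≤ _ := card_image_le
    _ = _ := by simp

lemma GB.recover (h : GB k lv H) (p : α × α) :
    p ∈ H ↔ lv p.2 = lv p.1 + 1 ∧ ¬ rel lv H p.1 p.2 := by
  constructor
  · intro hp
    have := h.succ _ _ hp
    refine ⟨this, ?_⟩
    simp only [rel, not_or, not_and, not_not]
    exact ⟨by omega, fun _ => hp⟩
  · rintro ⟨h1, h2⟩
    simp only [rel, not_or, not_and, not_not] at h2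
    exact h2.2 h1

lemma GD.unique {k' : ℕ} {lv' : α → ℕ} {H' : Finset (α × α)} (h : GD k lv H) (h' : GD k' lv' H')
    (hk : 2 ≤ k) (hk' : 2 ≤ k') (e : rel lv H = rel lv' H') : k = k' ∧ lv = lv' ∧ H = H' := by
  have e1 : lv = lv' := rk_unique (GD.so (lv := lv) (H := H)) (h.rk hk) (e ▸ h'.rk hk')
  subst e1
  refine ⟨?_, rfl, ?_⟩
  · obtain ⟨a, ha⟩ := h.top
    obtain ⟨b, hb⟩ := h'.top
    have := h.le b
    have := h'.le a
    omega
  · ext p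
    rw [h.recover, h'.recover, e]

end

lemma exists_GD {r : α → α → Prop} {rk : α → ℕ} (h : SO r) (hr : RK r rk) (ha : AV r) (hc : Ch3 r) :
    ∃ k H, 2 ≤ k ∧ GD k rk H ∧ r = rel rk H := by
  have l := rk_lt h hr
  have big : ∀ {u v}, rk u + 2 ≤ rk v → r u v := fun {u v} => rel_of_rk h hr ha hc
  obtain ⟨x, y, z, hxy, hyz⟩ := id hc
  set H : Finset (α × α) := univ.filter fun p => rk p.2 = rk p.1 + 1 ∧ ¬ r p.1 p.2 with hH
  have mH : ∀ a b, (a, b) ∈ H ↔ rk b = rk a + 1 ∧ ¬ r a b := by intro a b; simp [hH]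
  obtain ⟨t, -, ht⟩ := exists_max_image univ rk ⟨x, mem_univ _⟩
  have ht' : ∀ a, rk a ≤ rk t := fun a => ht a (mem_univ _)
  have hk : 2 ≤ rk t := by
    have := l _ _ hxy
    have := l _ _ hyz
    have := ht' z
    omega
  obtain ⟨u, -, hu⟩ := hr.2 x
  have level : ∀ i, i ≤ rk t → ∃ a, rk a = i := by
    intro i hi
    obtain ⟨c, -, -, hc⟩ := rk_mid h hr u t (big (by omega)) i (by omega) hi
    exact ⟨c, hc⟩
  refine ⟨rk t, H, hk, ⟨⟨ht', fun a b hab => ((mH a b).1 hab).1, ?_⟩, ⟨u, hu⟩, ⟨t, rfl⟩, ?_⟩, ?_⟩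
  · rw [disjoint_left]
    intro a h1 h2
    obtain ⟨z, hz⟩ := mem_dom.1 h1
    obtain ⟨x, hx⟩ := mem_ran.1 h2
    rw [mH] at hz hx
    obtain ⟨y, y1, y2, y3⟩ := rk_mid' h hr (big (u := x) (v := z) (by omega)) (m := rk x + 1)
      (by omega) (by omega)
    refine ha ⟨a, x, y, z, y1, y2, ⟨fun h' => ?_, hx.2⟩, ⟨fun h' => ?_, fun h' => ?_⟩, hz.2, fun h' => ?_⟩ <;>
    · have := l _ _ h'; omega
  · intro i hi
    by_contra! hcon
    obtain ⟨c1, c2, c3⟩ := hcon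
    have ex : ∃ x, rk x = i ∧ ∀ y ∈ ran (Hi rk H i), (x, y) ∈ H := by
      by_cases he : Hi rk H i = ∅
      · obtain ⟨a, ha⟩ := level i (by omega)
        exact ⟨a, ha, by simp [he, ran]⟩
      · simp only [pH, not_and] at c2
        have := c2 he
        push Not at this
        obtain ⟨x, hx, h2⟩ := this
        obtain ⟨w, hw⟩ := mem_dom.1 hx
        exact ⟨x, (mem_Hi.1 hw).2, fun y hy => (mem_Hi.1 (h2 y hy)).1⟩
    have ez : ∃ z, rk z = i + 2 ∧ ∀ y ∈ dom (Hi rk H (i + 1)), (y, z) ∈ H := by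
      by_cases he : Hi rk H (i + 1) = ∅
      · obtain ⟨a, ha⟩ := level (i + 2) (by omega)
        exact ⟨a, ha, by simp [he, dom]⟩
      · simp only [qH, not_and] at c3
        have := c3 he
        push Not at this
        obtain ⟨z, hz, h2⟩ := this
        obtain ⟨w, hw⟩ := mem_ran.1 hz
        rw [mem_Hi, mH] at hw
        simp only at hw
        exact ⟨z, by omega, fun y hy => (mem_Hi.1 (h2 y hy)).1⟩
    obtain ⟨x, hx, hx'⟩ := ex
    obtain ⟨z, hz, hz'⟩ := ez
    obtain ⟨y, y1, y2, y3⟩ := rk_mid' h hr (big (u := x) (v := z) (by omega)) (m := i + 1)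
      (by omega) (by omega)
    have hy : y ∈ supp H := by
      by_contra hy
      have : y ∈ Ai rk H (i + 1) := mem_Ai.2 ⟨y3, hy⟩
      rw [c1] at this
      simp at this
    rcases mem_supp.1 hy with hy | hy
    · obtain ⟨w, hw⟩ := mem_dom.1 hy
      exact ((mH _ _).1 (hz' y (mem_dom.2 ⟨w, mem_Hi.2 ⟨hw, y3⟩⟩))).2 y2
    · obtain ⟨w, hw⟩ := mem_ran.1 hy
      have := ((mH _ _).1 hw).1
      exact ((mH _ _).1 (hx' y (mem_ran.2 ⟨w, mem_Hi.2 ⟨hw, by simp only; omega⟩⟩))).2 y1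
  · funext a b
    apply propext
    simp only [rel, mH, not_and, not_not]
    constructor
    · intro hab
      have := l _ _ hab
      by_cases e : rk b = rk a + 1
      · exact Or.inr ⟨e, fun _ => hab⟩
      · exact Or.inl (by omega)
    · rintro (h1 | ⟨h1, h2⟩)
      · exact big h1
      · exact h2 h1

end WG

namespace WG
open Finset
open scoped Classical

/-! ### Words and graded data -/

set_option linter.unusedSectionVars false
variable {α : Type} [Fintype α]

/-- all junctions of a word -/
noncomputable def HH : ∀ {j : ℕ}, V α j → Finset (α × α)
  | 0, v => v.1
  | _ + 1, v => v.1 ∪ HH v.2.2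

/-- the levels of the elements of a word starting at level `i` -/
noncomputable def lvl : ∀ {j : ℕ}, V α j → ℕ → α → ℕ
  | 0, v, i, a => if a ∈ dom v.1 then i else i + 1
  | _ + 1, v, i, a => if a ∈ dom v.1 then i else if a ∈ ran v.1 ∨ a ∈ v.2.1 then i + 1
      else lvl v.2.2 (i + 1) a

/-- the word of graded data, starting at level `i` -/
noncomputable def toV (lv : α → ℕ) (H : Finset (α × α)) : ∀ j : ℕ, ℕ → V α j
  | 0, i => (Hi lv H i, Ai lv H (i + 1))
  | j + 1, i => (Hi lv H i, Ai lv H (i + 1), toV lv H j (i + 1))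

lemma head_toV (lv : α → ℕ) (H : Finset (α × α)) (j i : ℕ) : head (toV lv H j i) = Hi lv H i := by
  cases j <;> rfl

lemma mem_supp_of_mem {H : Finset (α × α)} {a b : α} (h : (a, b) ∈ H) : a ∈ supp H ∧ b ∈ supp H :=
  ⟨mem_supp.2 (Or.inl (mem_dom.2 ⟨b, h⟩)), mem_supp.2 (Or.inr (mem_ran.2 ⟨a, h⟩))⟩

lemma lvl_bounds : ∀ {j : ℕ} (v : V α j) (i : ℕ) (a : α), i ≤ lvl v i a ∧ lvl v i a ≤ i + j + 1
  | 0, v, i, a => by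
    simp only [lvl]; split_ifs <;> omega
  | j + 1, v, i, a => by
    have := lvl_bounds v.2.2 (i + 1) a
    simp only [lvl]; split_ifs <;> omega

lemma lvl_eq : ∀ {j : ℕ} (v : V α j) (i : ℕ) (a : α), lvl v i a = i ↔ a ∈ dom (head v)
  | 0, v, i, a => by
    simp only [lvl, head]; split_ifs with h <;> simp [h]
  | j + 1, v, i, a => by
    have := lvl_bounds v.2.2 (i + 1) a
    simp only [lvl, head]; split_ifs with h <;> simp [h]; omega

lemma HH_sub : ∀ {j : ℕ} (v : V α j) (S : Finset α), vvalid v S → ∀ a b, (a, b) ∈ HH v → a ∈ S ∧ b ∈ S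
  | 0, v, S, h, a, b, hab =>
    ⟨h.1.2 (mem_supp_of_mem hab).1, h.1.2 (mem_supp_of_mem hab).2⟩
  | j + 1, v, S, h, a, b, hab => by
    rcases mem_union.1 hab with hab | hab
    · exact ⟨h.1.2 (mem_supp_of_mem hab).1, h.1.2 (mem_supp_of_mem hab).2⟩
    · have := HH_sub v.2.2 _ h.2.1.2 a b hab
      simp only [mem_sdiff] at this
      exact ⟨this.1.1.1, this.2.1.1⟩

lemma head_sub_HH : ∀ {j : ℕ} (v : V α j), head v ⊆ HH v
  | 0, v => subset_rfl
  | j + 1, v => subset_union_left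

lemma lvl_succ_of_notMem {j : ℕ} (v : V α (j + 1)) (i : ℕ) (a : α) (h1 : a ∉ supp v.1)
    (h2 : a ∉ v.2.1) : lvl v i a = lvl v.2.2 (i + 1) a := by
  rw [mem_supp, not_or] at h1
  simp [lvl, h1, h2]

lemma HH_lvl : ∀ {j : ℕ} (v : V α j) (i : ℕ) (S : Finset α), vvalid v S → ∀ a b, (a, b) ∈ HH v →
    lvl v i b = lvl v i a + 1
  | 0, v, i, S, h, a, b, hab => by
    have h1 : a ∈ dom v.1 := mem_dom.2 ⟨b, hab⟩
    have h2 : b ∉ dom v.1 := fun h' => disjoint_left.1 h.1.1 h' (mem_ran.2 ⟨a, hab⟩)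
    simp [lvl, h1, h2]
  | j + 1, v, i, S, h, a, b, hab => by
    rcases mem_union.1 hab with hab | hab
    · have h1 : a ∈ dom v.1 := mem_dom.2 ⟨b, hab⟩
      have h3 : b ∈ ran v.1 := mem_ran.2 ⟨a, hab⟩
      have h2 : b ∉ dom v.1 := fun h' => disjoint_left.1 h.1.1 h' h3
      simp [lvl, h1, h2, h3]
    · have := HH_sub v.2.2 _ h.2.1.2 a b hab
      simp only [mem_sdiff] at this
      rw [lvl_succ_of_notMem v i a this.1.1.2 this.1.2, lvl_succ_of_notMem v i b this.2.1.2 this.2.2]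
      exact HH_lvl v.2.2 (i + 1) _ h.2.1.2 a b hab

lemma HH_disj : ∀ {j : ℕ} (v : V α j) (S : Finset α), vvalid v S → ∀ a b c, (a, b) ∈ HH v →
    (b, c) ∈ HH v → False
  | 0, v, S, h, a, b, c, hab, hbc =>
    disjoint_left.1 h.1.1 (mem_dom.2 ⟨c, hbc⟩) (mem_ran.2 ⟨a, hab⟩)
  | j + 1, v, S, h, a, b, c, hab, hbc => by
    have hs := HH_sub v.2.2 _ h.2.1.2
    rcases mem_union.1 hab with hab | hab <;> rcases mem_union.1 hbc with hbc | hbc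
    · exact disjoint_left.1 h.1.1 (mem_dom.2 ⟨c, hbc⟩) (mem_ran.2 ⟨a, hab⟩)
    · have := (hs _ _ hbc).1
      simp only [mem_sdiff] at this
      exact this.1.2 (mem_supp_of_mem hab).2
    · have := (hs _ _ hab).2
      simp only [mem_sdiff] at this
      exact this.1.2 (mem_supp_of_mem hbc).1
    · exact HH_disj v.2.2 _ h.2.1.2 a b c hab hbc

lemma lvl_top : ∀ {j : ℕ} (v : V α j) (i : ℕ) (S : Finset α), vvalid v S → ∃ a ∈ S, lvl v i a = i + j + 1
  | 0, v, i, S, h => by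
    rcases h.2.2 with h1 | h1
    · obtain ⟨⟨a, b⟩, hp⟩ := nonempty_iff_ne_empty.2 h1
      have h2 : b ∉ dom v.1 := fun h' => disjoint_left.1 h.1.1 h' (mem_ran.2 ⟨a, hp⟩)
      exact ⟨b, h.1.2 (mem_supp_of_mem hp).2, by simp [lvl, h2]⟩
    · obtain ⟨a, ha⟩ := nonempty_iff_ne_empty.2 h1
      rw [h.2.1, mem_sdiff, mem_supp, not_or] at ha
      exact ⟨a, ha.1, by simp [lvl, ha.2.1]⟩
  | j + 1, v, i, S, h => by
    obtain ⟨a, ha, h1⟩ := lvl_top v.2.2 (i + 1) _ h.2.1.2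
    simp only [mem_sdiff] at ha
    refine ⟨a, ha.1.1, ?_⟩
    rw [lvl_succ_of_notMem v i a ha.1.2 ha.2, h1]; omega

lemma toV_of_valid (lv : α → ℕ) (H : Finset (α × α)) : ∀ {j : ℕ} (v : V α j) (i : ℕ) (S : Finset α),
    vvalid v S → (∀ a ∈ S, lv a = lvl v i a) → (∀ a, a ∉ S → lv a ≤ i) → HH v ⊆ H →
    (∀ a b, (a, b) ∈ H → (a, b) ∉ HH v → lv a < i ∧ a ∉ S ∧ b ∉ S) → toV lv H j i = v
  | 0, v, i, S, h, h1, h2, h3, h4 => by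
    have e1 : Hi lv H i = v.1 := by
      ext ⟨a, b⟩
      rw [mem_Hi]
      constructor
      · rintro ⟨hab, hl⟩
        by_contra hc
        have := (h4 a b hab hc).1
        simp only at hl; omega
      · intro hab
        refine ⟨h3 hab, ?_⟩
        have : a ∈ S := h.1.2 (mem_supp_of_mem hab).1
        simp only
        rw [h1 a this, lvl_eq]
        exact mem_dom.2 ⟨b, hab⟩
    have e2 : Ai lv H (i + 1) = v.2 := by
      ext a
      rw [mem_Ai, h.2.1, mem_sdiff]
      constructor
      · rintro ⟨hl, hs⟩
        refine ⟨?_, fun h' => hs ?_⟩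
        · by_contra hc
          have := h2 a hc
          omega
        · rcases mem_supp.1 h' with h' | h'
          · obtain ⟨b, hb⟩ := mem_dom.1 h'
            exact (mem_supp_of_mem (h3 hb)).1
          · obtain ⟨b, hb⟩ := mem_ran.1 h'
            exact (mem_supp_of_mem (h3 hb)).2
      · rintro ⟨hS, hs⟩
        constructor
        · rw [h1 a hS]
          rw [mem_supp, not_or] at hs
          simp [lvl, hs.1]
        · intro h'
          rcases mem_supp.1 h' with h' | h'
          · obtain ⟨b, hb⟩ := mem_dom.1 h'
            by_cases hc : (a, b) ∈ HH v
            · exact hs (mem_supp_of_mem (H := v.1) hc).1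
            · exact (h4 _ _ hb hc).2.1 hS
          · obtain ⟨b, hb⟩ := mem_ran.1 h'
            by_cases hc : (b, a) ∈ HH v
            · exact hs (mem_supp_of_mem (H := v.1) hc).2
            · exact (h4 _ _ hb hc).2.2 hS
    exact Prod.ext e1 e2
  | j + 1, v, i, S, h, h1, h2, h3, h4 => by
    have hs := HH_sub v.2.2 _ h.2.1.2
    have h30 : v.1 ⊆ H := subset_union_left.trans h3
    have h3' : HH v.2.2 ⊆ H := (subset_union_right (s₁ := v.1)).trans h3
    have h1' : ∀ a ∈ (S \ supp v.1) \ v.2.1, lv a = lvl v.2.2 (i + 1) a := by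
      intro a ha
      simp only [mem_sdiff] at ha
      rw [h1 a ha.1.1, lvl_succ_of_notMem v i a ha.1.2 ha.2]
    have e1 : Hi lv H i = v.1 := by
      ext ⟨a, b⟩
      rw [mem_Hi]
      constructor
      · rintro ⟨hab, hl⟩
        by_contra hc
        simp only at hl
        by_cases hd : (a, b) ∈ HH v.2.2
        · have := h1' a (hs _ _ hd).1
          have := lvl_bounds v.2.2 (i + 1) a
          omega
        have := (h4 a b hab (by
          intro h'
          rcases mem_union.1 h' with h' | h'
          · exact hc h'
          · exact hd h')).1
        omega
      · intro hab
        refine ⟨h30 hab, ?_⟩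
        have : a ∈ S := h.1.2 (mem_supp_of_mem hab).1
        simp only
        rw [h1 a this, lvl_eq]
        exact mem_dom.2 ⟨b, hab⟩
    have e2 : Ai lv H (i + 1) = v.2.1 := by
      ext a
      rw [mem_Ai]
      constructor
      · rintro ⟨hl, hs'⟩
        have hS : a ∈ S := by
          by_contra hc
          have := h2 a hc
          omega
        have hsv : a ∉ supp v.1 := by
          intro h'
          rcases mem_supp.1 h' with h' | h'
          · obtain ⟨b, hb⟩ := mem_dom.1 h'
            exact hs' (mem_supp_of_mem (h30 hb)).1
          · obtain ⟨b, hb⟩ := mem_ran.1 h'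
            exact hs' (mem_supp_of_mem (h30 hb)).2
        by_contra hA
        rw [h1 a hS, lvl_succ_of_notMem v i a hsv hA, lvl_eq] at hl
        obtain ⟨b, hb⟩ := mem_dom.1 hl
        exact hs' (mem_supp_of_mem (h3' (head_sub_HH _ hb))).1
      · intro hA
        have hA' := h.2.1.1 hA
        rw [mem_sdiff] at hA'
        obtain ⟨hS, hsv⟩ := hA'
        have hnd := hsv
        rw [mem_supp, not_or] at hnd
        refine ⟨?_, ?_⟩
        · rw [h1 a hS]
          simp [lvl, hA, hnd.1]
        · intro h'
          rcases mem_supp.1 h' with h' | h'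
          · obtain ⟨b, hb⟩ := mem_dom.1 h'
            by_cases hc : (a, b) ∈ HH v
            · rcases mem_union.1 hc with hc | hc
              · exact hsv (mem_supp_of_mem (H := v.1) hc).1
              · have := (hs _ _ hc).1
                simp [hA] at this
            · exact (h4 _ _ hb hc).2.1 hS
          · obtain ⟨b, hb⟩ := mem_ran.1 h'
            by_cases hc : (b, a) ∈ HH v
            · rcases mem_union.1 hc with hc | hc
              · exact hsv (mem_supp_of_mem (H := v.1) hc).2
              · have := (hs _ _ hc).2
                simp [hA] at this
            · exact (h4 _ _ hb hc).2.2 hS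
    refine Prod.ext e1 (Prod.ext e2 ?_)
    refine toV_of_valid lv H v.2.2 (i + 1) _ h.2.1.2 h1' ?_ h3' ?_
    · intro a ha
      by_cases hS : a ∈ S
      · rw [h1 a hS]
        simp only [mem_sdiff, not_and, not_not, hS, mem_supp, not_or] at ha
        by_cases hd : a ∈ dom v.1
        · simp [lvl, hd]
        · by_cases hr : a ∈ ran v.1
          · simp [lvl, hd, hr]
          · simp [lvl, hd, hr, ha ⟨trivial, hd, hr⟩]
      · have := h2 a hS; omega
    · intro a b hab hnv
      by_cases hv : (a, b) ∈ v.1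
      · refine ⟨?_, ?_, ?_⟩
        · have : a ∈ S := h.1.2 (mem_supp_of_mem hv).1
          rw [h1 a this, (lvl_eq v i a).2 (mem_dom.2 ⟨b, hv⟩)]; omega
        · simp [(mem_supp_of_mem hv).1]
        · simp [(mem_supp_of_mem hv).2]
      · have := h4 a b hab (by
          intro h'
          rcases mem_union.1 h' with h' | h'
          · exact hv h'
          · exact hnv h')
        refine ⟨by omega, ?_, ?_⟩
        · simp [this.2.1]
        · simp [this.2.2]

lemma mid_of_valid (lv : α → ℕ) (H : Finset (α × α)) : ∀ (j i : ℕ) (S : Finset α),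
    vvalid (toV lv H j i) S → ∀ m, i ≤ m → m < i + j →
      Ai lv H (m + 1) ≠ ∅ ∨ pH (Hi lv H m) ∨ qH (Hi lv H (m + 1))
  | 0, i, S, h, m, h1, h2 => by omega
  | j + 1, i, S, h, m, h1, h2 => by
    rcases Nat.eq_or_lt_of_le h1 with rfl | h1
    · have := h.2.2
      simp only [toV, head_toV] at this
      exact this
    · exact mid_of_valid lv H j (i + 1) _ h.2.1.2 m h1 (by omega)

/-- the set of elements above level `i`, together with the open part of level `i` -/
noncomputable def Si (lv : α → ℕ) (H : Finset (α × α)) (i : ℕ) : Finset α :=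
  univ.filter fun a => i < lv a ∨ (lv a = i ∧ a ∈ dom H)

lemma mem_Si {lv : α → ℕ} {H : Finset (α × α)} {i : ℕ} {a : α} :
    a ∈ Si lv H i ↔ i < lv a ∨ (lv a = i ∧ a ∈ dom H) := by simp [Si]

section
variable {k : ℕ} {lv : α → ℕ} {H : Finset (α × α)}

lemma mem_dom_Hi {i : ℕ} {a : α} : a ∈ dom (Hi lv H i) ↔ a ∈ dom H ∧ lv a = i := by
  simp only [mem_dom, mem_Hi]
  constructor
  · rintro ⟨b, h1, h2⟩; exact ⟨⟨b, h1⟩, h2⟩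
  · rintro ⟨⟨b, h1⟩, h2⟩; exact ⟨b, h1, h2⟩

lemma GB.mem_ran_Hi (h : GB k lv H) {i : ℕ} {a : α} : a ∈ ran (Hi lv H i) ↔ a ∈ ran H ∧ lv a = i + 1 := by
  simp only [mem_ran, mem_Hi]
  constructor
  · rintro ⟨b, h1, h2⟩; exact ⟨⟨b, h1⟩, by rw [h.succ _ _ h1, h2]⟩
  · rintro ⟨⟨b, h1⟩, h2⟩; exact ⟨b, h1, by have := h.succ _ _ h1; omega⟩

lemma GB.bip_Hi (h : GB k lv H) (i : ℕ) : bip (Hi lv H i) := by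
  rw [bip, disjoint_left]
  intro a h1 h2
  exact disjoint_left.1 h.disj (mem_dom_Hi.1 h1).1 (h.mem_ran_Hi.1 h2).1

lemma GB.supp_Hi (h : GB k lv H) (i : ℕ) : supp (Hi lv H i) ⊆ Si lv H i := by
  intro a ha
  rw [mem_supp, mem_dom_Hi, h.mem_ran_Hi] at ha
  rw [mem_Si]
  rcases ha with ha | ha
  · exact Or.inr ⟨ha.2, ha.1⟩
  · exact Or.inl (by omega)

lemma GB.Si_succ (h : GB k lv H) (i : ℕ) :
    (Si lv H i \ supp (Hi lv H i)) \ Ai lv H (i + 1) = Si lv H (i + 1) := by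
  ext a
  have hd : a ∈ dom H → a ∉ ran H := fun h1 => disjoint_left.1 h.disj h1
  simp only [mem_sdiff, mem_Si, mem_supp, mem_dom_Hi, h.mem_ran_Hi, mem_Ai]
  by_cases h1 : a ∈ dom H <;> by_cases h2 : a ∈ ran H <;> simp_all <;> omega

lemma GB.Ai_sub (h : GB k lv H) (i : ℕ) : Ai lv H (i + 1) ⊆ Si lv H i \ supp (Hi lv H i) := by
  intro a
  simp only [mem_sdiff, mem_Si, mem_supp, mem_dom_Hi, h.mem_ran_Hi, mem_Ai]
  rintro ⟨h1, h2⟩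
  rw [not_or] at h2
  exact ⟨Or.inl (by omega), by simp [h2]⟩

lemma GB.dom_lt (h : GB k lv H) {a : α} (ha : a ∈ dom H) : lv a < k := by
  obtain ⟨b, hb⟩ := mem_dom.1 ha
  have := h.succ _ _ hb
  have := h.le b
  omega

lemma GD.valid_toV (h : GD k lv H) : ∀ j i : ℕ, i + j + 1 = k → vvalid (toV lv H j i) (Si lv H i)
  | 0, i, e => by
    refine ⟨⟨h.bip_Hi i, h.supp_Hi i⟩, ?_, ?_⟩
    · show Ai lv H (i + 1) = Si lv H i \ supp (Hi lv H i)
      refine subset_antisymm (h.Ai_sub i) ?_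
      intro a ha
      have h1 := h.le a
      have h2 : a ∈ dom H → lv a < k := fun h' => h.dom_lt h'
      simp only [mem_sdiff, mem_Si, mem_supp, mem_dom_Hi, h.mem_ran_Hi, mem_Ai] at ha ⊢
      by_cases h3 : a ∈ dom H <;> by_cases h4 : a ∈ ran H <;> simp_all <;> omega
    · show Hi lv H i ≠ ∅ ∨ Ai lv H (i + 1) ≠ ∅
      obtain ⟨a, ha⟩ := h.top
      by_cases hr : a ∈ supp H
      · left
        rcases mem_supp.1 hr with hr | hr
        · have := h.dom_lt hr; omega
        · have : a ∈ ran (Hi lv H i) := h.mem_ran_Hi.2 ⟨hr, by omega⟩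
          intro h'
          rw [h'] at this
          simp [ran] at this
      · right
        have : a ∈ Ai lv H (i + 1) := mem_Ai.2 ⟨by omega, hr⟩
        exact ne_empty_of_mem this
  | j + 1, i, e => by
    refine ⟨⟨h.bip_Hi i, h.supp_Hi i⟩, ⟨h.Ai_sub i, ?_⟩, ?_⟩
    · show vvalid (toV lv H j (i + 1)) ((Si lv H i \ supp (Hi lv H i)) \ Ai lv H (i + 1))
      rw [h.Si_succ]
      exact h.valid_toV j (i + 1) (by omega)
    · show Ai lv H (i + 1) ≠ ∅ ∨ pH (Hi lv H i) ∨ qH (head (toV lv H j (i + 1)))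
      rw [head_toV]
      exact h.mid i (by omega)

lemma GB.lvl_toV (h : GB k lv H) : ∀ j i : ℕ, i + j + 1 = k → ∀ a ∈ Si lv H i, lvl (toV lv H j i) i a = lv a
  | 0, i, e, a, ha => by
    have h1 := h.le a
    rw [mem_Si] at ha
    simp only [lvl, toV, mem_dom_Hi]
    split_ifs with h2
    · exact h2.2.symm
    · rcases ha with ha | ha
      · omega
      · exact absurd ⟨ha.2, ha.1⟩ h2
  | j + 1, i, e, a, ha => by
    have h1 := h.le a
    rw [mem_Si] at ha
    simp only [lvl, toV, mem_dom_Hi, h.mem_ran_Hi, mem_Ai]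
    split_ifs with h2 h3
    · exact h2.2.symm
    · rcases h3 with h3 | h3 <;> omega
    · apply h.lvl_toV j (i + 1) (by omega)
      rw [mem_Si]
      rw [mem_supp] at h3
      rcases ha with ha | ha
      · by_cases h5 : lv a = i + 1
        · right
          refine ⟨h5, ?_⟩
          by_contra h6
          exact h3 (by tauto)
        · left; omega
      · exact absurd ⟨ha.2, ha.1⟩ h2

lemma GB.HH_toV (h : GB k lv H) : ∀ j i : ℕ, i + j + 1 = k →
    HH (toV lv H j i) = H.filter fun p => i ≤ lv p.1
  | 0, i, e => by
    ext ⟨a, b⟩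
    simp only [HH, toV, mem_Hi, mem_filter]
    refine and_congr_right fun hab => ?_
    have := h.dom_lt (mem_dom.2 ⟨b, hab⟩)
    omega
  | j + 1, i, e => by
    have ih := h.HH_toV j (i + 1) (by omega)
    ext ⟨a, b⟩
    simp only [HH, toV, ih, mem_union, mem_Hi, mem_filter, ← and_or_left]
    refine and_congr_right fun hab => ?_
    omega

end

/-- the full word of graded data -/
noncomputable def toW (lv : α → ℕ) (H : Finset (α × α)) (j : ℕ) : Finset α × V α (j + 1) :=
  (Ai lv H 0, toV lv H (j + 1) 0)

noncomputable def lvW {j : ℕ} (w : Finset α × V α (j + 1)) (a : α) : ℕ :=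
  if a ∈ w.1 then 0 else lvl w.2 0 a

lemma toW_of_valid {j : ℕ} (w : Finset α × V α (j + 1)) (h : fvalid w univ) :
    toW (lvW w) (HH w.2) j = w := by
  have hs := HH_sub w.2 _ h.1.2
  have e2 : toV (lvW w) (HH w.2) (j + 1) 0 = w.2 := by
    refine toV_of_valid _ _ w.2 0 _ h.1.2 ?_ ?_ subset_rfl ?_
    · intro a ha
      simp only [mem_sdiff, mem_univ, true_and] at ha
      simp [lvW, ha]
    · intro a ha
      simp only [mem_sdiff, mem_univ, true_and, not_not] at ha
      simp [lvW, ha]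
    · intro a b h1 h2
      exact absurd h1 h2
  refine Prod.ext ?_ e2
  ext a
  show a ∈ Ai (lvW w) (HH w.2) 0 ↔ _
  rw [mem_Ai]
  constructor
  · rintro ⟨h1, h2⟩
    by_contra ha
    simp only [lvW, ha, if_false, lvl_eq] at h1
    obtain ⟨b, hb⟩ := mem_dom.1 h1
    exact h2 (mem_supp_of_mem (head_sub_HH _ hb)).1
  · intro ha
    refine ⟨by simp [lvW, ha], fun h' => ?_⟩
    rcases mem_supp.1 h' with h' | h'
    · obtain ⟨b, hb⟩ := mem_dom.1 h'
      have := (hs _ _ hb).1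
      simp [ha] at this
    · obtain ⟨b, hb⟩ := mem_ran.1 h'
      have := (hs _ _ hb).2
      simp [ha] at this

lemma GD_of_valid {j : ℕ} (w : Finset α × V α (j + 1)) (h : fvalid w univ) :
    GD (j + 2) (lvW w) (HH w.2) := by
  have hs := HH_sub w.2 _ h.1.2
  have hs' : ∀ a b, (a, b) ∈ HH w.2 → a ∉ w.1 ∧ b ∉ w.1 := by
    intro a b hab
    simpa using hs a b hab
  refine ⟨⟨fun a => ?_, fun a b hab => ?_, ?_⟩, ?_, ?_, ?_⟩
  · have := lvl_bounds w.2 0 a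
    simp only [lvW]; split_ifs <;> omega
  · simp only [lvW, hs' a b hab, if_false]
    exact HH_lvl w.2 0 _ h.1.2 a b hab
  · rw [disjoint_left]
    intro b h1 h2
    obtain ⟨c, hc⟩ := mem_dom.1 h1
    obtain ⟨a, ha⟩ := mem_ran.1 h2
    exact HH_disj w.2 _ h.1.2 a b c ha hc
  · rcases h.2 with h1 | h1
    · obtain ⟨a, ha⟩ := nonempty_iff_ne_empty.2 h1
      exact ⟨a, by simp [lvW, ha]⟩
    · obtain ⟨⟨a, b⟩, hp⟩ := nonempty_iff_ne_empty.2 h1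
      refine ⟨a, ?_⟩
      simp only [lvW, hs' a b (head_sub_HH _ hp), if_false]
      exact (lvl_eq _ _ _).2 (mem_dom.2 ⟨b, hp⟩)
  · obtain ⟨a, ha, h1⟩ := lvl_top w.2 0 _ h.1.2
    refine ⟨a, ?_⟩
    simp only [mem_sdiff, mem_univ, true_and] at ha
    simp only [lvW, ha, if_false, h1]
    omega
  · intro i hi
    have e := congrArg Prod.snd (toW_of_valid w h)
    simp only [toW] at e
    have hv := h.1.2
    rw [← e] at hv
    generalize HH w.2 = H at *
    exact mid_of_valid _ _ _ _ _ hv i (by omega) (by omega)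

section
variable {j : ℕ} {lv : α → ℕ} {H : Finset (α × α)}

lemma GD.Si_zero {k : ℕ} (h : GD k lv H) : univ \ Ai lv H 0 = Si lv H 0 := by
  ext a
  simp only [mem_sdiff, mem_univ, true_and, mem_Ai, mem_Si, mem_supp]
  have : a ∈ ran H → 0 < lv a := by
    intro ha
    obtain ⟨b, hb⟩ := mem_ran.1 ha
    have := h.succ _ _ hb
    omega
  by_cases h3 : a ∈ dom H <;> by_cases h4 : a ∈ ran H <;> simp_all <;> omega

lemma GD.fvalid (h : GD (j + 2) lv H) : fvalid (toW lv H j) univ := by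
  refine ⟨⟨subset_univ _, ?_⟩, ?_⟩
  · show vvalid (toV lv H (j + 1) 0) (univ \ Ai lv H 0)
    rw [h.Si_zero]
    exact h.valid_toV _ _ (by omega)
  · show Ai lv H 0 ≠ ∅ ∨ head (toV lv H (j + 1) 0) ≠ ∅
    rw [head_toV]
    obtain ⟨a, ha⟩ := h.zero
    by_cases hs : a ∈ dom H
    · right
      obtain ⟨b, hb⟩ := mem_dom.1 hs
      exact ne_empty_of_mem (mem_Hi.2 ⟨hb, ha⟩)
    · left
      refine ne_empty_of_mem (a := a) (mem_Ai.2 ⟨ha, fun h' => ?_⟩)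
      rcases mem_supp.1 h' with h' | h'
      · exact hs h'
      · obtain ⟨b, hb⟩ := mem_ran.1 h'
        have := h.succ _ _ hb
        omega

lemma GD.lvW_toW (h : GD (j + 2) lv H) : lvW (toW lv H j) = lv := by
  funext a
  by_cases ha : a ∈ Ai lv H 0
  · have : lvW (toW lv H j) a = 0 := by simp [lvW, toW, ha]
    rw [this, (mem_Ai.1 ha).1]
  · have : lvW (toW lv H j) a = lvl (toV lv H (j + 1) 0) 0 a := by simp [lvW, toW, ha]
    rw [this]
    apply h.lvl_toV _ _ (by omega)
    rw [← h.Si_zero]; simp [ha]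

lemma GD.HH_toW (h : GD (j + 2) lv H) : HH (toW lv H j).2 = H := by
  show HH (toV lv H (j + 1) 0) = H
  rw [h.HH_toV _ _ (by omega)]
  simp

end

/-- posets with top rank `k` -/
def IsK (k : ℕ) (r : α → α → Prop) : Prop := ∃ lv H, GD k lv H ∧ r = rel lv H

lemma cnt_bij2 {β γ : Type} [Fintype β] [Fintype γ] {P : β → Prop} {Q : γ → Prop}
    (f : β → γ) (h1 : ∀ x, P x → Q (f x)) (h2 : ∀ x y, P x → P y → f x = f y → x = y)
    (h3 : ∀ y, Q y → ∃ x, P x ∧ f x = y) : cnt P = cnt Q := by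
  unfold cnt
  refine card_bij (fun x _ => f x) ?_ ?_ ?_
  · intro x hx; simpa using h1 x (by simpa using hx)
  · intro x hx y hy e; exact h2 x y (by simpa using hx) (by simpa using hy) e
  · intro y hy
    obtain ⟨x, hx, e⟩ := h3 y (by simpa using hy)
    exact ⟨x, by simpa using hx, e⟩

lemma cnt_IsK (j : ℕ) : cnt (fun r : α → α → Prop => IsK (j + 2) r) =
    cnt (fun w : Finset α × V α (j + 1) => fvalid w univ) := by
  symm
  refine cnt_bij2 (fun w => rel (lvW w) (HH w.2)) ?_ ?_ ?_
  · intro w hw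
    exact ⟨_, _, GD_of_valid w hw, rfl⟩
  · intro w w' hw hw' e
    obtain ⟨-, e1, e2⟩ := (GD_of_valid w hw).unique (GD_of_valid w' hw') (by omega) (by omega) e
    rw [← toW_of_valid w hw, ← toW_of_valid w' hw', e1, e2]
  · rintro r ⟨lv, H, h, rfl⟩
    exact ⟨toW lv H j, h.fvalid, by simp only [h.lvW_toW, h.HH_toW]⟩

/-- good posets -/
def Good (r : α → α → Prop) : Prop := SO r ∧ (∃ rk, RK r rk) ∧ AV r

lemma good_ch3_iff (r : α → α → Prop) : (Good r ∧ Ch3 r) ↔ ∃ j, IsK (j + 2) r := by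
  constructor
  · rintro ⟨⟨h1, ⟨rk, h2⟩, h3⟩, h4⟩
    obtain ⟨k, H, hk, h5, rfl⟩ := exists_GD h1 h2 h3 h4
    obtain ⟨j, rfl⟩ : ∃ j, k = j + 2 := ⟨k - 2, by omega⟩
    exact ⟨j, rk, H, h5, rfl⟩
  · rintro ⟨j, lv, H, h, rfl⟩
    exact ⟨⟨GD.so, ⟨lv, h.rk (by omega)⟩, h.av⟩, h.ch3 (by omega)⟩

lemma IsK.unique {r : α → α → Prop} {i j : ℕ} (h : IsK (i + 2) r) (h' : IsK (j + 2) r) : i = j := by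
  obtain ⟨lv, H, h, rfl⟩ := h
  obtain ⟨lv', H', h', e⟩ := h'
  have := (h.unique h' (by omega) (by omega) e).1
  omega

lemma cnt_ch3 (N : ℕ) (hN : Fintype.card α ≤ N) :
    (cnt (fun r : α → α → Prop => Good r ∧ Ch3 r) : ℚ) =
      ∑ j ∈ range N, (cnt (fun w : Finset α × V α (j + 1) => fvalid w univ) : ℚ) := by
  rw [cnt_fiber _ (fun r => if h : ∃ j, IsK (j + 2) r then h.choose else 0) (range N)]
  · refine sum_congr rfl fun j _ => ?_
    rw [← cnt_IsK]
    congr 1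
    apply cnt_congr
    intro r
    constructor
    · rintro ⟨h1, h2⟩
      have h := (good_ch3_iff r).1 h1
      rw [dif_pos h] at h2
      rw [← h2]; exact h.choose_spec
    · intro h
      have hex : ∃ j, IsK (j + 2) r := ⟨j, h⟩
      refine ⟨(good_ch3_iff r).2 hex, ?_⟩
      rw [dif_pos hex]
      exact hex.choose_spec.unique h
  · intro r hr
    have h := (good_ch3_iff r).1 hr
    rw [dif_pos h, mem_range]
    obtain ⟨lv, H, hG, -⟩ := h.choose_spec
    have := hG.card
    omega

lemma cnt_noch3 : (cnt (fun r : α → α → Prop => Good r ∧ ¬ Ch3 r) : ℚ) =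
    (cnt (fun H : Finset (α × α) => bip H) : ℚ) := by
  congr 1
  refine cnt_bij (fun r => univ.filter fun p => r p.1 p.2) (fun H a b => (a, b) ∈ H) ?_ ?_ ?_ ?_
  · rintro r ⟨-, h⟩
    rw [bip, disjoint_left]
    intro b h1 h2
    obtain ⟨c, hc⟩ := mem_dom.1 h1
    obtain ⟨a, ha⟩ := mem_ran.1 h2
    simp only [mem_filter, mem_univ, true_and] at ha hc
    exact h ⟨a, b, c, ha, hc⟩
  · intro H hH
    have nc : ¬ Ch3 (fun a b => (a, b) ∈ H) := by
      rintro ⟨a, b, c, h1, h2⟩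
      exact disjoint_left.1 hH (mem_dom.2 ⟨c, h2⟩) (mem_ran.2 ⟨a, h1⟩)
    refine ⟨⟨⟨fun a ha => nc ⟨a, a, a, ha, ha⟩, fun a b c h1 h2 => absurd ⟨a, b, c, h1, h2⟩ nc⟩,
      ⟨fun a => if a ∈ ran H then 1 else 0, ?_, ?_⟩, ?_⟩, nc⟩
    · intro a b hab _
      have h1 : b ∈ ran H := mem_ran.2 ⟨a, hab⟩
      have h2 : a ∉ ran H := disjoint_left.1 hH (mem_dom.2 ⟨b, hab⟩)
      simp [h1, h2]
    · intro v
      by_cases hv : v ∈ ran H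
      · obtain ⟨u, hu⟩ := mem_ran.1 hv
        refine ⟨u, Relation.ReflTransGen.single (Or.inr hu), ?_⟩
        have h2 : u ∉ ran H := disjoint_left.1 hH (mem_dom.2 ⟨v, hu⟩)
        simp [h2]
      · exact ⟨v, Relation.ReflTransGen.refl, by simp [hv]⟩
    · rintro ⟨w, x, y, z, h1, h2, -⟩
      exact nc ⟨x, y, z, h1, h2⟩
  · intro r _; funext a b; simp
  · intro H _; ext p; simp

lemma hasEgf_bip : HasEgf (fun S : Finset α => (cnt fun H : Finset (α × α) => bip H ∧ supp H ⊆ S : ℚ))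
    (sN * E) := by
  have h0 : HasEgf (fun T : Finset α => (cnt fun (_ : Unit) => True : ℚ)) E := hasEgf_one.congr fun S => by
    rw [cnt_eq_one ()]; · simp
    intro x; simp
  have h := hasEgf_prod supp (fun H : Finset (α × α) => bip H ∧ True) (fun (_ : Unit) _ => True) hasEgf_jN.jc' h0
  refine h.congr fun S => ?_
  congr 1
  refine cnt_bij (fun H => (H, ())) (fun x => x.1) ?_ ?_ ?_ ?_
  · intro H hH; exact ⟨⟨⟨hH.1, trivial⟩, hH.2⟩, trivial⟩
  · intro x hx; exact ⟨hx.1.1.1, hx.1.2⟩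
  · intro H _; rfl
  · intro x _; rfl

/-- the count of good posets through generating functions -/
lemma cnt_good (N : ℕ) (hN : Fintype.card α ≤ N) :
    (cnt (fun r : α → α → Prop => Good r) : ℚ) = ((Fintype.card α).factorial : ℚ) *
      PowerSeries.coeff (Fintype.card α) (sN * E +
        ∑ j ∈ range N, (E * (XG (j + 1)).1 - (E * (XG j).1 - (XG j).2))) := by
  have h1 := hasEgf_bip (α := α) univ
  have h2 : ∀ j, _ := fun j => hasEgf_full (α := α) j univ
  simp only [subset_univ, and_true, card_univ] at h1 h2
  rw [cnt_split _ Ch3, cnt_ch3 N hN, cnt_noch3, h1, map_add, map_sum, mul_add, mul_sum,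
    sum_congr rfl fun j _ => h2 j]
  ring

end WG

namespace WG
open Finset
open scoped Classical

/-! ### Power series computations -/

lemma constE : PowerSeries.constantCoeff E = 1 := by simp [E]
lemma constN : PowerSeries.constantCoeff ExpNeg = 1 := by
  rw [← PowerSeries.coeff_zero_eq_constantCoeff_apply]; simp [ExpNeg]
lemma constPsi : PowerSeries.constantCoeff Psi = 1 := by
  rw [← PowerSeries.coeff_zero_eq_constantCoeff_apply]; simp [Psi]

lemma sN_eq : sN * E ^ 2 = Psi := by
  have h := expNeg_mul_E
  have : sN * E ^ 2 = (ExpNeg * E) * (ExpNeg * E) * Psi := by rw [sN]; ring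
  rw [this, h]; ring
lemma sF_eq : sF * E ^ 2 = Psi * (E - 1) + E := by
  have h := expNeg_mul_E
  have : sF * E ^ 2 = (ExpNeg * E) * E * Psi - (ExpNeg * E) * (ExpNeg * E) * Psi + (ExpNeg * E) * E := by
    rw [sF]; ring
  rw [this, h]; ring
lemma sK_eq : sK * E ^ 2 = E ^ 2 + Psi * (E - 1) ^ 2 := by
  have h := expNeg_mul_E
  have : sK * E ^ 2 = E ^ 2 + Psi * E ^ 2 - 2 * ((ExpNeg * E) * E * Psi)
    + (ExpNeg * E) * (ExpNeg * E) * Psi := by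
    rw [sK]; ring
  rw [this, h]; ring

lemma constsN : PowerSeries.constantCoeff sN = 1 := by
  simp [sN, constN, constPsi]
lemma constsF : PowerSeries.constantCoeff sF = 1 := by
  simp [sF, constN, constPsi]
lemma constsK : PowerSeries.constantCoeff sK = 1 := by
  simp [sK, constN, constPsi]

lemma X_dvd_XG (i : ℕ) : (PowerSeries.X : PowerSeries ℚ) ^ i ∣ (XG (2 * i)).1 ∧
    (PowerSeries.X : PowerSeries ℚ) ^ i ∣ (XG (2 * i)).2 := by
  induction i with
  | zero => simp
  | succ i ih =>
    obtain ⟨⟨x, hx⟩, ⟨g, hg⟩⟩ := ih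
    have e : 2 * (i + 1) = 2 * i + 1 + 1 := by ring
    have d : ∀ P : PowerSeries ℚ, PowerSeries.constantCoeff P = 0 → PowerSeries.X ∣ P := fun P h =>
      PowerSeries.X_dvd_iff.2 h
    rw [e]
    simp only [XG, hx, hg]
    constructor
    · have : sN * (E * (sN * (E * (PowerSeries.X ^ i * x)) - sF * (PowerSeries.X ^ i * g))) -
        sF * (sF * (E * (PowerSeries.X ^ i * x)) - sK * (PowerSeries.X ^ i * g)) =
        PowerSeries.X ^ i * (sN * (E * (sN * (E * x) - sF * g)) - sF * (sF * (E * x) - sK * g)) := by ring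
      rw [this, pow_succ]
      refine mul_dvd_mul_left _ (d _ ?_)
      simp [constsN, constsF, constsK, constE]
    · have : sF * (E * (sN * (E * (PowerSeries.X ^ i * x)) - sF * (PowerSeries.X ^ i * g))) -
        sK * (sF * (E * (PowerSeries.X ^ i * x)) - sK * (PowerSeries.X ^ i * g)) =
        PowerSeries.X ^ i * (sF * (E * (sN * (E * x) - sF * g)) - sK * (sF * (E * x) - sK * g)) := by ring
      rw [this, pow_succ]
      refine mul_dvd_mul_left _ (d _ ?_)
      simp [constsN, constsF, constsK, constE]

/-- partial sums -/
noncomputable def UU (N : ℕ) : PowerSeries ℚ := ∑ j ∈ range N, (XG j).1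
noncomputable def GG (N : ℕ) : PowerSeries ℚ := ∑ j ∈ range N, (XG j).2

lemma UU_eq (N : ℕ) : UU N + (XG N).1 = (sN * E - 1) + sN * E * UU N - sF * GG N := by
  induction N with
  | zero => simp [UU, GG, XG]
  | succ N ih =>
    have : UU (N + 1) = UU N + (XG N).1 := sum_range_succ _ _
    have h2 : GG (N + 1) = GG N + (XG N).2 := sum_range_succ _ _
    rw [h2, this]
    simp only [XG]
    linear_combination ih

lemma GG_eq (N : ℕ) : GG N + (XG N).2 = (sF * E - 1) + sF * E * UU N - sK * GG N := by
  induction N with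
  | zero => simp [UU, GG, XG]
  | succ N ih =>
    have : UU (N + 1) = UU N + (XG N).1 := sum_range_succ _ _
    have h2 : GG (N + 1) = GG N + (XG N).2 := sum_range_succ _ _
    rw [this, h2]
    simp only [XG]
    linear_combination ih

lemma TT_eq (N : ℕ) : ∑ j ∈ range N, (E * (XG (j + 1)).1 - (E * (XG j).1 - (XG j).2)) =
    E * (XG N).1 - E * (sN * E - 1) + GG N := by
  induction N with
  | zero => simp [GG, XG]
  | succ N ih =>
    have h2 : GG (N + 1) = GG N + (XG N).2 := sum_range_succ _ _
    rw [sum_range_succ, ih, h2]; ring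

lemma E_ne : E ≠ 0 := by
  intro h
  have := constE
  rw [h] at this
  simp at this

lemma final_ring {R : Type} [CommRing R] [IsDomain R] {y P N F K U G x g : R} (hy : y ≠ 0)
    (hN : N * y ^ 2 = P) (hF : F * y ^ 2 = P * (y - 1) + y) (hK : K * y ^ 2 = y ^ 2 + P * (y - 1) ^ 2)
    (hU : U + x = (N * y - 1) + N * y * U - F * G) (hG : G + g = (F * y - 1) + F * y * U - K * G) :
    (G + y) * (y * (2 * y + 1) + (y ^ 2 - 2 * y - 1) * P) =
      2 * y ^ 3 + y ^ 2 * (y - 2) * P - F * y ^ 3 * x + y ^ 2 * (N * y - 1) * g := by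
  set B := (N * y - 1) * (1 + K) - F ^ 2 * y with hB
  have h1 : G * B = F * y * x - (N * y - 1) * g - (N * y - 1) := by
    rw [hB]
    linear_combination (N * y - 1) * hG - (F * y) * hU
  have e1 : (N * y - 1) * y = P - y := by linear_combination hN
  have h2 : B * y ^ 3 = - (y * (y * (2 * y + 1) + (y ^ 2 - 2 * y - 1) * P)) := by
    have : B * y ^ 3 = ((N * y - 1) * y) * (y ^ 2 + K * y ^ 2) - (F * y ^ 2) ^ 2 := by rw [hB]; ring
    rw [this, e1, hK, hF]; ring
  apply mul_left_cancel₀ hy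
  linear_combination (-y ^ 3) * h1 + G * h2 + y ^ 2 * e1

open PowerSeries in
/-- the truncated identity -/
lemma trunc_dvd (n : ℕ) (w : PowerSeries ℚ)
    (hw : (X : PowerSeries ℚ) ^ (n + 1) ∣ w - (sN * E +
        ∑ j ∈ range (2 * (n + 1)), (E * (XG (j + 1)).1 - (E * (XG j).1 - (XG j).2)))) :
    (X : PowerSeries ℚ) ^ (n + 1) ∣ (w - (ExpNeg - 1) * Psi) * (E * (2 * E + 1) + (E ^ 2 - 2 * E - 1) * Psi)
      - (2 * E ^ 3 + E ^ 2 * (E - 2) * Psi) := by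
  obtain ⟨⟨x, hx⟩, ⟨g, hg⟩⟩ := X_dvd_XG (n + 1)
  obtain ⟨z, hz⟩ := hw
  rw [TT_eq] at hz
  have key := final_ring E_ne sN_eq sF_eq sK_eq (UU_eq (2 * (n + 1))) (GG_eq (2 * (n + 1)))
  rw [hx] at hz
  rw [hx, hg] at key
  have hs : sN * E = ExpNeg * Psi := by
    have : sN * E = (ExpNeg * E) * ExpNeg * Psi := by rw [sN]; ring
    rw [this, expNeg_mul_E, one_mul]
  have h2 : E * (sN * E) = Psi := by rw [← sN_eq]; ring
  have h3 : w - (ExpNeg - 1) * Psi = X ^ (n + 1) * z + E * (X ^ (n + 1) * x) + (GG (2 * (n + 1)) + E) := by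
    linear_combination hz + hs - h2
  rw [h3]
  refine ⟨(z + E * x) * (E * (2 * E + 1) + (E ^ 2 - 2 * E - 1) * Psi) - sF * E ^ 3 * x +
    E ^ 2 * (sN * E - 1) * g, ?_⟩
  linear_combination key

lemma wCount_eq (n : ℕ) : wCount n = cnt (fun r : Fin n → Fin n → Prop => Good r) := by
  rw [wCount, Nat.card_eq_fintype_card, cnt, Fintype.card_subtype]
  congr 1
  ext r
  simp only [mem_filter, mem_univ, true_and]
  exact Iff.rfl

lemma coeff_W (n N : ℕ) (h : n ≤ N) : PowerSeries.coeff n W = PowerSeries.coeff n (sN * E +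
        ∑ j ∈ range N, (E * (XG (j + 1)).1 - (E * (XG j).1 - (XG j).2))) := by
  have := cnt_good (α := Fin n) N (by simpa using h)
  simp only [Fintype.card_fin] at this
  have h5 : (wCount n : ℚ) = n.factorial * PowerSeries.coeff n (sN * E +
      ∑ j ∈ range N, (E * (XG (j + 1)).1 - (E * (XG j).1 - (XG j).2))) := by
    refine Eq.trans ?_ this
    rw [wCount_eq]
    congr!
  rw [W, PowerSeries.coeff_mk, h5]
  field_simp

end WG

theorem weakly_graded_gf :
    (W - (ExpNeg - 1) * Psi) * (E * (2 * E + 1) + (E ^ 2 - 2 * E - 1) * Psi) =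
      2 * E ^ 3 + E ^ 2 * (E - 2) * Psi := by
  ext n
  have h := WG.trunc_dvd n W (by
    rw [PowerSeries.X_pow_dvd_iff]
    intro m hm
    rw [map_sub, WG.coeff_W m (2 * (n + 1)) (by omega), sub_self])
  rw [PowerSeries.X_pow_dvd_iff] at h
  have := h n (by omega)
  rw [map_sub, sub_eq_zero] at this
  exact this
end

section
/- Define ψ_n = Σ_{i=0}^{n} 2^{i(n−i)}/(i!·(n−i)!) as a real number. Then lim_{k→∞} ψ_{2k}·(k!)^2/2^{k^2} = Σ_{i ∈ ℤ} 2^{−i^2} and lim_{k→∞} ψ_{2k+1}·k!·(k+1)!/2^{k(k+1)} = Σ_{i ∈ ℤ} 2^{−i(i+1)} (both series over ℤ being absolutely convergent). In particular, there exist positive constants C₁, C₂ with ψ_{2k} ∼ C₁·2^{k^2}/(k!)^2 and ψ_{2k+1} ∼ C₂·2^{k(k+1)}/(k!·(k+1)!) as k → ∞. -/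
open Filter

/-- `ψ_n = Σ_{i=0}^{n} 2^{i(n−i)}/(i!·(n−i)!)`. -/
noncomputable def psi (n : ℕ) : ℝ :=
  ∑ i ∈ Finset.range (n + 1),
    (2 : ℝ) ^ (i * (n - i)) / (i.factorial * (n - i).factorial)

noncomputable def Rr (e k : ℕ) (j : ℤ) : ℝ :=
  ((k.factorial : ℝ) * ((k + e).factorial : ℝ)) /
    ((((k : ℤ) - j).toNat.factorial : ℝ) * (((k : ℤ) + e + j).toNat.factorial : ℝ))

lemma Rr_succ (e k : ℕ) (j : ℤ) (h1 : j + 1 ≤ k) (h2 : -(k + e : ℤ) ≤ j) :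
    Rr e k (j + 1) = Rr e k j * (((k : ℝ) - j) / ((k : ℝ) + e + j + 1)) := by
  unfold Rr
  obtain ⟨a, ha⟩ : ∃ a : ℕ, (k : ℤ) - (j + 1) = a := ⟨_, (Int.toNat_of_nonneg (by omega)).symm⟩
  obtain ⟨b, hb⟩ : ∃ b : ℕ, (k : ℤ) + e + j = b := ⟨_, (Int.toNat_of_nonneg (by omega)).symm⟩
  have ha' : (k : ℤ) - j = (a + 1 : ℕ) := by push_cast; omega
  have hb' : (k : ℤ) + e + (j + 1) = (b + 1 : ℕ) := by push_cast; omega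
  have r1 : (k : ℝ) - j = (a : ℝ) + 1 := by exact_mod_cast ha'
  have r2 : (k : ℝ) + e + j = (b : ℝ) := by exact_mod_cast hb
  rw [ha, hb, ha', hb', r1, r2]
  simp only [Int.toNat_natCast, Nat.factorial_succ]
  push_cast
  have := Nat.factorial_pos a
  have := Nat.factorial_pos b
  field_simp

lemma ratio_tendsto (a b : ℝ) :
    Tendsto (fun k : ℕ => ((k : ℝ) + a) / ((k : ℝ) + b)) atTop (nhds 1) := by
  have h : Tendsto (fun k : ℕ => (k : ℝ) + b) atTop atTop :=
    tendsto_atTop_add_const_right _ _ tendsto_natCast_atTop_atTop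
  have h2 : Tendsto (fun k : ℕ => 1 + (a - b) / ((k : ℝ) + b)) atTop (nhds (1 + 0)) :=
    tendsto_const_nhds.add (h.const_div_atTop _)
  rw [add_zero] at h2
  refine h2.congr' ?_
  filter_upwards [h.eventually_gt_atTop 0] with k hk
  field_simp
  ring

lemma Rr_tendsto (e : ℕ) (j : ℤ) : Tendsto (fun k => Rr e k j) atTop (nhds 1) := by
  induction j using Int.induction_on with
  | zero =>
    refine tendsto_const_nhds.congr fun k => ?_
    unfold Rr
    have h : (k : ℤ) + e + 0 = (k + e : ℕ) := by push_cast; ring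
    rw [h, sub_zero, Int.toNat_natCast, Int.toNat_natCast, div_self]
    positivity
  | succ i ih =>
    have := ih.mul (ratio_tendsto (-(i : ℝ)) ((e : ℝ) + i + 1))
    rw [one_mul] at this
    refine this.congr' ?_
    filter_upwards [eventually_ge_atTop (i + 1)] with k hk
    rw [Rr_succ e k i (by exact_mod_cast hk) (by omega)]
    push_cast
    congr 2
    ring
  | pred i ih =>
    have := ih.mul (ratio_tendsto ((e : ℝ) - i) ((i : ℝ) + 1))
    rw [one_mul] at this
    refine this.congr' ?_
    filter_upwards [eventually_ge_atTop (i + 1)] with k hk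
    have h := Rr_succ e k (-(i : ℤ) - 1) (by omega) (by omega)
    rw [sub_add_cancel] at h
    rw [h]
    have hk' : (i : ℝ) + 1 ≤ k := by exact_mod_cast hk
    have : (k : ℝ) + (e - i) ≠ 0 := by
      have : (0 : ℝ) ≤ e := by positivity
      intro h0; linarith
    have : (k : ℝ) + (i + 1) ≠ 0 := by positivity
    push_cast
    rw [mul_assoc]
    convert mul_one _ using 2
    rw [show (k : ℝ) - (-i - 1) = k + (i + 1) by ring,
      show (k : ℝ) + e + (-i - 1) + 1 = k + (e - i) by ring]
    field_simp

lemma Rr_le (e k : ℕ) (he : e ≤ 1) (j : ℤ) (h1 : j ≤ k) (h2 : -(k + e : ℤ) ≤ j) :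
    Rr e k j ≤ 1 := by
  unfold Rr
  obtain ⟨a, ha⟩ : ∃ a : ℕ, (k : ℤ) - j = a := ⟨_, (Int.toNat_of_nonneg (by omega)).symm⟩
  obtain ⟨b, hb⟩ : ∃ b : ℕ, (k : ℤ) + e + j = b := ⟨_, (Int.toNat_of_nonneg (by omega)).symm⟩
  rw [ha, hb, Int.toNat_natCast, Int.toNat_natCast]
  rw [div_le_one (by positivity)]
  have hs : a + b = k + (k + e) := by omega
  have hm := Nat.choose_le_middle a (a + b)
  rw [show (a + b) / 2 = k by omega] at hm
  have e1 := Nat.add_choose_mul_factorial_mul_factorial a b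
  have e2 := Nat.add_choose_mul_factorial_mul_factorial k (k + e)
  rw [← Nat.choose_symm_add] at e1 e2
  rw [← hs] at e2
  have hc : 0 < (a + b).choose k := Nat.choose_pos (by omega)
  norm_cast
  by_contra! hlt
  have : (a + b).choose a * (a.factorial * b.factorial) <
      (a + b).choose k * (k.factorial * (k + e).factorial) :=
    lt_of_le_of_lt (Nat.mul_le_mul_right _ hm) (Nat.mul_lt_mul_of_pos_left hlt hc)
  rw [← mul_assoc, ← mul_assoc, e1, e2] at this
  exact lt_irrefl _ this

lemma summ_geo : Summable (fun j : ℤ => 2 * ((1 : ℝ) / 2) ^ j.natAbs) := by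
  refine Summable.mul_left _ ?_
  apply Summable.of_nat_of_neg <;> simpa using summable_geometric_two

lemma term_le (e : ℕ) (he : e ≤ 1) (j : ℤ) :
    (2 : ℝ) ^ (-(j * (j + e))) ≤ 2 * ((1 : ℝ) / 2) ^ j.natAbs := by
  have h : 2 * ((1 : ℝ) / 2) ^ j.natAbs = (2 : ℝ) ^ (1 - |j|) := by
    rw [zpow_sub₀ (by norm_num), Int.abs_eq_natAbs, zpow_natCast]
    simp [div_eq_mul_inv]
  rw [h]
  apply zpow_le_zpow_right₀ (by norm_num)
  rcases abs_cases j with ⟨h, h'⟩ | ⟨h, h'⟩ <;> rw [h] <;> interval_cases e <;> push_cast <;>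
    nlinarith [sq_nonneg (j + 1), sq_nonneg (j - 1), sq_nonneg j]

lemma summ_term (e : ℕ) (he : e ≤ 1) : Summable (fun j : ℤ => (2 : ℝ) ^ (-(j * (j + e)))) :=
  Summable.of_nonneg_of_le (fun _ => by positivity) (term_le e he) summ_geo

lemma psi_eq (e k : ℕ) :
    psi (2 * k + e) * ((k.factorial : ℝ) * ((k + e).factorial : ℝ)) / 2 ^ (k * (k + e)) =
    ∑' j : ℤ, if j ∈ Finset.Icc (-(k + e : ℤ)) k then
      (2 : ℝ) ^ (-(j * (j + e))) * Rr e k j else 0 := by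
  rw [tsum_eq_sum (s := Finset.Icc (-(k + e : ℤ)) k) (fun j hj => if_neg hj)]
  rw [Finset.sum_congr rfl (fun j hj => if_pos hj)]
  unfold psi
  rw [Finset.sum_mul, Finset.sum_div]
  refine Finset.sum_bij' (fun i _ => (k : ℤ) - i) (fun j _ => ((k : ℤ) - j).toNat) ?_ ?_ ?_ ?_ ?_
  · intro i hi
    simp only [Finset.mem_range, Finset.mem_Icc] at *
    omega
  · intro i hi
    simp only [Finset.mem_range, Finset.mem_Icc] at *
    omega
  · intro i hi
    simp
  · intro i hi
    simp only [Finset.mem_Icc] at *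
    omega
  · intro i hi
    simp only [Finset.mem_range] at hi
    obtain ⟨m, hm⟩ : ∃ m, 2 * k + e = i + m := ⟨2 * k + e - i, by omega⟩
    have hm' : (k : ℤ) + e + (k - i) = (m : ℕ) := by omega
    unfold Rr
    rw [hm', sub_sub_cancel, Int.toNat_natCast, Int.toNat_natCast, hm, Nat.add_sub_cancel_left]
    have hx : -(((k : ℤ) - i) * (k - i + e)) = ((i * m : ℕ) : ℤ) - ((k * (k + e) : ℕ) : ℤ) := by
      have : (m : ℤ) = k + e + (k - i) := hm'.symm
      push_cast
      rw [this]; ring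
    rw [hx, zpow_sub₀ (by norm_num), zpow_natCast, zpow_natCast]
    field_simp

lemma main_tendsto (e : ℕ) (he : e ≤ 1) :
    Tendsto (fun k : ℕ => psi (2 * k + e) * ((k.factorial : ℝ) * ((k + e).factorial : ℝ)) /
      2 ^ (k * (k + e))) atTop (nhds (∑' j : ℤ, (2 : ℝ) ^ (-(j * (j + e))))) := by
  simp_rw [psi_eq]
  refine tendsto_tsum_of_dominated_convergence (summ_term e he) ?_ ?_
  · intro j
    have := (Rr_tendsto e j).const_mul ((2 : ℝ) ^ (-(j * (j + e))))
    rw [mul_one] at this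
    refine this.congr' ?_
    filter_upwards [eventually_ge_atTop j.natAbs] with k hk
    rw [if_pos]
    simp only [Finset.mem_Icc]
    omega
  · refine Eventually.of_forall fun k j => ?_
    split_ifs with h
    · simp only [Finset.mem_Icc] at h
      have h0 : 0 ≤ Rr e k j := by unfold Rr; positivity
      rw [Real.norm_of_nonneg (by positivity)]
      exact mul_le_of_le_one_right (by positivity) (Rr_le e k he j h.2 h.1)
    · rw [norm_zero]; positivity

lemma equiv_of (f g h : ℕ → ℝ) (hg : ∀ k, g k ≠ 0) (hh : ∀ k, h k ≠ 0) (C : ℝ) (hC : 0 < C)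
    (H : Tendsto (fun k => f k * h k / g k) atTop (nhds C)) :
    Tendsto (fun k => f k / (C * g k / h k)) atTop (nhds 1) := by
  have := H.div_const C
  rw [div_self hC.ne'] at this
  refine this.congr fun k => ?_
  have := hg k
  have := hh k
  field_simp

theorem psi_asymptotics :
    Summable (fun i : ℤ => (2 : ℝ) ^ (-(i ^ 2))) ∧
    Summable (fun i : ℤ => (2 : ℝ) ^ (-(i * (i + 1)))) ∧
    Tendsto (fun k : ℕ => psi (2 * k) * (k.factorial : ℝ) ^ 2 / 2 ^ (k ^ 2)) atTop
      (nhds (∑' i : ℤ, (2 : ℝ) ^ (-(i ^ 2)))) ∧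
    Tendsto (fun k : ℕ =>
        psi (2 * k + 1) * ((k.factorial : ℝ) * ((k + 1).factorial : ℝ)) / 2 ^ (k * (k + 1)))
      atTop (nhds (∑' i : ℤ, (2 : ℝ) ^ (-(i * (i + 1))))) ∧
    (∃ C₁ : ℝ, 0 < C₁ ∧
      Tendsto (fun k : ℕ => psi (2 * k) / (C₁ * 2 ^ (k ^ 2) / (k.factorial : ℝ) ^ 2))
        atTop (nhds 1)) ∧
    (∃ C₂ : ℝ, 0 < C₂ ∧
      Tendsto (fun k : ℕ =>
          psi (2 * k + 1) /
            (C₂ * 2 ^ (k * (k + 1)) / ((k.factorial : ℝ) * ((k + 1).factorial : ℝ))))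
        atTop (nhds 1)) := by
  have s0 := summ_term 0 (by norm_num)
  have s1 := summ_term 1 le_rfl
  have t0 := main_tendsto 0 (by norm_num)
  have t1 := main_tendsto 1 le_rfl
  have q0 : ∀ i : ℤ, i * (i + (0 : ℕ)) = i ^ 2 := fun i => by push_cast; ring
  simp only [q0, add_zero, ← pow_two] at s0 t0
  simp only [Nat.cast_one] at s1 t1
  refine ⟨s0, s1, t0, t1, ⟨_, ?_, equiv_of _ _ _ ?_ ?_ _ ?_ t0⟩,
    ⟨_, ?_, equiv_of _ _ _ ?_ ?_ _ ?_ t1⟩⟩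
  · exact s0.tsum_pos (fun _ => by positivity) 0 (by positivity)
  · intro k; positivity
  · intro k; positivity
  · exact s0.tsum_pos (fun _ => by positivity) 0 (by positivity)
  · exact s1.tsum_pos (fun _ => by positivity) 0 (by positivity)
  · intro k; positivity
  · intro k; positivity
  · exact s1.tsum_pos (fun _ => by positivity) 0 (by positivity)
end

section
/- Let g_n denote the number of strict partial order relations on {1, …, n} that are strongly graded and avoid 3+1, let w_n denote the number of strict partial order relations on {1, …, n} that are weakly graded and avoid 3+1, and let ψ_n = Σ_{i=0}^{n} 2^{i(n−i)}/(i!·(n−i)!). Then g_n ∼ n!·ψ_n and w_n ∼ n!·ψ_n as n → ∞; that is, lim_{n→∞} g_n/(n!·ψ_n) = 1 and lim_{n→∞} w_n/(n!·ψ_n) = 1. -/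
/-- number of pairs (S, E) with E a subset of S × Sᶜ -/
def PhiN (n : ℕ) : ℕ := ∑ S : Finset (Fin n), 2 ^ (S.card * Sᶜ.card)

/-- allowed pairs -/
def BB {n : ℕ} {L : Type} [DecidableEq L] (S : Finset (Fin n)) (f : Fin n → L) :
    Finset (Fin n × Fin n) := (S ×ˢ Sᶜ).filter (fun p => f p.1 = f p.2)

lemma phi_eq (n : ℕ) : (n.factorial : ℝ) * psi n = (PhiN n : ℝ) := by
  have h : PhiN n = ∑ i ∈ Finset.range (n+1), n.choose i * 2 ^ (i * (n - i)) := by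
    have := Finset.sum_powerset_apply_card (fun i => 2 ^ (i * (n - i))) (x := (Finset.univ : Finset (Fin n)))
    simp only [Finset.powerset_univ, Finset.card_univ, Fintype.card_fin, smul_eq_mul] at this
    rw [← this]
    unfold PhiN
    refine Finset.sum_congr rfl fun S _ => ?_
    rw [Finset.card_compl, Fintype.card_fin]
  rw [h, psi, Finset.mul_sum]
  push_cast
  refine Finset.sum_congr rfl fun i hi => ?_
  have hi' : i ≤ n := by simpa [Nat.lt_succ_iff] using hi
  rw [Nat.cast_choose ℝ hi']
  ring

lemma phi_lower (n : ℕ) :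
    (2:ℝ)^n * (2:ℝ) ^ ((n:ℝ)*n/4) ≤ 2 * (n+1) * (PhiN n : ℝ) := by
  have h1 : n.choose (n/2) * 2 ^ ((n/2) * (n - n/2)) ≤ PhiN n := by
    have := Finset.sum_powerset_apply_card (fun i => 2 ^ (i * (n - i))) (x := (Finset.univ : Finset (Fin n)))
    simp only [Finset.powerset_univ, Finset.card_univ, Fintype.card_fin, smul_eq_mul] at this
    have h : PhiN n = ∑ i ∈ Finset.range (n+1), n.choose i * 2 ^ (i * (n - i)) := by
      rw [← this]
      unfold PhiN
      refine Finset.sum_congr rfl fun S _ => ?_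
      rw [Finset.card_compl, Fintype.card_fin]
    rw [h]
    exact Finset.single_le_sum (f := fun i => n.choose i * 2 ^ (i * (n - i))) (fun i _ => Nat.zero_le _) (by simp; omega)
  have h2 : 2 ^ n ≤ (n+1) * n.choose (n/2) := by
    rw [← Nat.sum_range_choose n]
    calc _ ≤ ∑ i ∈ Finset.range (n+1), n.choose (n/2) := Finset.sum_le_sum fun i _ => Nat.choose_le_middle i n
      _ = _ := by simp
  have h3 : (2:ℝ) ^ ((n:ℝ)*n/4) ≤ 2 * (2:ℝ) ^ ((n/2) * (n - n/2)) := by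
    have : (2:ℝ) * (2:ℝ) ^ ((n/2) * (n - n/2)) = (2:ℝ) ^ (((n/2) * (n - n/2) + 1 : ℕ) : ℝ) := by
      rw [Real.rpow_natCast, pow_succ]; ring
    rw [this]
    apply Real.rpow_le_rpow_of_exponent_le (by norm_num)
    have : n * n ≤ 4 * ((n/2) * (n - n/2) + 1) := by
      obtain ⟨k, hk | hk⟩ := Nat.even_or_odd' n
      · have e1 : n / 2 = k := by omega
        have e2 : n - k = k := by omega
        rw [e1, e2, hk]; nlinarith
      · have e1 : n / 2 = k := by omega
        have e2 : n - k = k + 1 := by omega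
        rw [e1, e2, hk]; nlinarith
    have : (n:ℝ) * n ≤ 4 * (((n/2) * (n - n/2) + 1 : ℕ) : ℝ) := by exact_mod_cast this
    linarith
  have h1' : ((n.choose (n/2) : ℕ) : ℝ) * 2 ^ ((n/2) * (n - n/2)) ≤ PhiN n := by exact_mod_cast h1
  have h2' : (2:ℝ) ^ n ≤ (n+1) * (n.choose (n/2) : ℕ) := by exact_mod_cast h2
  calc _ ≤ ((n+1) * (n.choose (n/2) : ℕ)) * (2 * (2:ℝ) ^ ((n/2) * (n - n/2))) := by gcongr
    _ = 2 * (n+1) * (((n.choose (n/2) : ℕ) : ℝ) * 2 ^ ((n/2) * (n - n/2))) := by ring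
    _ ≤ _ := by gcongr

lemma phi_pos (n : ℕ) : (0:ℝ) < PhiN n := by
  have h2 := phi_lower n
  have h : (0:ℝ) < (2:ℝ)^n * (2:ℝ) ^ ((n:ℝ)*n/4) := by positivity
  by_contra hc
  have this : (PhiN n : ℝ) = 0 := le_antisymm (not_lt.mp hc) (by positivity)
  rw [this, mul_zero] at h2
  linarith

lemma BB_card {n : ℕ} {L : Type} [DecidableEq L] [Fintype L] (S : Finset (Fin n)) (f : Fin n → L)
    (m : ℕ) (hm : ∀ c, (Finset.univ.filter (fun x => f x = c)).card ≤ m) :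
    4 * (BB S f).card ≤ n * m := by
  have h1 : (BB S f).card = ∑ c : L, (S.filter (fun x => f x = c)).card * (Sᶜ.filter (fun x => f x = c)).card := by
    rw [Finset.card_eq_sum_card_fiberwise (f := fun p => f p.1) (t := Finset.univ) (by simp)]
    refine Finset.sum_congr rfl fun c _ => ?_
    rw [← Finset.card_product]
    congr 1
    ext ⟨x, y⟩
    simp only [BB, Finset.mem_filter, Finset.mem_product]
    constructor
    · rintro ⟨⟨⟨a, b⟩, c⟩, d⟩; exact ⟨⟨a, d⟩, b, c ▸ d⟩
    · rintro ⟨⟨a, d⟩, b, c⟩; exact ⟨⟨⟨a, b⟩, d.trans c.symm⟩, d⟩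
  have h2 : ∀ c, (S.filter (fun x => f x = c)).card + (Sᶜ.filter (fun x => f x = c)).card
      = (Finset.univ.filter (fun x => f x = c)).card := by
    intro c
    rw [← Finset.card_union_of_disjoint, ← Finset.filter_union, Finset.union_compl]
    exact Finset.disjoint_filter_filter disjoint_compl_right
  have h3 : ∑ c, (Finset.univ.filter (fun x => f x = c)).card = n := by
    have := Finset.card_eq_sum_card_fiberwise (f := f) (s := Finset.univ) (t := Finset.univ) (by simp)
    simpa using this.symm
  rw [h1, Finset.mul_sum]
  calc _ ≤ ∑ c, (Finset.univ.filter (fun x => f x = c)).card * m := by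
        refine Finset.sum_le_sum fun c _ => ?_
        have a := h2 c
        have b := hm c
        set p := (S.filter (fun x => f x = c)).card
        set q := (Sᶜ.filter (fun x => f x = c)).card
        rw [← a] at b ⊢
        calc 4 * (p * q) ≤ (p+q)*(p+q) := by
              zify; nlinarith [sq_nonneg ((p:ℤ)-q)]
          _ ≤ _ := Nat.mul_le_mul_left _ b
    _ = _ := by rw [← Finset.sum_mul, h3]

/-- the small parameter -/
noncomputable def tt (n : ℕ) : ℝ := (2:ℝ) ^ (-(n:ℝ)/4)

lemma tt_pos (n : ℕ) : 0 < tt n := by unfold tt; positivity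

lemma BB_pow {n : ℕ} {L : Type} [DecidableEq L] [Fintype L] (S : Finset (Fin n)) (f : Fin n → L)
    (m k : ℕ) (hmk : m + k = n) (hm : ∀ c, (Finset.univ.filter (fun x => f x = c)).card ≤ m) :
    (2:ℝ) ^ (BB S f).card ≤ (2:ℝ) ^ ((n:ℝ)*n/4) * tt n ^ k := by
  have h := BB_card S f m hm
  have h' : 4 * ((BB S f).card : ℝ) ≤ n * m := by exact_mod_cast h
  unfold tt
  rw [← Real.rpow_natCast, ← Real.rpow_natCast, ← Real.rpow_mul (by norm_num), ← Real.rpow_add (by norm_num)]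
  apply Real.rpow_le_rpow_of_exponent_le (by norm_num)
  have : (n:ℝ) = m + k := by exact_mod_cast hmk.symm
  have : (n:ℝ)*n = n * m + n * k := by nth_rewrite 2 [this]; ring
  nlinarith

open Classical in
/-- count of 3-level configurations -/
noncomputable def XN (n : ℕ) : ℕ :=
  ∑ S : Finset (Fin n), ∑ f ∈ Finset.univ.filter (fun f : Fin n → Fin n => ¬ ∃ c, ∀ x, f x = c), 2 ^ (BB S f).card

lemma XN_bound (n : ℕ) (hn : 0 < n) : (XN n : ℝ) ≤ 2 * (n+1) * (n * ((1 + n * tt n)^n - 1)) * PhiN n := by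
  classical
  have ht := tt_pos n
  have h1 : ∀ S : Finset (Fin n), ∀ f ∈ Finset.univ.filter (fun f : Fin n → Fin n => ¬ ∃ c, ∀ x, f x = c),
      (2:ℝ) ^ (BB S f).card ≤ (2:ℝ) ^ ((n:ℝ)*n/4) *
        ∑ c : Fin n, if f = (fun _ => c) then 0 else ∏ x, (if f x = c then 1 else tt n) := by
    intro S f hf
    simp only [Finset.mem_filter, Finset.mem_univ, true_and] at hf
    have : Nonempty (Fin n) := ⟨⟨0, hn⟩⟩
    obtain ⟨c, -, hc⟩ := Finset.exists_max_image Finset.univ (fun c => (Finset.univ.filter (fun x => f x = c)).card) Finset.univ_nonempty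
    have hb := BB_pow S f _ (Finset.univ.filter (fun x => ¬ f x = c)).card (by
      rw [Finset.card_filter_add_card_filter_not]; simp) (fun c' => hc c' (Finset.mem_univ _))
    refine hb.trans ?_
    gcongr
    have hfc : f ≠ fun _ => c := fun h => hf ⟨c, fun x => by rw [h]⟩
    refine le_trans (le_of_eq ?_) (Finset.single_le_sum (f := fun c => if f = (fun _ => c) then 0 else ∏ x, (if f x = c then (1:ℝ) else tt n)) (fun c _ => ?_) (Finset.mem_univ c))
    · simp only [hfc, if_false]
      rw [Finset.prod_ite]; simp
    · split_ifs
      · exact le_rfl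
      · exact Finset.prod_nonneg fun x _ => by split_ifs <;> positivity
  have h2 : ∀ c : Fin n, ∑ f : Fin n → Fin n, (if f = (fun _ => c) then 0 else ∏ x, (if f x = c then 1 else tt n)) ≤ (1 + n * tt n)^n - 1 := by
    intro c
    have e : ∑ f : Fin n → Fin n, ∏ x, (if f x = c then 1 else tt n) = (∑ j : Fin n, if j = c then 1 else tt n) ^ n := by
      have := Finset.prod_univ_sum (fun _ : Fin n => (Finset.univ : Finset (Fin n))) (fun _ j => if j = c then (1:ℝ) else tt n)
      simp only [Fintype.piFinset_univ] at this
      rw [← this]; simp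
    have e2 : (∑ j : Fin n, if j = c then 1 else tt n) ≤ 1 + n * tt n := by
      calc _ ≤ ∑ j : Fin n, ((if j = c then 1 else 0) + tt n) := Finset.sum_le_sum fun j _ => by split_ifs <;> linarith
        _ = _ := by rw [Finset.sum_add_distrib]; simp
    have e3 : ∑ f : Fin n → Fin n, (if f = (fun _ => c) then 0 else ∏ x, (if f x = c then 1 else tt n))
        = ∑ f : Fin n → Fin n, ∏ x, (if f x = c then 1 else tt n) - 1 := by
      have : ∀ f : Fin n → Fin n, (if f = (fun _ => c) then 0 else ∏ x, (if f x = c then 1 else tt n))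
        = ∏ x, (if f x = c then 1 else tt n) - (if f = (fun _ => c) then 1 else 0) := by
        intro f
        split_ifs with h
        · subst h; simp
        · simp
      rw [Finset.sum_congr rfl fun f _ => this f, Finset.sum_sub_distrib]
      simp
    rw [e3, e]
    gcongr
  have h3 : (XN n : ℝ) ≤ ∑ S : Finset (Fin n), ∑ f : Fin n → Fin n, (2:ℝ) ^ ((n:ℝ)*n/4) *
        ∑ c : Fin n, if f = (fun _ => c) then 0 else ∏ x, (if f x = c then 1 else tt n) := by
    unfold XN
    push_cast
    refine Finset.sum_le_sum fun S _ => ?_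
    refine (Finset.sum_le_sum (h1 S)).trans ?_
    refine Finset.sum_le_sum_of_subset_of_nonneg (Finset.subset_univ _) fun f _ _ => ?_
    refine mul_nonneg (by positivity) (Finset.sum_nonneg fun c _ => ?_)
    split_ifs
    · exact le_rfl
    · exact Finset.prod_nonneg fun x _ => by split_ifs <;> positivity
  have h4 : ∑ f : Fin n → Fin n, (2:ℝ) ^ ((n:ℝ)*n/4) *
        ∑ c : Fin n, (if f = (fun _ => c) then 0 else ∏ x, (if f x = c then 1 else tt n))
      ≤ (2:ℝ) ^ ((n:ℝ)*n/4) * (n * ((1 + n * tt n)^n - 1)) := by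
    rw [← Finset.mul_sum, Finset.sum_comm]
    gcongr
    refine (Finset.sum_le_sum fun c _ => h2 c).trans (le_of_eq (by simp; ring))
  have h5 : (XN n : ℝ) ≤ (2:ℝ)^n * (2:ℝ) ^ ((n:ℝ)*n/4) * (n * ((1 + n * tt n)^n - 1)) := by
    refine h3.trans ((Finset.sum_le_sum fun S _ => h4).trans (le_of_eq ?_))
    simp; ring
  have h6 : (0:ℝ) ≤ n * ((1 + n * tt n)^n - 1) := by
    have : (1:ℝ) ≤ (1 + n * tt n)^n := one_le_pow₀ (by have : 0 ≤ n * tt n := by positivity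
                                                       linarith)
    have : (0:ℝ) ≤ (1 + n * tt n)^n - 1 := by linarith
    positivity
  calc _ ≤ _ := h5
    _ ≤ (2 * (n+1) * (PhiN n : ℝ)) * (n * ((1 + n * tt n)^n - 1)) := mul_le_mul_of_nonneg_right (phi_lower n) h6
    _ = _ := by ring

/-- count of configurations with an isolated vertex -/
def YN (n : ℕ) : ℕ := ∑ v : Fin n, ∑ S : Finset (Fin n), 2 ^ (BB S (fun x => decide (x = v))).card

lemma YN_bound (n : ℕ) (hn : 2 ≤ n) : (YN n : ℝ) ≤ 2 * (n+1) * (n * tt n) * PhiN n := by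
  have h1 : ∀ v : Fin n, ∀ S : Finset (Fin n), (2:ℝ) ^ (BB S (fun x => decide (x = v))).card ≤
      (2:ℝ) ^ ((n:ℝ)*n/4) * tt n := by
    intro v S
    have := BB_pow S (fun x => decide (x = v)) (n-1) 1 (by omega) (by
      intro c
      have hlt : ∀ s : Finset (Fin n), s ≠ Finset.univ → s.card ≤ n - 1 := by
        intro s hs
        have := Finset.card_lt_univ_of_notMem (s := s) (x := (by
          have := fun h => hs (Finset.eq_univ_iff_forall.2 h)
          exact (not_forall.1 this).choose)) (by
          have := fun h => hs (Finset.eq_univ_iff_forall.2 h)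
          exact (not_forall.1 this).choose_spec)
        simp at this; omega
      cases c with
      | true =>
        have : (Finset.univ.filter (fun x => decide (x = v) = true)) = {v} := by ext; simp
        rw [this]; simp; omega
      | false =>
        apply hlt
        intro h
        have := Finset.eq_univ_iff_forall.1 h v
        simp at this)
    simpa using this
  have ht := tt_pos n
  calc (YN n : ℝ) ≤ ∑ v : Fin n, ∑ S : Finset (Fin n), (2:ℝ) ^ ((n:ℝ)*n/4) * tt n := by
        unfold YN; push_cast
        exact Finset.sum_le_sum fun v _ => Finset.sum_le_sum fun S _ => h1 v S
    _ = ((2:ℝ)^n * (2:ℝ) ^ ((n:ℝ)*n/4)) * (n * tt n) := by simp; ring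
    _ ≤ (2 * (n+1) * (PhiN n : ℝ)) * (n * tt n) := mul_le_mul_of_nonneg_right (phi_lower n) (by positivity)
    _ = _ := by ring

open Filter in
lemma poly_tt (k : ℕ) : Tendsto (fun n : ℕ => (n:ℝ)^k * tt n) atTop (nhds 0) := by
  have : ∀ n : ℕ, tt n = ((2:ℝ) ^ (-(1:ℝ)/4)) ^ n := by
    intro n; unfold tt
    rw [← Real.rpow_natCast, ← Real.rpow_mul (by norm_num)]; congr 1; ring
  simp only [this]
  apply tendsto_pow_const_mul_const_pow_of_lt_one k (by positivity)
  apply Real.rpow_lt_one_of_one_lt_of_neg <;> norm_num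

open Filter in
lemma YN_tendsto : Tendsto (fun n : ℕ => (YN n : ℝ) / PhiN n) atTop (nhds 0) := by
  have h : Tendsto (fun n : ℕ => 2 * ((n:ℝ)^2 * tt n) + 2 * ((n:ℝ)^1 * tt n)) atTop (nhds (2*0+2*0)) :=
    ((poly_tt 2).const_mul 2).add ((poly_tt 1).const_mul 2)
  rw [show (2*0+2*0:ℝ) = 0 by norm_num] at h
  refine squeeze_zero' (Eventually.of_forall fun n => by positivity) ?_ h
  filter_upwards [eventually_ge_atTop 2] with n hn
  rw [div_le_iff₀ (phi_pos n)]
  refine (YN_bound n hn).trans (le_of_eq (by ring))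

open Filter in
lemma XN_tendsto : Tendsto (fun n : ℕ => (XN n : ℝ) / PhiN n) atTop (nhds 0) := by
  have h : Tendsto (fun n : ℕ => 4 * ((n:ℝ)^4 * tt n) + 4 * ((n:ℝ)^3 * tt n)) atTop (nhds (4*0+4*0)) :=
    ((poly_tt 4).const_mul 4).add ((poly_tt 3).const_mul 4)
  rw [show (4*0+4*0:ℝ) = 0 by norm_num] at h
  refine squeeze_zero' (Eventually.of_forall fun n => by positivity) ?_ h
  have h2 := (poly_tt 2).eventually (ge_mem_nhds (show (0:ℝ) < 1 by norm_num))
  filter_upwards [h2, eventually_gt_atTop 0] with n hn hn0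
  have ht := tt_pos n
  rw [div_le_iff₀ (phi_pos n)]
  refine (XN_bound n hn0).trans ?_
  have h0 : (0:ℝ) ≤ (n:ℝ)^2 * tt n := by positivity
  have h3 : (1 + n * tt n)^n - 1 ≤ 2 * ((n:ℝ)^2 * tt n) := by
    have e1 : (1 + n * tt n)^n ≤ Real.exp ((n:ℝ)^2 * tt n) := by
      calc (1 + n * tt n)^n ≤ (Real.exp (n * tt n))^n := by
            gcongr; rw [add_comm]; exact Real.add_one_le_exp _
        _ = _ := by rw [← Real.exp_nat_mul]; congr 1; ring
    have e2 := Real.abs_exp_sub_one_le (x := (n:ℝ)^2 * tt n) (by rw [abs_of_nonneg h0]; exact hn)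
    rw [abs_of_nonneg h0] at e2
    have := le_abs_self (Real.exp ((n:ℝ)^2 * tt n) - 1)
    linarith
  calc _ ≤ 2 * (n+1) * (n * (2 * ((n:ℝ)^2 * tt n))) * PhiN n := by gcongr
    _ = _ := by ring

section struct
variable {n : ℕ} {r : Fin n → Fin n → Prop}

lemma rel_wf (hr : IsStrictOrderRel r) : WellFounded r := by
  have : IsTrans (Fin n) r := ⟨hr.2⟩
  have : Std.Irrefl r := ⟨hr.1⟩
  exact Finite.wellFounded_of_trans_of_irrefl r

lemma rel_wf' (hr : IsStrictOrderRel r) : WellFounded (fun a b => r b a) :=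
  rel_wf (r := fun a b => r b a) ⟨hr.1, fun a b c h1 h2 => hr.2 _ _ _ h2 h1⟩

lemma cov_above (hr : IsStrictOrderRel r) {a b : Fin n} (h : r a b) :
    ∃ c, r a c ∧ (¬ ∃ d, r a d ∧ r d c) ∧ (c = b ∨ r c b) := by
  obtain ⟨c, hc, hm⟩ := (rel_wf hr).has_min {c | r a c ∧ (c = b ∨ r c b)} ⟨b, h, Or.inl rfl⟩
  refine ⟨c, hc.1, ?_, hc.2⟩
  rintro ⟨d, h1, h2⟩
  refine hm d ⟨h1, Or.inr ?_⟩ h2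
  rcases hc.2 with e | e
  · exact e ▸ h2
  · exact hr.2 _ _ _ h2 e

lemma cov_below (hr : IsStrictOrderRel r) {a b : Fin n} (h : r a b) :
    ∃ c, r c b ∧ (¬ ∃ d, r c d ∧ r d b) ∧ (c = a ∨ r a c) := by
  obtain ⟨c, hc, hm⟩ := (rel_wf' hr).has_min {c | r c b ∧ (c = a ∨ r a c)} ⟨a, h, Or.inl rfl⟩
  refine ⟨c, hc.1, ?_, hc.2⟩
  rintro ⟨d, h1, h2⟩
  refine hm d ⟨h2, Or.inr ?_⟩ h1
  rcases hc.2 with e | e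
  · exact e ▸ h1
  · exact hr.2 _ _ _ e h1

lemma rk_mono (hr : IsStrictOrderRel r) {rk : Fin n → ℕ}
    (hrk : ∀ a b, r a b → (¬ ∃ c, r a c ∧ r c b) → rk b = rk a + 1) :
    ∀ b a, r a b → rk a < rk b := by
  intro b
  induction b using (rel_wf hr).induction with
  | _ b ih =>
    intro a h
    obtain ⟨c, h1, h2, h3⟩ := cov_below hr h
    have := hrk c b h1 h2
    rcases h3 with e | e
    · subst e; omega
    · have := ih c h1 a e; omega

lemma up_chain (hr : IsStrictOrderRel r) {rk : Fin n → ℕ}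
    (hrk : ∀ a b, r a b → (¬ ∃ c, r a c ∧ r c b) → rk b = rk a + 1)
    {u p q : Fin n} (h1 : r u p) (h2 : r p q) :
    ∃ p q, r u p ∧ r p q ∧ rk q = rk u + 2 := by
  obtain ⟨p', a1, a2, a3⟩ := cov_above hr h1
  have h2' : r p' q := by
    rcases a3 with e | e
    · exact e ▸ h2
    · exact hr.2 _ _ _ e h2
  obtain ⟨q', b1, b2, -⟩ := cov_above hr h2'
  have e1 := hrk _ _ a1 a2
  have e2 := hrk _ _ b1 b2
  exact ⟨p', q', a1, b1, by omega⟩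

lemma down_chain (hr : IsStrictOrderRel r) {rk : Fin n → ℕ}
    (hrk : ∀ a b, r a b → (¬ ∃ c, r a c ∧ r c b) → rk b = rk a + 1)
    {v p q : Fin n} (h1 : r p v) (h2 : r q p) :
    ∃ p q, r p v ∧ r q p ∧ rk v = rk q + 2 := by
  obtain ⟨p', a1, a2, a3⟩ := cov_below hr h1
  have h2' : r q p' := by
    rcases a3 with e | e
    · exact e ▸ h2
    · exact hr.2 _ _ _ h2 e
  obtain ⟨q', b1, b2, -⟩ := cov_below hr h2'
  have e1 := hrk _ _ a1 a2
  have e2 := hrk _ _ b1 b2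
  exact ⟨p', q', a1, b1, by omega⟩

lemma avoid_cases (ha : RelAvoids31 r) (w : Fin n) {x y z : Fin n} (h1 : r x y) (h2 : r y z) :
    r w x ∨ r x w ∨ r w y ∨ r y w ∨ r w z ∨ r z w := by
  by_contra h
  push Not at h
  exact ha ⟨w, x, y, z, h1, h2, ⟨h.1, h.2.1⟩, ⟨h.2.2.1, h.2.2.2.1⟩, ⟨h.2.2.2.2.1, h.2.2.2.2.2⟩⟩

lemma claimA (hr : IsStrictOrderRel r) (ha : RelAvoids31 r) {rk : Fin n → ℕ}
    (hrk : ∀ a b, r a b → (¬ ∃ c, r a c ∧ r c b) → rk b = rk a + 1)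
    {x y z : Fin n} (hxy : r x y) (hyz : r y z) (u v : Fin n) (huv : rk u + 2 ≤ rk v) : r u v := by
  have mono := rk_mono hr hrk
  have tr := hr.2
  by_contra hn
  have hu : ∀ p q, r u p → ¬ r p q := by
    intro p q h1 h2
    obtain ⟨p, q, h1, h2, h3⟩ := up_chain hr hrk h1 h2
    have m1 := mono _ _ h1
    have m2 := mono _ _ h2
    rcases avoid_cases ha v h1 h2 with h | h | h | h | h | h
    · have := mono _ _ h; omega
    · exact hn h
    · have := mono _ _ h; omega
    · exact hn (tr _ _ _ h1 h)
    · have := mono _ _ h; omega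
    · exact hn (tr _ _ _ h1 (tr _ _ _ h2 h))
  have hv : ∀ p q, r p v → ¬ r q p := by
    intro p q h1 h2
    obtain ⟨p, q, h1, h2, h3⟩ := down_chain hr hrk h1 h2
    have m1 := mono _ _ h1
    have m2 := mono _ _ h2
    rcases avoid_cases ha u h2 h1 with h | h | h | h | h | h
    · exact hn (tr _ _ _ (tr _ _ _ h h2) h1)
    · have := mono _ _ h; omega
    · exact hn (tr _ _ _ h h1)
    · have := mono _ _ h; omega
    · exact hn h
    · have := mono _ _ h; omega
  obtain ⟨y, z, hxy, hyz, hz⟩ := up_chain hr hrk hxy hyz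
  have m1 := mono _ _ hxy
  have m2 := mono _ _ hyz
  have k1 : rk x + 1 ≤ rk u := by
    rcases avoid_cases ha u hxy hyz with h | h | h | h | h | h
    · exact absurd hxy (hu _ _ h)
    · exact mono _ _ h
    · exact absurd hyz (hu _ _ h)
    · have := mono _ _ h; omega
    · have := hrk _ _ h (by rintro ⟨c, c1, c2⟩; exact hu _ _ c1 c2)
      omega
    · have := mono _ _ h; omega
  have k2 : rk v ≤ rk x + 1 := by
    rcases avoid_cases ha v hxy hyz with h | h | h | h | h | h
    · have := mono _ _ h; omega
    · have := hrk _ _ h (by rintro ⟨c, c1, c2⟩; exact hv _ _ c2 c1)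
      omega
    · have := mono _ _ h; omega
    · exact absurd hxy (hv _ _ h)
    · have := mono _ _ h; omega
    · exact absurd hyz (hv _ _ h)
  omega

/-- decoding a configuration -/
def decR (c : Σ _ : Finset (Fin n), Σ _ : Fin n → Fin n, Finset (Fin n × Fin n)) (x y : Fin n) : Prop :=
  let l : Fin n → ℕ := fun x => (c.2.1 x : ℕ) + if x ∈ c.1 then 0 else 1
  l x + 2 ≤ l y ∨ (l y = l x + 1 ∧ (x ∉ c.1 ∨ y ∈ c.1 ∨ (x, y) ∈ c.2.2))

lemma encode3 (hr : IsStrictOrderRel r) (ha : RelAvoids31 r) (hw : RelWeaklyGraded r)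
    {x y z : Fin n} (hxy : r x y) (hyz : r y z) :
    ∃ (S : Finset (Fin n)) (f : Fin n → Fin n) (E : Finset (Fin n × Fin n)),
      (¬ ∃ c, ∀ x, f x = c) ∧ E ⊆ BB S f ∧ decR ⟨S, f, E⟩ = r := by
  classical
  obtain ⟨rk, hrk, h0⟩ := hw
  have mono := rk_mono hr hrk
  have cA := claimA hr ha hrk hxy hyz
  have hdown : ∀ v, 1 ≤ rk v → ∃ w, rk w + 1 = rk v := by
    intro v hv
    obtain ⟨u, -, hu⟩ := h0 v
    rcases Nat.lt_or_ge (rk v) 2 with h | h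
    · exact ⟨u, by omega⟩
    · obtain ⟨c, h1, h2, -⟩ := cov_below hr (cA u v (by omega))
      exact ⟨c, (hrk _ _ h1 h2).symm⟩
  have hall : ∀ k v, k ≤ rk v → ∃ w, rk w + k = rk v := by
    intro k
    induction k with
    | zero => intro v _; exact ⟨v, rfl⟩
    | succ k ih =>
      intro v hv
      obtain ⟨w, hw⟩ := ih v (by omega)
      obtain ⟨w', hw'⟩ := hdown w (by omega)
      exact ⟨w', by omega⟩
  have hlt : ∀ v, rk v < n := by
    intro v
    have : Finset.range (rk v + 1) ⊆ Finset.univ.image rk := by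
      intro j hj
      simp only [Finset.mem_range] at hj
      obtain ⟨w, hw⟩ := hall (rk v - j) v (by omega)
      simp only [Finset.mem_image, Finset.mem_univ, true_and]
      exact ⟨w, by omega⟩
    have h1 := Finset.card_le_card this
    have h2 := Finset.card_image_le (s := (Finset.univ : Finset (Fin n))) (f := rk)
    simp at h1 h2
    omega
  let S : Finset (Fin n) := Finset.univ.filter (fun x => ∀ a, rk a + 1 = rk x → r a x)
  have hS : ∀ x, x ∈ S ↔ ∀ a, rk a + 1 = rk x → r a x := by intro x; simp [S]
  have hpos : ∀ x, x ∉ S → 1 ≤ rk x := by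
    intro x hx
    rw [hS] at hx
    push Not at hx
    obtain ⟨a, h, -⟩ := hx
    omega
  have hup : ∀ x, x ∉ S → ∀ b, rk b = rk x + 1 → r x b := by
    intro x hx b hb
    rw [hS] at hx
    push Not at hx
    obtain ⟨a, h1, h2⟩ := hx
    by_contra hxb
    have hab := cA a b (by omega)
    have : ∃ c, r a c ∧ r c b := by
      by_contra hc
      have := hrk _ _ hab hc
      omega
    obtain ⟨c, c1, c2⟩ := this
    have m1 := mono _ _ c1
    have m2 := mono _ _ c2
    rcases avoid_cases ha x c1 c2 with h | h | h | h | h | h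
    · have := mono _ _ h; omega
    · exact h2 h
    · have := mono _ _ h; omega
    · have := mono _ _ h; omega
    · exact hxb h
    · have := mono _ _ h; omega
  let f : Fin n → Fin n := fun x => if x ∈ S then ⟨rk x, hlt x⟩ else ⟨rk x - 1, by have := hlt x; omega⟩
  have hf : ∀ x, (f x : ℕ) + (if x ∈ S then 0 else 1) = rk x := by
    intro x
    by_cases h : x ∈ S
    · simp [f, h]
    · have := hpos x h
      simp [f, h]; omega
  refine ⟨S, f, (BB S f).filter (fun p => r p.1 p.2), ?_, Finset.filter_subset _ _, ?_⟩
  · rintro ⟨c, hc⟩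
    have e1 := hf x
    have e2 := hf z
    have m1 := mono _ _ hxy
    have m2 := mono _ _ hyz
    rw [hc] at e1 e2
    split_ifs at e1 e2 <;> omega
  · funext a b
    unfold decR
    simp only [hf]
    apply propext
    constructor
    · rintro (h | ⟨h, h' | h' | h'⟩)
      · exact cA _ _ h
      · exact hup a h' b h
      · exact (hS b).1 h' a h.symm
      · exact (Finset.mem_filter.1 h').2
    · intro h
      have m := mono _ _ h
      rcases Nat.lt_or_ge (rk b) (rk a + 2) with h1 | h1
      · right
        refine ⟨by omega, ?_⟩
        by_cases ha' : a ∈ S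
        · by_cases hb' : b ∈ S
          · exact Or.inr (Or.inl hb')
          · right; right
            have e1 := hf a
            have e2 := hf b
            simp only [ha', hb', if_true, if_false] at e1 e2
            simp only [BB, Finset.mem_filter, Finset.mem_product, Finset.mem_compl]
            exact ⟨⟨⟨ha', hb'⟩, Fin.ext (by omega)⟩, h⟩
        · exact Or.inl ha'
      · exact Or.inl h1

/-- Bottom chains ending in `v`. -/
def IsBotC (r : Fin n → Fin n → Prop) (v : Fin n) (s : Finset (Fin n)) : Prop :=
  RelChain r s ∧ v ∈ s ∧ ∀ a ∈ s, a = v ∨ r a v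

lemma exists_max_card (P : Finset (Fin n) → Prop) (h : ∃ s, P s) :
    ∃ s, P s ∧ ∀ t, P t → t.card ≤ s.card := by
  classical
  obtain ⟨s0, h0⟩ := h
  obtain ⟨s, hs, hm⟩ := Finset.exists_max_image (Finset.univ.filter P) Finset.card ⟨s0, by simpa using h0⟩
  exact ⟨s, by simpa using hs, fun t ht => hm t (by simpa using ht)⟩

lemma chain_insert {s : Finset (Fin n)} (hs : RelChain r s) (c : Fin n)
    (hc : ∀ a ∈ s, a ≠ c → r a c ∨ r c a) : RelChain r (insert c s) := by
  intro a ha b hb hab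
  rw [Finset.mem_insert] at ha hb
  rcases ha with rfl | ha <;> rcases hb with rfl | hb
  · exact absurd rfl hab
  · exact (hc b hb hab.symm).symm
  · exact hc a ha hab
  · exact hs a ha b hb hab

lemma maxchain_union (hr : IsStrictOrderRel r) (b : Fin n) (Q T : Finset (Fin n))
    (hQ : IsBotC r b Q)
    (hQm : ∀ c, r c b → (∀ a ∈ Q, a ≠ c → r a c ∨ r c a) → c ∈ Q)
    (hT : RelChain r T ∧ ∀ x ∈ T, r b x)
    (hTm : ∀ T', (RelChain r T' ∧ ∀ x ∈ T', r b x) → T'.card ≤ T.card) :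
    RelMaxChain r (Q ∪ T) ∧ (Q ∪ T).card = Q.card + T.card := by
  refine ⟨⟨?_, ?_⟩, ?_⟩
  · have key : ∀ x ∈ Q, ∀ y ∈ T, r x y := by
      intro x hx y hy
      rcases hQ.2.2 x hx with rfl | h
      · exact hT.2 y hy
      · exact hr.2 _ _ _ h (hT.2 y hy)
    intro x hx y hy hxy
    rw [Finset.mem_union] at hx hy
    rcases hx with hx | hx <;> rcases hy with hy | hy
    · exact hQ.1 x hx y hy hxy
    · exact Or.inl (key x hx y hy)
    · exact Or.inr (key y hy x hx)
    · exact hT.1 x hx y hy hxy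
  · intro t ht hsub
    refine Finset.Subset.antisymm hsub ?_
    intro c hc
    rw [Finset.mem_union]
    have hb : b ∈ t := hsub (Finset.mem_union_left _ hQ.2.1)
    by_cases hcb : c = b
    · left; rw [hcb]; exact hQ.2.1
    rcases ht c hc b hb hcb with h | h
    · left
      exact hQm c h fun a ha hac => ht a (hsub (Finset.mem_union_left _ ha)) c hc hac
    · right
      by_contra hcT
      have := hTm (insert c T) ⟨chain_insert hT.1 c fun a ha hac =>
        ht a (hsub (Finset.mem_union_right _ ha)) c hc hac, by
          intro x hx
          rw [Finset.mem_insert] at hx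
          rcases hx with rfl | hx
          · exact h
          · exact hT.2 x hx⟩
      rw [Finset.card_insert_of_notMem hcT] at this
      omega
  · apply Finset.card_union_of_disjoint
    rw [Finset.disjoint_left]
    intro x hx hx'
    rcases hQ.2.2 x hx with rfl | h
    · exact hr.1 _ (hT.2 x hx')
    · exact hr.1 _ (hr.2 _ _ _ h (hT.2 x hx'))

lemma strong_weak (hr : IsStrictOrderRel r) (hs : RelStronglyGraded r) : RelWeaklyGraded r := by
  have h1 : ∀ v, ∃ s, IsBotC r v s ∧ ∀ t, IsBotC r v t → t.card ≤ s.card := fun v =>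
    exists_max_card _ ⟨{v}, by intro a ha b hb; simp_all, by simp, by simp⟩
  choose A hA hAm using h1
  have hext : ∀ v c, r c v → (∀ a ∈ A v, a ≠ c → r a c ∨ r c a) → c ∈ A v := by
    intro v c hc hcc
    by_contra hn
    have := hAm v (insert c (A v)) ⟨chain_insert (hA v).1 c hcc, Finset.mem_insert_of_mem (hA v).2.1, by
      intro a ha
      rw [Finset.mem_insert] at ha
      rcases ha with rfl | ha
      · exact Or.inr hc
      · exact (hA v).2.2 a ha⟩
    rw [Finset.card_insert_of_notMem hn] at this
    omega
  have hpos : ∀ v, 0 < (A v).card := fun v => Finset.card_pos.2 ⟨v, (hA v).2.1⟩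
  refine ⟨fun v => (A v).card - 1, ?_, ?_⟩
  · intro a b hab hcov
    obtain ⟨T, hT, hTm⟩ := exists_max_card (fun T => RelChain r T ∧ ∀ x ∈ T, r b x)
      ⟨∅, by intro a ha; simp at ha, by simp⟩
    have hbA : b ∉ A a := by
      intro h
      rcases (hA a).2.2 b h with rfl | h
      · exact hr.1 _ hab
      · exact hr.1 _ (hr.2 _ _ _ h hab)
    have M1 := maxchain_union hr b (A b) T (hA b) (hext b) hT hTm
    have M2 := maxchain_union hr b (insert b (A a)) T
      ⟨chain_insert (hA a).1 b (by
        intro x hx _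
        left
        rcases (hA a).2.2 x hx with rfl | h
        · exact hab
        · exact hr.2 _ _ _ h hab), Finset.mem_insert_self _ _, by
        intro x hx
        rw [Finset.mem_insert] at hx
        rcases hx with rfl | hx
        · exact Or.inl rfl
        · right
          rcases (hA a).2.2 x hx with rfl | h
          · exact hab
          · exact hr.2 _ _ _ h hab⟩ (by
        intro c hc hcc
        apply Finset.mem_insert_of_mem
        by_cases hca : a = c
        · rw [← hca]; exact (hA a).2.1
        rcases hcc a (Finset.mem_insert_of_mem (hA a).2.1) hca with h | h
        · exact absurd ⟨c, h, hc⟩ hcov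
        · exact hext a c h fun x hx => hcc x (Finset.mem_insert_of_mem hx)) hT hTm
    have := hs _ _ M1.1 M2.1
    rw [M1.2, M2.2, Finset.card_insert_of_notMem hbA] at this
    have p1 := hpos a
    have p2 := hpos b
    dsimp only
    omega
  · intro v
    obtain ⟨u, hu, hm⟩ := (rel_wf hr).has_min {u | u = v ∨ r u v} ⟨v, Or.inl rfl⟩
    refine ⟨u, ?_, ?_⟩
    · rcases hu with rfl | hu
      · exact Relation.ReflTransGen.refl
      · exact Relation.ReflTransGen.single (Or.inr hu)
    · have : A u ⊆ {u} := by
        intro x hx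
        rw [Finset.mem_singleton]
        rcases (hA u).2.2 x hx with h | h
        · exact h
        · refine absurd h (hm x ?_)
          rcases hu with rfl | hu
          · exact Or.inr h
          · exact Or.inr (hr.2 _ _ _ h hu)
      have := Finset.card_le_card this
      simp at this
      dsimp only
      omega

end struct

open Classical in
lemma gCount_le (n : ℕ) : gCount n ≤ wCount n := by
  unfold gCount wCount
  exact Nat.card_le_card_of_injective
    (fun r => (⟨r.1, r.2.1, strong_weak r.2.1 r.2.2.1, r.2.2.2⟩ :
      {r : Fin n → Fin n → Prop // IsStrictOrderRel r ∧ RelWeaklyGraded r ∧ RelAvoids31 r}))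
    (fun a b h => Subtype.ext (by simpa using h))

lemma wCount_le (n : ℕ) : wCount n ≤ PhiN n + XN n := by
  classical
  let C1 : Finset (Σ _ : Finset (Fin n), Finset (Fin n × Fin n)) :=
    Finset.univ.sigma fun S => (S ×ˢ Sᶜ).powerset
  let C2 : Finset (Σ _ : Finset (Fin n), Σ _ : Fin n → Fin n, Finset (Fin n × Fin n)) :=
    Finset.univ.sigma fun S =>
      (Finset.univ.filter (fun f : Fin n → Fin n => ¬ ∃ c, ∀ x, f x = c)).sigma fun f => (BB S f).powerset
  have c1 : C1.card = PhiN n := by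
    simp only [C1, Finset.card_sigma, Finset.card_powerset, Finset.card_product, PhiN]
  have c2 : C2.card = XN n := by
    simp only [C2, Finset.card_sigma, Finset.card_powerset, XN]
  let R1 : Finset (Fin n → Fin n → Prop) := C1.image (fun c x y => (x, y) ∈ c.2)
  let R2 : Finset (Fin n → Fin n → Prop) := C2.image decR
  have hsub : {r : Fin n → Fin n → Prop | IsStrictOrderRel r ∧ RelWeaklyGraded r ∧ RelAvoids31 r}
      ⊆ ((R1 ∪ R2 : Finset (Fin n → Fin n → Prop)) : Set (Fin n → Fin n → Prop)) := by
    rintro r ⟨hr, hw, ha⟩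
    rw [Finset.mem_coe, Finset.mem_union]
    by_cases h3 : ∃ x y z, r x y ∧ r y z
    · right
      obtain ⟨x, y, z, hxy, hyz⟩ := h3
      obtain ⟨S, f, E, h1, h2, h3⟩ := encode3 hr ha hw hxy hyz
      refine Finset.mem_image.2 ⟨⟨S, f, E⟩, ?_, h3⟩
      simp only [C2, Finset.mem_sigma, Finset.mem_univ, true_and, Finset.mem_filter, Finset.mem_powerset]
      exact ⟨h1, h2⟩
    · left
      refine Finset.mem_image.2 ⟨⟨Finset.univ.filter (fun x => ∃ y, r x y),
        Finset.univ.filter (fun p : Fin n × Fin n => r p.1 p.2)⟩, ?_, ?_⟩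
      · simp only [C1, Finset.mem_sigma, Finset.mem_univ, true_and, Finset.mem_powerset]
        rintro ⟨x, y⟩ hxy
        simp only [Finset.mem_filter, Finset.mem_univ, true_and] at hxy
        simp only [Finset.mem_product, Finset.mem_compl, Finset.mem_filter, Finset.mem_univ, true_and]
        exact ⟨⟨y, hxy⟩, fun ⟨z, hz⟩ => h3 ⟨x, y, z, hxy, hz⟩⟩
      · funext x y
        simp
  calc wCount n = {r : Fin n → Fin n → Prop | IsStrictOrderRel r ∧ RelWeaklyGraded r ∧ RelAvoids31 r}.ncard := rfl
    _ ≤ ((R1 ∪ R2 : Finset (Fin n → Fin n → Prop)) : Set (Fin n → Fin n → Prop)).ncard :=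
        Set.ncard_le_ncard hsub (Finset.finite_toSet _)
    _ = (R1 ∪ R2).card := Set.ncard_coe_finset _
    _ ≤ R1.card + R2.card := Finset.card_union_le _ _
    _ ≤ C1.card + C2.card := Nat.add_le_add Finset.card_image_le Finset.card_image_le
    _ = _ := by rw [c1, c2]

/-- A two-level relation without isolated points is strongly graded. -/
lemma two_level {n : ℕ} (S : Finset (Fin n)) (r : Fin n → Fin n → Prop)
    (h : ∀ x y, r x y → x ∈ S ∧ y ∉ S) (h1 : ∀ v, ∃ w, r v w ∨ r w v) :
    IsStrictOrderRel r ∧ RelStronglyGraded r ∧ RelAvoids31 r := by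
  have hmax : ∀ s, RelMaxChain r s → s.card = if n = 0 then 0 else 2 := by
    intro s hs
    split_ifs with hn
    · subst hn
      rw [Finset.card_eq_zero, Finset.eq_empty_iff_forall_notMem]
      exact fun x => x.elim0
    · have hne : s.Nonempty := by
        rw [Finset.nonempty_iff_ne_empty]
        rintro rfl
        have := hs.2 {⟨0, Nat.pos_of_ne_zero hn⟩} (by intro a ha b hb; simp_all) (by simp)
        simp at this
      obtain ⟨v, hv⟩ := hne
      apply le_antisymm
      · by_contra hc
        push Not at hc
        obtain ⟨a, b, c, ha, hb, hcs, hab, hac, hbc⟩ := Finset.two_lt_card_iff.1 hc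
        have q1 := hs.1 a ha b hb hab
        have q2 := hs.1 a ha c hcs hac
        have q3 := hs.1 b hb c hcs hbc
        have := h a b; have := h b a; have := h a c; have := h c a; have := h b c; have := h c b
        tauto
      · by_contra hc
        have hs1 : s.card = 1 := by
          have := Finset.card_pos.2 ⟨v, hv⟩
          omega
        obtain ⟨v', rfl⟩ := Finset.card_eq_one.1 hs1
        rw [Finset.mem_singleton] at hv
        subst hv
        obtain ⟨w, hw⟩ := h1 v
        have hwv : w ≠ v := by
          rintro rfl
          have := h w w
          tauto
        have := hs.2 {w, v} (chain_insert (by intro a ha b hb; simp_all) w (by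
          intro a ha _
          rw [Finset.mem_singleton] at ha
          subst ha; exact hw)) (by simp)
        have : w ∈ ({v} : Finset (Fin n)) := by rw [this]; simp
        exact hwv (Finset.mem_singleton.1 this)
  refine ⟨⟨fun a ha => (h a a ha).2 (h a a ha).1, fun a b c h1 h2 => absurd (h b c h2).1 (h a b h1).2⟩,
    fun s t hs ht => by rw [hmax s hs, hmax t ht], ?_⟩
  rintro ⟨w, x, y, z, h1, h2, -⟩
  exact (h x y h1).2 (h y z h2).1

lemma le_gCount (n : ℕ) : PhiN n ≤ gCount n + YN n := by
  classical
  let C1 : Finset (Σ _ : Finset (Fin n), Finset (Fin n × Fin n)) :=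
    Finset.univ.sigma fun S => (S ×ˢ Sᶜ).powerset
  have c1 : C1.card = PhiN n := by
    simp only [C1, Finset.card_sigma, Finset.card_powerset, Finset.card_product, PhiN]
  let bad : (Σ _ : Finset (Fin n), Finset (Fin n × Fin n)) → Prop :=
    fun c => ∃ v, ∀ w, (v, w) ∉ c.2 ∧ (w, v) ∉ c.2
  let C3 : Finset (Σ _ : Fin n, Σ _ : Finset (Fin n), Finset (Fin n × Fin n)) :=
    Finset.univ.sigma fun v => Finset.univ.sigma fun S => (BB S (fun x => decide (x = v))).powerset
  have c3 : C3.card = YN n := by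
    simp only [C3, Finset.card_sigma, Finset.card_powerset, YN]
  have hbad : (C1.filter bad).card ≤ YN n := by
    rw [← c3]
    refine le_trans (Finset.card_le_card (t := C3.image (fun c => c.2)) ?_) Finset.card_image_le
    rintro ⟨S, E⟩ hc
    obtain ⟨hc, v, hv⟩ := Finset.mem_filter.1 hc
    simp only [C1, Finset.mem_sigma, Finset.mem_univ, true_and, Finset.mem_powerset] at hc
    refine Finset.mem_image.2 ⟨⟨v, S, E⟩, ?_, rfl⟩
    simp only [C3, Finset.mem_sigma, Finset.mem_univ, true_and, Finset.mem_powerset]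
    rintro ⟨x, y⟩ hxy
    refine Finset.mem_filter.2 ⟨hc hxy, ?_⟩
    have n1 : x ≠ v := by rintro rfl; exact (hv y).1 hxy
    have n2 : y ≠ v := by rintro rfl; exact (hv x).2 hxy
    simp [n1, n2]
  have hgood : (C1.filter (fun c => ¬ bad c)).card ≤ gCount n := by
    have : gCount n = {r : Fin n → Fin n → Prop | IsStrictOrderRel r ∧ RelStronglyGraded r ∧ RelAvoids31 r}.ncard := rfl
    rw [this, ← Set.ncard_coe_finset]
    refine Set.ncard_le_ncard_of_injOn (fun c x y => (x, y) ∈ c.2) ?_ ?_ (Set.toFinite _)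
    · rintro ⟨S, E⟩ hc
      obtain ⟨hc, hb⟩ := Finset.mem_filter.1 (Finset.mem_coe.1 hc)
      simp only [C1, Finset.mem_sigma, Finset.mem_univ, true_and, Finset.mem_powerset] at hc
      refine two_level S _ ?_ ?_
      · intro x y hxy
        have := hc hxy
        simpa using this
      · intro v
        by_contra hn
        push Not at hn
        exact hb ⟨v, hn⟩
    · rintro ⟨S, E⟩ hc ⟨S', E'⟩ hc' heq
      obtain ⟨hc, hb⟩ := Finset.mem_filter.1 (Finset.mem_coe.1 hc)
      obtain ⟨hc', hb'⟩ := Finset.mem_filter.1 (Finset.mem_coe.1 hc')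
      simp only [C1, Finset.mem_sigma, Finset.mem_univ, true_and, Finset.mem_powerset] at hc hc'
      have hE : E = E' := by
        ext ⟨x, y⟩
        exact iff_of_eq (congrFun (congrFun heq x) y)
      subst hE
      have hSS : S = S' := by
        ext v
        have : ∃ w, (v, w) ∈ E ∨ (w, v) ∈ E := by
          by_contra hn
          push Not at hn
          exact hb ⟨v, hn⟩
        obtain ⟨w, hw | hw⟩ := this
        · have a := hc hw; have b := hc' hw
          simp at a b; tauto
        · have a := hc hw; have b := hc' hw
          simp at a b; tauto
      rw [hSS]
  rw [← c1, ← Finset.card_filter_add_card_filter_not (p := bad)]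
  omega

theorem graded_posets_asymptotics :
    Filter.Tendsto (fun n : ℕ => (gCount n : ℝ) / ((n.factorial : ℝ) * psi n))
      Filter.atTop (nhds 1) ∧
    Filter.Tendsto (fun n : ℕ => (wCount n : ℝ) / ((n.factorial : ℝ) * psi n))
      Filter.atTop (nhds 1) := by
  simp only [phi_eq]
  have hL : Filter.Tendsto (fun n : ℕ => 1 - (YN n : ℝ) / PhiN n) Filter.atTop (nhds 1) := by
    simpa using YN_tendsto.const_sub 1
  have hU : Filter.Tendsto (fun n : ℕ => 1 + (XN n : ℝ) / PhiN n) Filter.atTop (nhds 1) := by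
    simpa using XN_tendsto.const_add 1
  have hl : ∀ n, 1 - (YN n : ℝ) / PhiN n ≤ (gCount n : ℝ) / PhiN n := by
    intro n
    have hp := phi_pos n
    have h : (PhiN n : ℝ) ≤ gCount n + YN n := by exact_mod_cast le_gCount n
    rw [sub_le_iff_le_add, ← add_div, le_div_iff₀ hp]
    linarith
  have hm : ∀ n, (gCount n : ℝ) / PhiN n ≤ (wCount n : ℝ) / PhiN n := by
    intro n
    have hp := phi_pos n
    have h : (gCount n : ℝ) ≤ wCount n := by exact_mod_cast gCount_le n
    gcongr
  have hu : ∀ n, (wCount n : ℝ) / PhiN n ≤ 1 + (XN n : ℝ) / PhiN n := by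
    intro n
    have hp := phi_pos n
    have h : (wCount n : ℝ) ≤ PhiN n + XN n := by exact_mod_cast wCount_le n
    rw [div_le_iff₀ hp, add_mul, div_mul_cancel₀ _ hp.ne']
    linarith
  exact ⟨tendsto_of_tendsto_of_tendsto_of_le_of_le hL hU hl (fun n => (hm n).trans (hu n)),
    tendsto_of_tendsto_of_tendsto_of_le_of_le hL hU (fun n => (hl n).trans (hm n)) hu⟩
end

section
/- For every n ∈ ℕ, the number of strict partial order relations on {1, …, n} whose longest chain has exactly 2 elements (i.e., posets of height exactly 2) equals Σ_{m=1}^{n−1} C(n,m)·(2^{n−m} − 1)^m. -/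
/-- the poset `(Fin n, r)` has height exactly `2`: its longest chain has two elements. -/
def RelHeightTwo {n : ℕ} (r : Fin n → Fin n → Prop) : Prop :=
  (∃ s : Finset (Fin n), RelChain r s ∧ s.card = 2) ∧
  ∀ s : Finset (Fin n), RelChain r s → s.card ≤ 2

theorem heightTwo_key {n : ℕ} (r : Fin n → Fin n → Prop) :
    (IsStrictOrderRel r ∧ RelHeightTwo r) ↔
      ∃ T : Finset (Fin n), T.Nonempty ∧ (∀ b ∈ T, ∃ a, r a b) ∧
        ∀ a b, r a b → a ∉ T ∧ b ∈ T := by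
  classical
  constructor
  · rintro ⟨⟨hi, ht⟩, ⟨s, hs, hc⟩, hm⟩
    refine ⟨Finset.univ.filter (fun b => ∃ a, r a b), ?_, ?_, ?_⟩
    · obtain ⟨x, y, hxy, rfl⟩ := Finset.card_eq_two.1 hc
      rcases hs x (by simp) y (by simp) hxy with h | h
      · exact ⟨y, by simpa using ⟨x, h⟩⟩
      · exact ⟨x, by simpa using ⟨y, h⟩⟩
    · intro b hb
      simpa using hb
    · intro a b hab
      refine ⟨?_, by simpa using ⟨a, hab⟩⟩
      intro ha
      obtain ⟨c, hca⟩ : ∃ c, r c a := by simpa using ha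
      have hcb := ht _ _ _ hca hab
      have h1 : c ≠ a := by rintro rfl; exact hi _ hca
      have h2 : c ≠ b := by rintro rfl; exact hi _ hcb
      have h3 : a ≠ b := by rintro rfl; exact hi _ hab
      have := hm {c, a, b} (by
        intro x hx y hy hxy
        simp only [Finset.mem_insert, Finset.mem_singleton] at hx hy
        rcases hx with rfl | rfl | rfl <;> rcases hy with rfl | rfl | rfl <;> tauto)
      rw [Finset.card_eq_three.2 ⟨c, a, b, h1, h2, h3, rfl⟩] at this
      omega
  · rintro ⟨T, ⟨t, htT⟩, hex, hr⟩
    have hirr : ∀ a, ¬ r a a := fun a h => (hr a a h).1 (hr a a h).2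
    refine ⟨⟨hirr, ?_⟩, ?_, ?_⟩
    · intro a b c hab hbc
      exact absurd (hr a b hab).2 (hr b c hbc).1
    · obtain ⟨a, ha⟩ := hex t htT
      have hne : a ≠ t := by rintro rfl; exact hirr _ ha
      refine ⟨{a, t}, ?_, Finset.card_pair hne⟩
      intro x hx y hy hxy
      simp only [Finset.mem_insert, Finset.mem_singleton] at hx hy
      rcases hx with rfl | rfl <;> rcases hy with rfl | rfl <;> tauto
    · intro s hs
      by_contra hcon
      obtain ⟨a, ha, b, hb, c, hc, hab, hac, hbc⟩ := Finset.two_lt_card.1 (not_le.1 hcon)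
      have h1 := hs a ha b hb hab
      have h2 := hs a ha c hc hac
      have h3 := hs b hb c hc hbc
      rcases h1 with h1 | h1 <;> rcases h2 with h2 | h2 <;> rcases h3 with h3 | h3 <;>
        · have := hr _ _ h1
          have := hr _ _ h2
          have := hr _ _ h3
          tauto

open Classical in
noncomputable def relFinsetEquiv (n : ℕ) : (Fin n → Fin n → Prop) ≃ (Fin n → Finset (Fin n)) where
  toFun r := fun b => Finset.univ.filter (fun a => r a b)
  invFun f := fun a b => a ∈ f b
  left_inv r := by funext a b; simp
  right_inv f := by funext b; ext a; simp

open Classical in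
noncomputable def downFam {n : ℕ} (T : Finset (Fin n)) : Finset (Fin n → Finset (Fin n)) :=
  Fintype.piFinset (fun b => if b ∈ T then (Tᶜ).powerset.erase ∅ else {∅})

theorem mem_downFam {n : ℕ} (T : Finset (Fin n)) (f : Fin n → Finset (Fin n)) :
    f ∈ downFam T ↔ (∀ b ∈ T, ∃ a, a ∈ f b) ∧ ∀ a b, a ∈ f b → a ∉ T ∧ b ∈ T := by
  classical
  unfold downFam
  rw [Fintype.mem_piFinset]
  constructor
  · intro h
    refine ⟨fun b hb => ?_, fun a b hab => ?_⟩
    · have := h b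
      simp only [hb, if_true, Finset.mem_erase] at this
      exact Finset.nonempty_iff_ne_empty.2 this.1
    · have := h b
      by_cases hb : b ∈ T
      · simp only [hb, if_true, Finset.mem_erase, Finset.mem_powerset] at this
        exact ⟨by simpa using this.2 hab, hb⟩
      · simp only [hb, if_false, Finset.mem_singleton] at this
        simp [this] at hab
  · rintro ⟨h1, h2⟩ b
    by_cases hb : b ∈ T
    · simp only [hb, if_true, Finset.mem_erase, Finset.mem_powerset]
      exact ⟨Finset.nonempty_iff_ne_empty.1 (h1 b hb), fun a ha => by simpa using (h2 a b ha).1⟩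
    · simp only [hb, if_false, Finset.mem_singleton]
      exact Finset.eq_empty_of_forall_notMem fun a ha => hb (h2 a b ha).2

theorem card_downFam {n : ℕ} (T : Finset (Fin n)) :
    (downFam T).card = (2 ^ (n - T.card) - 1) ^ T.card := by
  classical
  unfold downFam
  rw [Fintype.card_piFinset]
  have : ∀ b, (if b ∈ T then (Tᶜ).powerset.erase ∅ else {∅}).card
      = if b ∈ T then 2 ^ (n - T.card) - 1 else 1 := by
    intro b
    split_ifs
    · rw [Finset.card_erase_of_mem (by simp), Finset.card_powerset, Finset.card_compl,
        Fintype.card_fin]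
    · simp
  simp_rw [this]
  simp

theorem count_height_two_posets (n : ℕ) :
    Nat.card {r : Fin n → Fin n → Prop // IsStrictOrderRel r ∧ RelHeightTwo r} =
      ∑ m ∈ Finset.Ico 1 n, n.choose m * (2 ^ (n - m) - 1) ^ m := by
  classical
  let S : Finset (Fin n → Finset (Fin n)) :=
    (Finset.univ.filter (fun T : Finset (Fin n) => T.Nonempty)).biUnion downFam
  have h1 : Nat.card {r : Fin n → Fin n → Prop // IsStrictOrderRel r ∧ RelHeightTwo r} =
      S.card := by
    rw [← Fintype.card_coe S, ← Nat.card_eq_fintype_card]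
    refine Nat.card_congr ((relFinsetEquiv n).subtypeEquiv fun r => ?_)
    rw [heightTwo_key]
    simp [S, mem_downFam, relFinsetEquiv]
  have h2 : S.card = ∑ T ∈ Finset.univ.filter (fun T : Finset (Fin n) => T.Nonempty),
      (2 ^ (n - T.card) - 1) ^ T.card := by
    rw [Finset.card_biUnion]
    · exact Finset.sum_congr rfl fun T _ => card_downFam T
    · intro T _ U _ hTU
      change Disjoint (downFam T) (downFam U)
      rw [Finset.disjoint_left]
      intro f hf hg
      rw [mem_downFam] at hf hg
      apply hTU
      ext b
      constructor
      · intro hb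
        obtain ⟨a, ha⟩ := hf.1 b hb
        exact (hg.2 a b ha).2
      · intro hb
        obtain ⟨a, ha⟩ := hg.1 b hb
        exact (hf.2 a b ha).2
  have h3 : ∑ T ∈ Finset.univ.filter (fun T : Finset (Fin n) => T.Nonempty),
      (2 ^ (n - T.card) - 1) ^ T.card =
      ∑ T ∈ (Finset.univ : Finset (Fin n)).powerset,
        (fun m => if m = 0 then 0 else (2 ^ (n - m) - 1) ^ m) T.card := by
    rw [Finset.sum_filter, Finset.powerset_univ]
    refine Finset.sum_congr rfl fun T _ => ?_
    by_cases hT : T = ∅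
    · simp [hT]
    · simp [hT, Finset.nonempty_iff_ne_empty]
  rw [h1, h2, h3, Finset.sum_powerset_apply_card
    (fun m => if m = 0 then 0 else (2 ^ (n - m) - 1) ^ m), Finset.card_univ, Fintype.card_fin]
  symm
  apply Finset.sum_subset_zero_on_sdiff
  · intro m hm
    simp only [Finset.mem_Ico, Finset.mem_range] at *
    omega
  · intro m hm
    simp only [Finset.mem_sdiff, Finset.mem_Ico, Finset.mem_range] at hm
    by_cases h0 : m = 0
    · simp [h0]
    · have : m = n := by omega
      subst this
      simp [h0]
  · intro m hm
    have : m ≠ 0 := by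
      simp only [Finset.mem_Ico] at hm
      omega
    simp [this]
end
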